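/- arXiv:1910.04834 — 7 statements merged into one kernel-verified Lean document; each statement's English description precedes it below -/
import Mathlib

section
/- For every q ∈ [1,∞) there exists a smooth increasing bijection φ of [0,1] (φ(0)=0, φ(1)=1, φ' > 0) such that for every smooth map Φ : [0,1] × [0,1] → [0,1] with Φ(0,x) = x, Φ(1,x) = φ(x), and x ↦ Φ(t,x) a smooth increasing bijection of [0,1] for each t, one has ∫₀¹ (∫₀¹ (∂_x Φ(t,x))^{1−q} |∂_t ∂_x Φ(t,x)|^q dx)^{1/q} dt > q. -/
open MeasureTheory Set
open scoped ContDiff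

/-!
For a path `Φ` of increasing diffeomorphisms put `f t x = ∂ₓΦ(t,x)` and `p = f ^ (1/q)`. Then
`f ^ (1-q) * |∂ₜf| ^ q = (q * |∂ₜp|) ^ q`, so that the `Ẇ^{1,q}`-length of `Φ` is `q` times the
length of the curve `t ↦ p t` in `L^q(0,1)`. This curve runs from the constant `1` to
`φ' ^ (1/q)`, hence the length of `Φ` is at least `q * ‖φ' ^ (1/q) - 1‖_q`
(`path_length_lower_bound`, which rests on the Minkowski-type inequality
`Lq_norm_le_integral_Lq_norm`).

It remains to find `φ` with `‖φ' ^ (1/q) - 1‖_q > 1` (`exists_concentrated_diffeo`). If the mass of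
`φ'` concentrates near a point, the part of the interval where `φ'` is small already contributes
about `1`, and the part where `φ'` is large contributes a further definite amount. The pointwise
inequality `abs_rpow_sub_one_lower_bound` makes this quantitative: it reduces the claim to the
smallness of the fractional moment `∫ φ' ^ (1/(2q))`, which is computed for
`φ' = 1/(N+1) + N x^N` with `N` large.
-/

/-- Hölder's inequality for the exponents `q/(q-1)` and `q`, in a form that includes `q = 1`. -/
lemma integral_rpow_mul_le {q : ℝ} (hq : 1 ≤ q) {e v : ℝ → ℝ} (he : Continuous e) (hv : Continuous v)
    (he0 : ∀ x, 0 ≤ e x) (hv0 : ∀ x, 0 ≤ v x) :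
    ∫ x in (0:ℝ)..1, e x ^ (q - 1) * v x ≤
      (∫ x in (0:ℝ)..1, e x ^ q) ^ (1 - 1 / q) * (∫ x in (0:ℝ)..1, v x ^ q) ^ (1 / q) := by
  rcases hq.eq_or_lt with rfl | hq1
  · simp
  have hc : (q.conjExponent).HolderConjugate q := (Real.HolderConjugate.conjExponent hq1).symm
  have hmem : ∀ {f : ℝ → ℝ} (p : ENNReal), Continuous f →
      MemLp f p (volume.restrict (Ioc (0:ℝ) 1)) := by
    intro f p hf
    obtain ⟨C, hC⟩ := isCompact_Icc.exists_bound_of_continuousOn (s := Icc (0:ℝ) 1) hf.continuousOn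
    refine MemLp.of_bound hf.aestronglyMeasurable C ?_
    filter_upwards [ae_restrict_mem measurableSet_Ioc] with x hx
    exact hC x (Ioc_subset_Icc_self hx)
  have hf : Continuous fun x => e x ^ (q - 1) := he.rpow_const fun x => Or.inr (by linarith)
  have h := integral_mul_le_Lp_mul_Lq_of_nonneg hc (μ := volume.restrict (Ioc (0:ℝ) 1))
    (f := fun x => e x ^ (q - 1)) (g := v)
    (Filter.Eventually.of_forall fun x => Real.rpow_nonneg (he0 x) _)
    (Filter.Eventually.of_forall hv0) (hmem _ hf) (hmem _ hv)
  simp only [intervalIntegral.integral_of_le (zero_le_one' ℝ)]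
  convert h using 2
  have h1 : (q - 1) * q.conjExponent = q := by
    rw [Real.conjExponent]; field_simp [show q - 1 ≠ 0 by linarith]
  congr 1
  · refine integral_congr_ae (Filter.Eventually.of_forall fun x => ?_)
    simp only
    rw [← Real.rpow_mul (he0 x), h1]
  · have := hc.inv_add_inv_eq_one
    simp only [one_div]; linarith

/-- A form of Minkowski's integral inequality `‖∫ u(t,·) dt‖_q ≤ ∫ ‖u(t,·)‖_q dt`, for a function `e`
dominated by `∫ u(t,·) dt`. The proof is by duality: test against `e ^ (q-1)`, exchange the
integrals and apply Hölder for each `t`. -/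
lemma Lq_norm_le_integral_Lq_norm {q : ℝ} (hq : 1 ≤ q) {e : ℝ → ℝ} {u : ℝ → ℝ → ℝ} (he : Continuous e)
    (hu : Continuous (Function.uncurry u)) (he0 : ∀ x, 0 ≤ e x) (hu0 : ∀ t x, 0 ≤ u t x)
    (heu : ∀ x ∈ Ioo (0:ℝ) 1, e x ≤ ∫ t in (0:ℝ)..1, u t x) :
    (∫ x in (0:ℝ)..1, e x ^ q) ^ (1 / q) ≤
      ∫ t in (0:ℝ)..1, (∫ x in (0:ℝ)..1, u t x ^ q) ^ (1 / q) := by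
  have hq0 : 0 < q := by linarith
  have hI0 : 0 ≤ ∫ x in (0:ℝ)..1, e x ^ q :=
    intervalIntegral.integral_nonneg zero_le_one fun x _ => Real.rpow_nonneg (he0 x) _
  have hN0 : ∀ t, 0 ≤ ∫ x in (0:ℝ)..1, u t x ^ q := fun t =>
    intervalIntegral.integral_nonneg zero_le_one fun x _ => Real.rpow_nonneg (hu0 t x) _
  rcases hI0.eq_or_lt with hI | hI
  · rw [← hI, Real.zero_rpow (by positivity)]
    exact intervalIntegral.integral_nonneg zero_le_one fun t _ => Real.rpow_nonneg (hN0 t) _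
  have hg : Continuous fun x => e x ^ (q - 1) := he.rpow_const fun x => Or.inr (by linarith)
  have hgu : Continuous (Function.uncurry fun t x => e x ^ (q - 1) * u t x) :=
    (hg.comp continuous_snd).mul hu
  have hgu' : Continuous (Function.uncurry fun x t => e x ^ (q - 1) * u t x) :=
    hgu.comp continuous_swap
  have hut : Continuous (Function.uncurry fun t x => u t x ^ q) :=
    hu.rpow_const fun x => Or.inr hq0.le
  have hN : Continuous fun t => (∫ x in (0:ℝ)..1, u t x ^ q) ^ (1 / q) :=
    (intervalIntegral.continuous_parametric_intervalIntegral_of_continuous' hut 0 1).rpow_const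
      fun x => Or.inr (by positivity)
  have key : ∫ x in (0:ℝ)..1, e x ^ q ≤ (∫ x in (0:ℝ)..1, e x ^ q) ^ (1 - 1 / q) *
      ∫ t in (0:ℝ)..1, (∫ x in (0:ℝ)..1, u t x ^ q) ^ (1 / q) := calc
    _ ≤ ∫ x in (0:ℝ)..1, ∫ t in (0:ℝ)..1, e x ^ (q - 1) * u t x := by
      refine intervalIntegral.integral_mono_on_of_le_Ioo zero_le_one
        (he.rpow_const fun x => Or.inr hq0.le).continuousOn.intervalIntegrable
        (intervalIntegral.continuous_parametric_intervalIntegral_of_continuous'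
          hgu' 0 1).continuousOn.intervalIntegrable fun x hx => ?_
      rw [intervalIntegral.integral_const_mul]
      calc e x ^ q = e x ^ (q - 1) * e x := by
            rw [← Real.rpow_add_one' (he0 x) (by linarith), sub_add_cancel]
        _ ≤ _ := mul_le_mul_of_nonneg_left (heu x hx) (Real.rpow_nonneg (he0 x) _)
    _ = ∫ t in (0:ℝ)..1, ∫ x in (0:ℝ)..1, e x ^ (q - 1) * u t x := by
      refine intervalIntegral_intervalIntegral_swap ?_
      rw [uIoc_of_le zero_le_one]
      exact (hgu'.continuousOn.integrableOn_compact (isCompact_Icc.prod isCompact_Icc)).mono_set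
        (prod_mono Ioc_subset_Icc_self Ioc_subset_Icc_self)
    _ ≤ ∫ t in (0:ℝ)..1, (∫ x in (0:ℝ)..1, e x ^ q) ^ (1 - 1 / q) *
          (∫ x in (0:ℝ)..1, u t x ^ q) ^ (1 / q) := by
      refine intervalIntegral.integral_mono_on zero_le_one
        (intervalIntegral.continuous_parametric_intervalIntegral_of_continuous'
          hgu 0 1).continuousOn.intervalIntegrable
        (hN.const_mul _).continuousOn.intervalIntegrable fun t _ => ?_
      exact integral_rpow_mul_le hq he (hu.comp (Continuous.prodMk_right t)) he0 (hu0 t)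
    _ = _ := intervalIntegral.integral_const_mul _ _
  have hpos := Real.rpow_pos_of_pos hI (1 - 1 / q)
  refine le_of_mul_le_mul_left ?_ hpos
  rwa [← Real.rpow_add hI, sub_add_cancel, Real.rpow_one]

/-- With `p = y ^ (1/q)` the bound reads `1 + 2^(-q) p^q - (q+2) p^(1/2) ≤ |p - 1|^q`. For `p ≤ 1` it is
Bernoulli's inequality, for `1 ≤ p ≤ 2` the left side is nonpositive, and for `2 ≤ p` one has
`p - 1 ≥ p / 2`. Since `∫ y = 1` for a density `y`, integrating gives more than `1` as soon as the
last term on the left has small integral. -/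
lemma abs_rpow_sub_one_lower_bound {q : ℝ} (hq : 1 ≤ q) {y : ℝ} (hy : 0 ≤ y) :
    1 + 2 ^ (-q) * y - (q + 2) * y ^ (1 / (2 * q)) ≤ |y ^ (1 / q) - 1| ^ q := by
  have hq0 : 0 < q := by linarith
  obtain ⟨p, hp, rfl⟩ : ∃ p : ℝ, 0 ≤ p ∧ p ^ q = y :=
    ⟨y ^ (1 / q), by positivity, by rw [← Real.rpow_mul hy]; simp [hq0.ne']⟩
  rw [← Real.rpow_mul hp, ← Real.rpow_mul hp, show q * (1 / q) = 1 by field_simp, Real.rpow_one,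
    show q * (1 / (2 * q)) = 1 / 2 by field_simp]
  have hc : (2:ℝ) ^ (-q) ≤ 1 := Real.rpow_le_one_of_one_le_of_nonpos (by norm_num) (by linarith)
  have hc0 : (0:ℝ) < 2 ^ (-q) := by positivity
  have hpq : 0 ≤ p ^ q := by positivity
  rcases le_total p 1 with h1 | h1
  · have hb := one_add_mul_self_le_rpow_one_add (s := -p) (by linarith) hq
    have ha : |p - 1| = 1 + -p := by rw [abs_sub_comm, abs_of_nonneg (by linarith)]; ring
    have h2 : p ≤ p ^ (1 / 2 : ℝ) := by
      simpa using Real.rpow_le_rpow_of_exponent_ge' hp h1 (z := 1/2) (y := 1) (by norm_num) (by norm_num)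
    have h3 : p ^ q ≤ p := by
      simpa using Real.rpow_le_rpow_of_exponent_ge' hp h1 (z := 1) (y := q) (by norm_num) hq
    rw [ha]
    nlinarith [mul_le_mul_of_nonneg_right hc hpq, mul_le_mul_of_nonneg_left h2 hq0.le]
  · have h2 : 1 ≤ p ^ (1 / 2 : ℝ) := Real.one_le_rpow h1 (by norm_num)
    have h3 : 2 ^ (-q) * p ^ q = (p / 2) ^ q := by
      rw [Real.div_rpow hp (by norm_num), Real.rpow_neg (by norm_num)]; ring
    rw [h3]
    rcases le_total p 2 with h4 | h4
    · have : (p / 2) ^ q ≤ 1 := Real.rpow_le_one (by positivity) (by linarith) hq0.le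
      have : 0 ≤ |p - 1| ^ q := by positivity
      nlinarith
    · have : (p / 2) ^ q ≤ |p - 1| ^ q :=
        Real.rpow_le_rpow (by positivity) (by rw [abs_of_nonneg (by linarith)]; linarith) hq0.le
      nlinarith

/-- The diffeomorphism is `φ x = (x + N x^(N+1)) / (N+1)` with `N` large: its derivative
`1/(N+1) + N x^N` concentrates near `1`. -/
lemma exists_concentrated_diffeo {q : ℝ} (hq : 1 ≤ q) : ∃ φ : ℝ → ℝ, ContDiff ℝ ∞ φ ∧ φ 0 = 0 ∧ φ 1 = 1 ∧
      (∀ x ∈ Icc (0:ℝ) 1, 0 < deriv φ x) ∧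
      1 < ∫ x in (0:ℝ)..1, |(deriv φ x) ^ (1 / q) - 1| ^ q := by
  have hq0 : 0 < q := by linarith
  set r : ℝ := 1 / (2 * q) with hr
  have hr0 : 0 < r := by positivity
  have hr1 : r < 1 := by rw [hr, div_lt_one (by positivity)]; linarith
  have hc0 : (0:ℝ) < 2 ^ (-q) := by positivity
  -- The bracket bounds `∫ φ' ^ r`, by subadditivity of `y ↦ y ^ r`; both terms tend to `0`
  -- because `0 < r < 1`.
  obtain ⟨N, hN⟩ : ∃ N : ℕ, (q + 2) * (((N:ℝ) + 1) ^ (-r) + ((N:ℝ) + 1) ^ (-(1 - r)) * r⁻¹)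
      < 2 ^ (-q) := by
    have hT : Filter.Tendsto (fun N : ℕ => (N:ℝ) + 1) Filter.atTop Filter.atTop :=
      Filter.tendsto_atTop_add_const_right _ _ tendsto_natCast_atTop_atTop
    have h1 := (((tendsto_rpow_neg_atTop hr0).comp hT).add
      (((tendsto_rpow_neg_atTop (y := 1 - r) (by linarith)).comp hT).mul_const r⁻¹)).const_mul (q + 2)
    simp only [zero_mul, add_zero, mul_zero] at h1
    exact (h1.eventually_lt_const hc0).exists
  have hN1 : (0:ℝ) < (N:ℝ) + 1 := by positivity
  have hd : ∀ x : ℝ, HasDerivAt (fun x : ℝ => (x + N * x ^ (N + 1)) / (N + 1))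
      (1 / ((N:ℝ) + 1) + N * x ^ N) x := by
    intro x
    have := ((hasDerivAt_id x).add ((hasDerivAt_pow (N + 1) x).const_mul (N:ℝ))).div_const ((N:ℝ) + 1)
    refine HasDerivAt.congr_deriv (f := fun x : ℝ => (x + N * x ^ (N + 1)) / (N + 1)) this ?_
    rw [Nat.add_sub_cancel]
    push_cast
    field_simp
  have hd' : deriv (fun x : ℝ => (x + N * x ^ (N + 1)) / (N + 1)) =
      fun x : ℝ => 1 / ((N:ℝ) + 1) + N * x ^ N := funext fun x => (hd x).deriv
  refine ⟨fun x => (x + N * x ^ (N + 1)) / (N + 1), by fun_prop, by simp, ?_, ?_, ?_⟩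
  · simp only [one_pow]; field_simp; ring
  · intro x hx
    rw [hd']
    have := pow_nonneg hx.1 N
    positivity
  rw [hd']
  have hint : ∫ x in (0:ℝ)..1, (1 + 2 ^ (-q) * (1 / ((N:ℝ) + 1) + N * x ^ N)
      - (q + 2) * (((N:ℝ) + 1) ^ (-r) + ((N:ℝ) + 1) ^ r * x ^ (N * r))) =
      1 + 2 ^ (-q) - (q + 2) * (((N:ℝ) + 1) ^ (-r) + ((N:ℝ) + 1) ^ r * (1 / (N * r + 1))) := by
    have hNr : (0:ℝ) ≤ N * r := by positivity
    have c1 : Continuous fun x : ℝ => x ^ (N * r) := Real.continuous_rpow_const hNr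
    rw [intervalIntegral.integral_sub (by apply Continuous.intervalIntegrable; fun_prop)
        (by apply Continuous.intervalIntegrable; fun_prop),
      intervalIntegral.integral_add (by simp) (by apply Continuous.intervalIntegrable; fun_prop),
      intervalIntegral.integral_const_mul, intervalIntegral.integral_const_mul,
      intervalIntegral.integral_add (by simp) (by apply Continuous.intervalIntegrable; fun_prop),
      intervalIntegral.integral_add (by simp) (by apply Continuous.intervalIntegrable; fun_prop),
      intervalIntegral.integral_const_mul, intervalIntegral.integral_const_mul,
      integral_rpow (Or.inl (by linarith)), integral_pow]
    simp [Real.zero_rpow (show (N:ℝ) * r + 1 ≠ 0 by positivity)]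
    field_simp
    ring
  have hlow : 1 < 1 + 2 ^ (-q) -
      (q + 2) * (((N:ℝ) + 1) ^ (-r) + ((N:ℝ) + 1) ^ r * (1 / (N * r + 1))) := by
    have h1 : ((N:ℝ) + 1) ^ r * (1 / (N * r + 1)) ≤ ((N:ℝ) + 1) ^ (-(1 - r)) * r⁻¹ := by
      rw [show -(1 - r) = r - 1 by ring, Real.rpow_sub_one hN1.ne', div_mul_eq_mul_div, mul_div_assoc]
      refine mul_le_mul_of_nonneg_left ?_ (by positivity)
      rw [← one_div, div_div]
      exact one_div_le_one_div_of_le (by positivity) (by nlinarith)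
    nlinarith [mul_le_mul_of_nonneg_left h1 (show 0 ≤ q + 2 by linarith)]
  refine hlow.trans_le (hint ▸ ?_)
  refine intervalIntegral.integral_mono_on zero_le_one ?_ ?_ fun x hx => ?_
  · have c1 : Continuous fun x : ℝ => x ^ (N * r) := Real.continuous_rpow_const (by positivity)
    apply Continuous.intervalIntegrable; fun_prop
  · refine Continuous.intervalIntegrable ?_ _ _
    refine Continuous.rpow_const (continuous_abs.comp (Continuous.sub (Continuous.rpow_const (by fun_prop)
      fun x => Or.inr (by positivity)) continuous_const)) fun x => Or.inr hq0.le
  · have hxN := pow_nonneg hx.1 N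
    refine le_trans ?_ (abs_rpow_sub_one_lower_bound hq (show 0 ≤ 1 / ((N:ℝ) + 1) + N * x ^ N by positivity))
    have h1 : (1 / ((N:ℝ) + 1) + N * x ^ N) ^ r ≤
        ((N:ℝ) + 1) ^ (-r) + ((N:ℝ) + 1) ^ r * x ^ (N * r) := calc
      _ ≤ (1 / ((N:ℝ) + 1)) ^ r + (N * x ^ N) ^ r :=
        Real.rpow_add_le_add_rpow (by positivity) (by positivity) hr0.le hr1.le
      _ ≤ _ := by
        gcongr
        · rw [one_div, Real.inv_rpow hN1.le, Real.rpow_neg hN1.le]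
        · rw [Real.mul_rpow (by positivity) hxN, ← Real.rpow_natCast, ← Real.rpow_mul hx.1]
          have := Real.rpow_nonneg hx.1 (N * r)
          gcongr
          linarith
    have := mul_le_mul_of_nonneg_left h1 (show 0 ≤ q + 2 by linarith)
    linarith

/-- The length of a path is at least `q` times the `L^q`-distance between the `q`-th roots of the
derivatives of its endpoints. -/
lemma path_length_lower_bound {q : ℝ} (hq : 1 ≤ q) {Φ : ℝ → ℝ → ℝ} (hΦ : ContDiff ℝ ∞ (fun p : ℝ × ℝ => Φ p.1 p.2))
    (hpos : ∀ t ∈ Icc (0:ℝ) 1, ∀ x ∈ Icc (0:ℝ) 1, 0 < deriv (Φ t) x) :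
    q * (∫ x in (0:ℝ)..1, |(deriv (Φ 1) x) ^ (1 / q) - (deriv (Φ 0) x) ^ (1 / q)| ^ q) ^ (1 / q) ≤
      ∫ t in (0:ℝ)..1, (∫ x in (0:ℝ)..1,
        (deriv (Φ t) x) ^ (1 - q) * |deriv (fun s => deriv (Φ s) x) t| ^ q) ^ (1 / q) := by
  have hq0 : 0 < q := by linarith
  have hfd : ∀ t x, deriv (Φ t) x = fderiv ℝ (fun p : ℝ × ℝ => Φ p.1 p.2) (t, x) (0, 1) := by
    intro t x
    have h1 := ((hΦ.differentiable (by simp)) (t, x)).hasFDerivAt.comp_hasDerivAt x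
      ((hasDerivAt_const x t).prodMk (hasDerivAt_id x))
    exact h1.deriv
  have hf : ContDiff ℝ ∞ (fun p : ℝ × ℝ => deriv (Φ p.1) p.2) := by
    simp_rw [hfd]
    exact (hΦ.fderiv_right (m := ∞) (by simp)).clm_apply contDiff_const
  have hgd : ∀ t x, HasDerivAt (fun s => deriv (Φ s) x)
      (fderiv ℝ (fun p : ℝ × ℝ => deriv (Φ p.1) p.2) (t, x) (1, 0)) t := by
    intro t x
    exact ((hf.differentiable (by simp)) (t, x)).hasFDerivAt.comp_hasDerivAt t
      ((hasDerivAt_id t).prodMk (hasDerivAt_const t x))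
  have hg : Continuous (fun p : ℝ × ℝ => deriv (fun s => deriv (Φ s) p.2) p.1) := by
    simp_rw [fun t x => (hgd t x).deriv]
    exact (hf.continuous_fderiv (by simp)).clm_apply continuous_const
  set f : ℝ → ℝ → ℝ := fun t x => deriv (Φ t) x with hf_def
  set g : ℝ → ℝ → ℝ := fun t x => deriv (fun s => deriv (Φ s) x) t with hg_def
  have hfg : ∀ t x, HasDerivAt (fun s => f s x) (g t x) t := fun t x =>
    (hgd t x).differentiableAt.hasDerivAt
  -- `f` is positive only on the unit square, so negative powers of `f` need not be continuous
  -- outside it. Composing with the retraction `π` onto `[0,1]` gives globally continuous functions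
  -- with the same integrals.
  let π : ℝ → ℝ := fun t => projIcc (0:ℝ) 1 zero_le_one t
  have hπ : Continuous π := continuous_subtype_val.comp continuous_projIcc
  have hπm : ∀ t, π t ∈ Icc (0:ℝ) 1 := fun t => (projIcc (0:ℝ) 1 zero_le_one t).2
  have hπe : ∀ t ∈ Icc (0:ℝ) 1, π t = t := fun t ht => by simp [π, projIcc_of_mem _ ht]
  have hfc : ∀ {a b : ℝ × ℝ → ℝ}, Continuous a → Continuous b →
      Continuous fun p => f (a p) (b p) := fun ha hb => hf.continuous.comp (ha.prodMk hb)
  have hgc : ∀ {a b : ℝ × ℝ → ℝ}, Continuous a → Continuous b →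
      Continuous fun p => g (a p) (b p) := fun ha hb => hg.comp (ha.prodMk hb)
  have hfp : ∀ t x, 0 < f (π t) (π x) := fun t x => hpos _ (hπm t) _ (hπm x)
  let u : ℝ → ℝ → ℝ := fun t x => f (π t) (π x) ^ (1 / q - 1) * |g (π t) (π x)|
  let e : ℝ → ℝ := fun x => q * |f 1 (π x) ^ (1 / q) - f 0 (π x) ^ (1 / q)|
  have hu : Continuous (Function.uncurry u) := by
    refine Continuous.mul (Continuous.rpow_const (hfc (hπ.comp continuous_fst)
      (hπ.comp continuous_snd)) fun p => Or.inl (hfp p.1 p.2).ne') ?_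
    exact continuous_abs.comp (hgc (hπ.comp continuous_fst) (hπ.comp continuous_snd))
  have he : Continuous e := by
    have h (t : ℝ) : Continuous fun x => f t (π x) ^ (1 / q) :=
      (hf.continuous.comp (continuous_const.prodMk hπ)).rpow_const
        fun x => Or.inr (by positivity)
    exact continuous_const.mul (continuous_abs.comp ((h 1).sub (h 0)))
  have hm := Lq_norm_le_integral_Lq_norm hq he hu (fun x => by positivity)
    (fun t x => mul_nonneg (Real.rpow_nonneg (hfp t x).le _) (abs_nonneg _)) ?_
  · have h1 : (∫ x in (0:ℝ)..1, e x ^ q) ^ (1 / q) =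
        q * (∫ x in (0:ℝ)..1, |f 1 x ^ (1 / q) - f 0 x ^ (1 / q)| ^ q) ^ (1 / q) := by
      have : ∫ x in (0:ℝ)..1, e x ^ q =
          q ^ q * ∫ x in (0:ℝ)..1, |f 1 x ^ (1 / q) - f 0 x ^ (1 / q)| ^ q := by
        rw [← intervalIntegral.integral_const_mul]
        refine intervalIntegral.integral_congr fun x hx => ?_
        rw [uIcc_of_le zero_le_one] at hx
        simp only [e]
        rw [hπe x hx, Real.mul_rpow hq0.le (abs_nonneg _)]
      rw [this, Real.mul_rpow (by positivity) (intervalIntegral.integral_nonneg zero_le_one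
        fun x _ => by positivity), ← Real.rpow_mul hq0.le, mul_one_div_cancel hq0.ne', Real.rpow_one]
    rw [h1] at hm
    refine hm.trans_eq (intervalIntegral.integral_congr fun t ht => ?_)
    rw [uIcc_of_le zero_le_one] at ht
    congr 1
    refine intervalIntegral.integral_congr fun x hx => ?_
    rw [uIcc_of_le zero_le_one] at hx
    have hp := hpos t ht x hx
    simp only [u]
    rw [hπe x hx, hπe t ht, Real.mul_rpow (Real.rpow_nonneg hp.le _) (abs_nonneg _),
      ← Real.rpow_mul hp.le, show (1 / q - 1) * q = 1 - q by field_simp]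
  · intro x hx
    have hx' := Ioo_subset_Icc_self hx
    have hfi : ContinuousOn (fun t => f t x ^ (1 / q - 1) * g t x) (Icc 0 1) := by
      refine ContinuousOn.mul (ContinuousOn.rpow_const
        (hf.continuous.comp (Continuous.prodMk_left x)).continuousOn
        fun t ht => Or.inl (hpos t ht x hx').ne')
        (hg.comp (Continuous.prodMk_left x)).continuousOn
    have hii : IntervalIntegrable (fun t => f t x ^ (1 / q - 1) * g t x) volume 0 1 :=
      ContinuousOn.intervalIntegrable (by rwa [uIcc_of_le zero_le_one])
    have hftc : ∫ t in (0:ℝ)..1, f t x ^ (1 / q - 1) * g t x =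
        q * f 1 x ^ (1 / q) - q * f 0 x ^ (1 / q) := by
      refine intervalIntegral.integral_eq_sub_of_hasDerivAt
        (f := fun t => q * f t x ^ (1 / q)) (fun t ht => ?_) hii
      rw [uIcc_of_le zero_le_one] at ht
      refine (((hfg t x).rpow_const (p := 1 / q)
        (Or.inl (hpos t ht x hx').ne')).const_mul q).congr_deriv ?_
      field_simp
    have h2 : e x = |∫ t in (0:ℝ)..1, f t x ^ (1 / q - 1) * g t x| := by
      rw [hftc, ← mul_sub, abs_mul, abs_of_pos hq0]
      simp only [e, hπe x hx']
    rw [h2]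
    refine (intervalIntegral.abs_integral_le_integral_abs zero_le_one).trans_eq
      (intervalIntegral.integral_congr fun t ht => ?_)
    rw [uIcc_of_le zero_le_one] at ht
    simp only [u]
    rw [hπe x hx', hπe t ht, abs_mul, abs_of_nonneg (Real.rpow_nonneg (hpos t ht x hx').le _)]

/-- The diameter of the diffeomorphism group of the interval with respect to the right-invariant
homogeneous `Ẇ^{1,q}`-metric is greater than `q`: there is a smooth increasing bijection `φ` of
`[0,1]` such that every smooth path of smooth increasing bijections from the identity to `φ`
has `Ẇ^{1,q}`-length greater than `q`. -/
theorem stmt10 (q : ℝ) (hq : 1 ≤ q) :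
    ∃ φ : ℝ → ℝ, ContDiff ℝ ∞ φ ∧ φ 0 = 0 ∧ φ 1 = 1 ∧
      (∀ x ∈ Icc (0:ℝ) 1, 0 < deriv φ x) ∧
      ∀ Φ : ℝ → ℝ → ℝ, ContDiff ℝ ∞ (fun p : ℝ × ℝ => Φ p.1 p.2) →
        (∀ x ∈ Icc (0:ℝ) 1, Φ 0 x = x) → (∀ x ∈ Icc (0:ℝ) 1, Φ 1 x = φ x) →
        (∀ t ∈ Icc (0:ℝ) 1, Φ t 0 = 0 ∧ Φ t 1 = 1 ∧
          ∀ x ∈ Icc (0:ℝ) 1, 0 < deriv (Φ t) x) →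
        q < ∫ t in (0:ℝ)..1,
              (∫ x in (0:ℝ)..1,
                (deriv (Φ t) x) ^ (1 - q) * |deriv (fun s => deriv (Φ s) x) t| ^ q) ^ (1/q) := by
  have hq0 : 0 < q := by linarith
  obtain ⟨φ, h1, h2, h3, h4, h5⟩ := exists_concentrated_diffeo hq
  refine ⟨φ, h1, h2, h3, h4, fun Φ hΦ hΦ0 hΦ1 hΦt => ?_⟩
  refine lt_of_lt_of_le ?_ (path_length_lower_bound hq hΦ fun t ht => (hΦt t ht).2.2)
  have heq : ∫ x in (0:ℝ)..1, |(deriv (Φ 1) x) ^ (1 / q) - (deriv (Φ 0) x) ^ (1 / q)| ^ q =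
      ∫ x in (0:ℝ)..1, |(deriv φ x) ^ (1 / q) - 1| ^ q := by
    refine intervalIntegral.integral_congr_uIoo fun x hx => ?_
    rw [uIoo_of_le zero_le_one] at hx
    -- The endpoint conditions hold on `[0,1]` only, so they determine derivatives in the interior.
    have hn := Icc_mem_nhds hx.1 hx.2
    have e0 : deriv (Φ 0) x = 1 := by
      rw [Filter.EventuallyEq.deriv_eq (f := fun y => y) (Filter.mem_of_superset hn hΦ0)]
      simp
    have e1 : deriv (Φ 1) x = deriv φ x :=
      Filter.EventuallyEq.deriv_eq (Filter.mem_of_superset hn hΦ1)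
    simp only [e0, e1, Real.one_rpow]
  rw [heq]
  exact lt_mul_of_one_lt_right hq0 (Real.one_lt_rpow h5 (by positivity))
end

section
/- Let n ≥ 1 and let Sⁿ denote the unit sphere in ℝ^{n+1} with its standard smooth manifold structure. Let A, B ⊆ Sⁿ be open geodesic balls (open metric balls for the intrinsic round distance) with A ∪ B = Sⁿ and with closures Ā ≠ Sⁿ and B̄ ≠ Sⁿ. Then every diffeomorphism φ of Sⁿ that is smoothly isotopic to the identity can be written as a composition φ = φ₆ ∘ φ₅ ∘ φ₄ ∘ φ₃ ∘ φ₂ ∘ φ₁ of six diffeomorphisms of Sⁿ, each of which is supported in A or supported in B (i.e., equals the identity outside A, or equals the identity outside B). -/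
/-!
Let `c` be the centre of `A` and `p = -c`, a point of `B`. The proof moves `φ` into a standard
position and then conjugates the remaining part into `A`.

* Compactly supported diffeomorphisms of a geodesic ball act transitively on it, so composing `φ`
  with one diffeomorphism `m₁` supported in `A` and one, `m₂`, supported in `B` gives
  `f = m₂ m₁ φ` fixing `p`.
* All maps involved preserve the orientation. This is expressed by the sign of the Jacobian of
  the homogeneous extension `x ↦ ‖x‖ f(x/‖x‖)` to `ℝⁿ⁺¹` (`IsPos`), which is multiplicative under
  composition, constant along isotopies, and positive for a diffeomorphism that is the identity
  near a point. Hence in the stereographic chart at `p` the derivative of `f` at its fixed point has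
  positive determinant (`det_chart_pos`).
* A germ of a smooth map of `ℝⁿ` at a fixed point with positive Jacobian is the germ of a
  diffeomorphism with compact support in a prescribed neighbourhood (`exists_diffSupp_germ`). For
  a germ tangent to the identity the displacement is cut off at a small scale; a linear map of
  positive determinant is a product of transvections and a diagonal matrix, each joined to the
  identity by a path of invertible maps, and along such a path one composes cut-off linear maps
  close to the identity. So there is `l` supported in `B` with `l = f` near `p`.
* The complement of `A` is a compact star-shaped set in the chart at `p`, contained in `B`, so some
  `s` supported in `B` moves it into the neighbourhood of `p` on which `l = f`
  (`exists_diffSupp_shrink`). Then `k = s⁻¹ l⁻¹ f s` is the identity off `A`.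

Altogether `φ = m₁⁻¹ m₂⁻¹ l s k s⁻¹`, six factors supported in `A`, `B`, `B`, `B`, `A`, `B`.
-/

open Metric Set
open scoped Manifold RealInnerProductSpace

noncomputable section

/-- The unit sphere `Sⁿ ⊆ ℝ^{n+1}`. -/
abbrev Sph (n : ℕ) : Type := Metric.sphere (0 : EuclideanSpace ℝ (Fin (n + 1))) 1

instance sphereFinrankFact (n : ℕ) :
    Fact (Module.finrank ℝ (EuclideanSpace ℝ (Fin (n + 1))) = n + 1) :=
  ⟨finrank_euclideanSpace_fin⟩

/-- `A` is an open geodesic ball of `Sⁿ`: the open ball around some centre `c ∈ Sⁿ` of some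
radius `r > 0` for the intrinsic round distance `d(c,y) = arccos⟪c,y⟫`. -/
def IsGeodesicBall {n : ℕ} (A : Set (Sph n)) : Prop :=
  ∃ (c : Sph n) (r : ℝ), 0 < r ∧
    A = {y : Sph n |
      Real.arccos ⟪(c : EuclideanSpace ℝ (Fin (n + 1))), (y : EuclideanSpace ℝ (Fin (n + 1)))⟫ < r}

/-- `ψ` is supported in `U`: it is the identity outside of `U`. -/
def SupportedIn {n : ℕ} (ψ : Diffeomorph (𝓡 n) (𝓡 n) (Sph n) (Sph n) (⊤ : ℕ∞)) (U : Set (Sph n)) :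
    Prop :=
  ∀ x, x ∉ U → ψ x = x

/-! ### Compactly supported diffeomorphisms of a Euclidean space -/

section Euclidean

open Filter Topology
open scoped ContDiff NNReal

variable {E : Type*} [NormedAddCommGroup E] [NormedSpace ℝ E]

/-- The group of smooth diffeomorphisms of `E` that are the identity off a compact subset of `U`. -/
def DiffSupp (U : Set E) : Subgroup (Equiv.Perm E) where
  carrier := {ψ | ContDiff ℝ ∞ ψ ∧ ContDiff ℝ ∞ ψ.symm ∧
    ∃ K, IsCompact K ∧ K ⊆ U ∧ ∀ x ∉ K, ψ x = x}
  one_mem' := ⟨contDiff_id, contDiff_id, ∅, isCompact_empty, empty_subset _, fun _ _ => rfl⟩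
  mul_mem' := by
    rintro a b ⟨ha, ha', K, hK, hKU, hKa⟩ ⟨hb, hb', L, hL, hLU, hLb⟩
    refine ⟨ha.comp hb, hb'.comp ha', K ∪ L, hK.union hL, union_subset hKU hLU, fun x hx => ?_⟩
    rw [mem_union, not_or] at hx
    rw [Equiv.Perm.mul_apply, hLb x hx.2, hKa x hx.1]
  inv_mem' := by
    rintro a ⟨ha, ha', K, hK, hKU, hKa⟩
    refine ⟨ha', ha, K, hK, hKU, fun x hx => ?_⟩
    exact (Equiv.symm_apply_eq a).2 (hKa x hx).symm

variable [FiniteDimensional ℝ E]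

/-- The identity plus a compactly supported smooth `1/2`-Lipschitz map is a diffeomorphism. -/
lemma exists_diffSupp_add {U K : Set E} (hK : IsCompact K) (hKU : K ⊆ U) {u : E → E}
    (hu : ContDiff ℝ ∞ u) (hlip : LipschitzWith (1 / 2) u) (h0 : ∀ x ∉ K, u x = 0) :
    ∃ ψ ∈ DiffSupp U, ∀ x, ψ x = x + u x := by
  have : CompleteSpace E := FiniteDimensional.complete ℝ E
  have happ : ApproximatesLinearOn (fun x => x + u x)
      ((ContinuousLinearEquiv.refl ℝ E : E ≃L[ℝ] E) : E →L[ℝ] E) univ (1 / 2) := by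
    intro x _ y _
    have := hlip.dist_le_mul x y
    rw [dist_eq_norm, dist_eq_norm] at this
    change ‖x + u x - (y + u y) - (x - y)‖ ≤ _
    rwa [show x + u x - (y + u y) - (x - y) = u x - u y by abel]
  have hinv : Subsingleton E ∨ (1 / 2 : ℝ≥0) <
      ‖((ContinuousLinearEquiv.refl ℝ E).symm : E →L[ℝ] E)‖₊⁻¹ := by
    rcases subsingleton_or_nontrivial E with h | h
    · exact Or.inl h
    · right
      have : ‖((ContinuousLinearEquiv.refl ℝ E).symm : E →L[ℝ] E)‖₊ = 1 := by
        ext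
        exact ContinuousLinearMap.norm_id
      rw [this, inv_one]
      exact NNReal.coe_lt_coe.1 (by norm_num)
  let Φ : E ≃ₜ E := happ.toHomeomorph _ hinv
  have hΦ : ∀ x, Φ x = x + u x := fun x => rfl
  have hsm : ContDiff ℝ ∞ Φ := contDiff_id.add hu
  have hder : ∀ x, ∃ L : E ≃L[ℝ] E, HasFDerivAt Φ (L : E →L[ℝ] E) x := by
    intro x
    have hd : HasFDerivAt Φ (ContinuousLinearMap.id ℝ E + fderiv ℝ u x) x :=
      (hasFDerivAt_id x).add (hu.differentiable (by simp) x).hasFDerivAt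
    have hn : ‖fderiv ℝ u x‖ ≤ 1 / 2 := by
      simpa using norm_fderiv_le_of_lipschitz ℝ hlip (x₀ := x)
    have hinj : Function.Injective (ContinuousLinearMap.id ℝ E + fderiv ℝ u x) := by
      rw [injective_iff_map_eq_zero]
      intro v hv
      have h1 : v = - fderiv ℝ u x v := eq_neg_of_add_eq_zero_left (by simpa using hv)
      have h2 : ‖v‖ ≤ 1 / 2 * ‖v‖ := by
        calc ‖v‖ = ‖fderiv ℝ u x v‖ := by conv_lhs => rw [h1, norm_neg]
          _ ≤ 1 / 2 * ‖v‖ := (fderiv ℝ u x).le_of_opNorm_le hn v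
      exact norm_le_zero_iff.1 (by linarith)
    exact ⟨(LinearEquiv.ofInjectiveEndo (ContinuousLinearMap.id ℝ E + fderiv ℝ u x).toLinearMap
      hinj).toContinuousLinearEquiv, hd⟩
  choose L hL using hder
  refine ⟨Φ.toEquiv, ⟨hsm, Φ.contDiff_symm hL hsm, K, hK, hKU, fun x hx => ?_⟩, hΦ⟩
  exact (hΦ x).trans (by rw [h0 x hx, add_zero])

lemma exists_bump {U C : Set E} (hC : IsCompact C) (hU : IsOpen U) (hCU : C ⊆ U) :
    ∃ (χ : E → ℝ) (K : Set E), ContDiff ℝ ∞ χ ∧ IsCompact K ∧ K ⊆ U ∧ (∀ x ∉ K, χ x = 0) ∧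
      (∀ᶠ x in 𝓝ˢ C, χ x = 1) ∧ ∀ x, χ x ∈ Icc (0 : ℝ) 1 := by
  obtain ⟨K, hK, hCK, hKU⟩ := exists_compact_between hC hU hCU
  obtain ⟨f, hf1, hf0, hf⟩ := exists_contMDiffMap_one_nhds_of_subset_interior (n := (⊤ : ℕ∞))
    (modelWithCornersSelf ℝ E) hC.isClosed hCK
  exact ⟨f, K, f.contMDiff.contDiff, hK, hKU, hf0, hf1, hf⟩

omit [FiniteDimensional ℝ E] in
/-- A compactly supported smooth map can be made `1/2`-Lipschitz by composing it with a
sufficiently small linear map. -/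
lemma exists_lipschitz_scale {F : Type*} [NormedAddCommGroup F] [NormedSpace ℝ F]
    {K : Set E} (hK : IsCompact K) {w : E → F}
    (hw : ContDiff ℝ ∞ w) (h0 : ∀ x ∉ K, w x = 0) :
    ∃ δ > 0, ∀ L : F →L[ℝ] E, ‖L‖ < δ → LipschitzWith (1 / 2) (fun x => L (w x)) := by
  obtain ⟨C, hC⟩ := hw.lipschitzWith_of_hasCompactSupport (HasCompactSupport.intro hK h0) (by simp)
  refine ⟨1 / (2 * (C + 1)), by positivity, fun L hL => ?_⟩
  refine (L.lipschitz.comp hC).weaken ?_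
  rw [← NNReal.coe_le_coe]
  push_cast
  have hC0 : (0 : ℝ) ≤ C := C.2
  calc ‖L‖ * C ≤ 1 / (2 * (C + 1)) * (C + 1) := by gcongr; linarith
    _ = 1 / 2 := by field_simp

/-- Linear maps close to the identity agree near a compact set with a compactly supported
diffeomorphism. -/
lemma exists_diffSupp_linear {U C : Set E} (hC : IsCompact C) (hU : IsOpen U) (hCU : C ⊆ U) :
    ∀ᶠ L in 𝓝 (1 : E →L[ℝ] E), ∃ ψ ∈ DiffSupp U, ∀ᶠ x in 𝓝ˢ C, ψ x = L x := by
  obtain ⟨χ, K, hχ, hK, hKU, h0, h1, -⟩ := exists_bump hC hU hCU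
  obtain ⟨δ, hδ, H⟩ := exists_lipschitz_scale (E := E) hK (w := fun x => χ x • x)
    (hχ.smul contDiff_id) (fun x hx => by simp [h0 x hx])
  filter_upwards [Metric.ball_mem_nhds _ hδ] with L hL
  obtain ⟨ψ, hψ, hψ'⟩ := exists_diffSupp_add hK hKU (u := fun x => (L - 1) (χ x • x))
    ((L - 1).contDiff.comp (hχ.smul contDiff_id)) (H _ (by rwa [← dist_eq_norm]))
    (fun x hx => by simp [h0 x hx])
  refine ⟨ψ, hψ, h1.mono fun x hx => ?_⟩
  rw [hψ', hx, one_smul]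
  simp

/-- Nearby points of an open set are related by a compactly supported diffeomorphism. -/
lemma exists_diffSupp_translate {U : Set E} (hU : IsOpen U) {x : E} (hx : x ∈ U) :
    ∀ᶠ y in 𝓝 x, ∃ ψ ∈ DiffSupp U, ψ x = y := by
  obtain ⟨χ, K, hχ, hK, hKU, h0, h1, -⟩ := exists_bump isCompact_singleton hU
    (singleton_subset_iff.2 hx)
  obtain ⟨δ, hδ, H⟩ := exists_lipschitz_scale (E := E) hK hχ h0
  filter_upwards [Metric.ball_mem_nhds _ hδ] with y hy
  obtain ⟨ψ, hψ, hψ'⟩ := exists_diffSupp_add hK hKU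
    (u := fun z => ContinuousLinearMap.toSpanSingleton ℝ (y - x) (χ z))
    ((ContinuousLinearMap.toSpanSingleton ℝ (y - x)).contDiff.comp hχ)
    (H _ (by rw [ContinuousLinearMap.norm_toSpanSingleton, ← dist_eq_norm]; exact hy))
    (fun z hz => by simp [h0 z hz])
  refine ⟨ψ, hψ, ?_⟩
  have : χ x = 1 := h1.self_of_nhdsSet x rfl
  simp [hψ', this]

/-- Compactly supported diffeomorphisms act transitively on connected open sets. -/
lemma exists_diffSupp_transitive {U : Set E} (hU : IsOpen U) (hc : IsPreconnected U) {x y : E}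
    (hx : x ∈ U) (hy : y ∈ U) : ∃ ψ ∈ DiffSupp U, ψ x = y := by
  refine hc.induction₂ (fun x y => ∃ ψ ∈ DiffSupp U, ψ x = y)
    (fun x hx => (exists_diffSupp_translate hU hx).filter_mono nhdsWithin_le_nhds) ?_ ?_ hx hy
  · rintro x y z - - - ⟨a, ha, rfl⟩ ⟨b, hb, rfl⟩
    exact ⟨b * a, mul_mem hb ha, rfl⟩
  · rintro x y - - ⟨a, ha, rfl⟩
    exact ⟨a⁻¹, inv_mem ha, by simp⟩

/-- A compact set that is star-shaped about `0` can be shrunk into any neighbourhood of `0`: a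
diffeomorphism equal to a scaling by `t < 1` on `C` maps `C` into itself, so it can be iterated. -/
lemma exists_diffSupp_shrink {U C V : Set E} (hC : IsCompact C) (hU : IsOpen U) (hCU : C ⊆ U)
    (hstar : StarConvex ℝ 0 C) (hV : V ∈ 𝓝 (0 : E)) : ∃ ψ ∈ DiffSupp U, ∀ x ∈ C, ψ x ∈ V := by
  have hcont : Tendsto (fun t : ℝ => t • (1 : E →L[ℝ] E)) (𝓝[<] 1) (𝓝 1) := by
    have : Continuous (fun t : ℝ => t • (1 : E →L[ℝ] E)) := by fun_prop
    simpa using (this.tendsto 1).mono_left nhdsWithin_le_nhds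
  obtain ⟨t, ⟨ψ, hψ, hψt⟩, ht1, ht0⟩ := ((hcont.eventually (exists_diffSupp_linear hC hU hCU)).and
    (Filter.Eventually.and self_mem_nhdsWithin
      ((lt_mem_nhds zero_lt_one).filter_mono nhdsWithin_le_nhds))).exists
  replace ht1 : t < 1 := ht1
  have hpow : ∀ (N : ℕ), ∀ x ∈ C, (ψ ^ N) x = t ^ N • x := by
    intro N
    induction N with
    | zero => simp
    | succ N ih =>
      intro x hx
      have h1 : t ^ N • x ∈ C := by
        simpa using hstar.add_smul_mem (y := x) (by simpa using hx)
          (pow_nonneg ht0.le N) (pow_le_one₀ ht0.le ht1.le)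
      rw [pow_succ', Equiv.Perm.mul_apply, ih x hx, hψt.self_of_nhdsSet _ h1, pow_succ', mul_smul]
      simp [smul_comm t]
  obtain ⟨ε, hε, hεV⟩ := Metric.mem_nhds_iff.1 hV
  obtain ⟨R, hR⟩ := hC.isBounded.exists_norm_le
  have hlim : Tendsto (fun N : ℕ => t ^ N * R) atTop (𝓝 0) := by
    simpa using (tendsto_pow_atTop_nhds_zero_of_lt_one ht0.le ht1).mul_const R
  obtain ⟨N, hN⟩ := (hlim.eventually (gt_mem_nhds hε)).exists
  refine ⟨ψ ^ N, pow_mem hψ N, fun x hx => hεV ?_⟩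
  rw [hpow N x hx, mem_ball_zero_iff, norm_smul, norm_pow, Real.norm_of_nonneg ht0.le]
  exact (mul_le_mul_of_nonneg_left (hR x hx) (by positivity)).trans_lt hN

/-! ### Germs at a fixed point -/

/-- A smooth germ at `0` tangent to the identity is the germ of a compactly supported
diffeomorphism. -/
lemma exists_diffSupp_germ_one {U : Set E} (hU : U ∈ 𝓝 (0 : E)) {f : E → E}
    (hf : ∀ᶠ x in 𝓝 0, ContDiffAt ℝ ∞ f x) (hf0 : f 0 = 0) (hf' : HasFDerivAt f (1 : E →L[ℝ] E) 0) :
    ∃ ψ ∈ DiffSupp U, ψ =ᶠ[𝓝 0] f := by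
  obtain ⟨χ, K, hχ, hK, hKU, h0, h1, hχI⟩ := exists_bump (U := Metric.ball (0 : E) 1)
    (isCompact_singleton (x := (0 : E))) Metric.isOpen_ball (by simp)
  obtain ⟨C, hC⟩ := hχ.lipschitzWith_of_hasCompactSupport (HasCompactSupport.intro hK h0) (by simp)
  have hC' : ∀ x y, |χ x - χ y| ≤ C * ‖x - y‖ := fun x y => by
    simpa [dist_eq_norm] using hC.dist_le_mul x y
  have hC0 : (0 : ℝ) ≤ C := C.2
  -- `h` is `ε`-Lipschitz near `0`; the cutoff at scale `δ` costs the factor `1 + C`.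
  set ε : ℝ := 1 / (2 * (C + 1)) with hε
  have hε0 : 0 < ε := by positivity
  set h : E → E := fun x => f x - x with hh
  have hstr : HasStrictFDerivAt f (1 : E →L[ℝ] E) 0 :=
    hf.self_of_nhds.hasStrictFDerivAt' hf' (by simp)
  have happ := hstr.isLittleO.bound hε0
  rw [nhds_prod_eq, Filter.Eventually, Filter.mem_prod_same_iff] at happ
  obtain ⟨s, hs, hs'⟩ := happ
  obtain ⟨δ, hδ, hδs⟩ := Metric.mem_nhds_iff.1 (Filter.inter_mem (Filter.inter_mem hs hU) hf)
  have hlip : ∀ x ∈ Metric.ball (0 : E) δ, ∀ y ∈ Metric.ball (0 : E) δ,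
      ‖h x - h y‖ ≤ ε * ‖x - y‖ := by
    intro x hx y hy
    have := hs' (mk_mem_prod (hδs hx).1.1 (hδs hy).1.1)
    change ‖f x - f y - (x - y)‖ ≤ ε * ‖x - y‖ at this
    rwa [show h x - h y = f x - f y - (x - y) by simp only [hh]; abel]
  have hh0 : h 0 = 0 := by simp [hh, hf0]
  have hχδ : ∀ x ∉ Metric.ball (0 : E) δ, χ (δ⁻¹ • x) = 0 := by
    intro x hx
    apply h0
    intro hx'
    have := hKU hx'
    rw [mem_ball_zero_iff, norm_smul, norm_inv, Real.norm_of_nonneg hδ.le,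
      inv_mul_lt_iff₀ hδ, mul_one] at this
    exact hx (mem_ball_zero_iff.2 this)
  have hKδ : ∀ x ∉ (fun x : E => δ • x) '' K, χ (δ⁻¹ • x) = 0 := fun x hx =>
    h0 _ fun hx' => hx ⟨_, hx', by simp [smul_smul, hδ.ne']⟩
  set u : E → E := fun x => χ (δ⁻¹ • x) • h x with hu
  have key : ∀ x, ∀ y ∈ Metric.ball (0 : E) δ, ‖u x - u y‖ ≤ 1 / 2 * ‖x - y‖ := by
    intro x y hy
    have e : u x - u y = χ (δ⁻¹ • x) • (h x - h y) + (χ (δ⁻¹ • x) - χ (δ⁻¹ • y)) • h y := by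
      simp only [hu]; module
    have b1 : ‖χ (δ⁻¹ • x) • (h x - h y)‖ ≤ ε * ‖x - y‖ := by
      by_cases hx : x ∈ Metric.ball (0 : E) δ
      · rw [norm_smul, Real.norm_of_nonneg (hχI _).1]
        calc _ ≤ 1 * ‖h x - h y‖ := by gcongr; exact (hχI _).2
          _ ≤ _ := by rw [one_mul]; exact hlip x hx y hy
      · rw [hχδ x hx, zero_smul, norm_zero]; positivity
    have b2 : ‖(χ (δ⁻¹ • x) - χ (δ⁻¹ • y)) • h y‖ ≤ C * ε * ‖x - y‖ := by
      have n1 : ‖h y‖ ≤ ε * δ := by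
        have := hlip y hy 0 (Metric.mem_ball_self hδ)
        rw [hh0, sub_zero, sub_zero] at this
        exact this.trans (by gcongr; exact (mem_ball_zero_iff.1 hy).le)
      have n2 : |χ (δ⁻¹ • x) - χ (δ⁻¹ • y)| ≤ C * (δ⁻¹ * ‖x - y‖) := by
        have := hC' (δ⁻¹ • x) (δ⁻¹ • y)
        rwa [← smul_sub, norm_smul, norm_inv, Real.norm_of_nonneg hδ.le] at this
      rw [norm_smul, Real.norm_eq_abs]
      calc _ ≤ (C * (δ⁻¹ * ‖x - y‖)) * (ε * δ) := by gcongr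
        _ = _ := by field_simp
    rw [e]
    refine (norm_add_le _ _).trans ((add_le_add b1 b2).trans (le_of_eq ?_))
    rw [hε]; field_simp; ring
  have hulip : LipschitzWith (1 / 2) u := by
    refine LipschitzWith.of_dist_le_mul fun x y => ?_
    rw [dist_eq_norm, dist_eq_norm, show ((1 / 2 : ℝ≥0) : ℝ) = 1 / 2 by norm_num]
    by_cases hy : y ∈ Metric.ball (0 : E) δ
    · exact key x y hy
    by_cases hx : x ∈ Metric.ball (0 : E) δ
    · rw [norm_sub_rev, norm_sub_rev x]
      exact key y x hx
    · simp only [hu]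
      rw [hχδ x hx, hχδ y hy]; simp
  have hKc : IsCompact ((fun x : E => δ • x) '' K) := hK.image (continuous_const_smul δ)
  have hKb : (fun x : E => δ • x) '' K ⊆ Metric.ball 0 δ := by
    rintro _ ⟨x, hx, rfl⟩
    have := mem_ball_zero_iff.1 (hKU hx)
    rw [mem_ball_zero_iff, norm_smul, Real.norm_of_nonneg hδ.le]
    nlinarith
  have husm : ContDiff ℝ ∞ u := by
    have hsc : ContDiff ℝ ∞ fun x : E => χ (δ⁻¹ • x) := hχ.comp (contDiff_const_smul _)
    rw [contDiff_iff_contDiffAt]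
    intro x
    by_cases hx : x ∈ Metric.ball (0 : E) δ
    · exact hsc.contDiffAt.smul (ContDiffAt.sub (hδs hx).2 contDiffAt_id)
    · have hx' : ((fun x : E => δ • x) '' K)ᶜ ∈ 𝓝 x :=
        hKc.isClosed.isOpen_compl.mem_nhds fun h => hx (hKb h)
      refine (contDiffAt_const (c := (0 : E))).congr_of_eventuallyEq ?_
      filter_upwards [hx'] with y hy
      simp [hu, hKδ y hy]
  obtain ⟨ψ, hψ, hψ'⟩ := exists_diffSupp_add (U := U) hKc (fun x hx => (hδs (hKb hx)).1.2)
    husm hulip (fun x hx => by simp [hu, hKδ x hx])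
  refine ⟨ψ, hψ, ?_⟩
  have hnear : ∀ᶠ x in 𝓝 (0 : E), χ (δ⁻¹ • x) = 1 := by
    have : Tendsto (fun x : E => δ⁻¹ • x) (𝓝 0) (𝓝 0) := by
      simpa using (continuous_const_smul δ⁻¹).tendsto (0 : E)
    exact this.eventually (by simpa using h1)
  filter_upwards [hnear] with x hx
  rw [hψ', hu]
  simp [hx, hh]

/-- `L` is, near `0`, the germ of a diffeomorphism with compact support in `U`. -/
def IsLinGerm (U : Set E) (L : E →L[ℝ] E) : Prop := ∃ ψ ∈ DiffSupp U, ψ =ᶠ[𝓝 0] L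

omit [FiniteDimensional ℝ E] in
lemma IsLinGerm.mul {U : Set E} {L M : E →L[ℝ] E} (hL : IsLinGerm U L) (hM : IsLinGerm U M) :
    IsLinGerm U (L * M) := by
  obtain ⟨a, ha, haL⟩ := hL
  obtain ⟨b, hb, hbM⟩ := hM
  refine ⟨a * b, mul_mem ha hb, ?_⟩
  have : Tendsto M (𝓝 0) (𝓝 0) := by simpa using M.continuous.tendsto 0
  filter_upwards [hbM, this.eventually haL] with x h1 h2
  rw [Equiv.Perm.mul_apply, h1, h2]
  rfl

lemma eventually_isLinGerm {U : Set E} (hU : U ∈ 𝓝 (0 : E)) :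
    ∀ᶠ L in 𝓝 (1 : E →L[ℝ] E), IsLinGerm U L := by
  obtain ⟨V, hVU, hV, h0⟩ := _root_.mem_nhds_iff.1 hU
  filter_upwards [exists_diffSupp_linear isCompact_singleton hV (singleton_subset_iff.2 h0)]
    with L ⟨ψ, ⟨h1, h2, K, hK, hKV, h3⟩, h⟩
  exact ⟨ψ, ⟨h1, h2, K, hK, hKV.trans hVU, h3⟩, by
    rwa [nhdsSet_singleton] at h⟩

/-- Being the germ of a compactly supported diffeomorphism propagates along paths of invertible
linear maps; `γ'` is the path of inverses. -/
lemma IsLinGerm.path {U : Set E} (hU : U ∈ 𝓝 (0 : E)) {γ γ' : ℝ → (E →L[ℝ] E)}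
    (hγ : ContinuousOn γ (Icc 0 1)) (hγ' : ContinuousOn γ' (Icc 0 1))
    (hinv : ∀ t ∈ Icc (0 : ℝ) 1, γ t * γ' t = 1 ∧ γ' t * γ t = 1)
    (h0 : IsLinGerm U (γ 0)) : IsLinGerm U (γ 1) := by
  refine (isPreconnected_Icc.induction₂ (fun s t => IsLinGerm U (γ s) ↔ IsLinGerm U (γ t))
    (fun s hs => ?_) (fun x y z _ _ _ h h' => h.trans h') (fun x y _ _ h => h.symm)
    (left_mem_Icc.2 zero_le_one) (right_mem_Icc.2 zero_le_one)).1 h0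
  have l1 : Tendsto (fun t => γ t * γ' s) (𝓝[Icc 0 1] s) (𝓝 1) := by
    have := ((hγ s hs).mul_const (γ' s)).tendsto
    rwa [(hinv s hs).1] at this
  have l2 : Tendsto (fun t => γ s * γ' t) (𝓝[Icc 0 1] s) (𝓝 1) := by
    have := ((hγ' s hs).const_mul (γ s)).tendsto
    rwa [(hinv s hs).1] at this
  filter_upwards [l1.eventually (eventually_isLinGerm hU), l2.eventually (eventually_isLinGerm hU),
    self_mem_nhdsWithin] with t h1 h2 ht
  constructor
  · intro h
    have := h1.mul h
    rwa [mul_assoc, (hinv s hs).2, mul_one] at this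
  · intro h
    have := h2.mul h
    rwa [mul_assoc, (hinv t ht).2, mul_one] at this

omit [FiniteDimensional ℝ E] in
lemma isLinGerm_one (U : Set E) : IsLinGerm U (1 : E →L[ℝ] E) :=
  ⟨1, one_mem _, Eventually.of_forall fun _ => rfl⟩

end Euclidean

/-! ### Linear germs of positive determinant -/

section Linear

open Filter Topology Matrix
open scoped ContDiff

variable {m : ℕ}

lemma isLinGerm_matrix_path {U : Set (EuclideanSpace ℝ (Fin m))} (hU : U ∈ 𝓝 0)
    {γ γ' : ℝ → Matrix (Fin m) (Fin m) ℝ}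
    (hγ : Continuous γ) (hγ' : ContinuousOn γ' (Icc 0 1))
    (hinv : ∀ t ∈ Icc (0 : ℝ) 1, γ t * γ' t = 1) (h0 : γ 0 = 1) :
    IsLinGerm U (toEuclideanCLM (𝕜 := ℝ) (γ 1)) := by
  have hc : Continuous (toEuclideanCLM (n := Fin m) (𝕜 := ℝ)) :=
    LinearMap.continuous_of_finiteDimensional
      (toEuclideanCLM (n := Fin m) (𝕜 := ℝ)).toAlgEquiv.toLinearMap
  refine IsLinGerm.path (γ := fun t => toEuclideanCLM (𝕜 := ℝ) (γ t))
    (γ' := fun t => toEuclideanCLM (𝕜 := ℝ) (γ' t)) hU (hc.comp hγ).continuousOn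
    (hc.comp_continuousOn hγ') (fun t ht => ?_) ?_
  · rw [← map_mul, ← map_mul, hinv t ht, _root_.mul_eq_one_comm.1 (hinv t ht), map_one]
    exact ⟨rfl, rfl⟩
  · simp only [h0, map_one]
    exact isLinGerm_one U

lemma isLinGerm_transvection {U : Set (EuclideanSpace ℝ (Fin m))} (hU : U ∈ 𝓝 0)
    {i j : Fin m} (hij : i ≠ j) (c : ℝ) :
    IsLinGerm U (toEuclideanCLM (𝕜 := ℝ) (transvection i j c)) := by
  have hc : Continuous fun t : ℝ => transvection i j (t * c) := by
    unfold transvection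
    refine continuous_const.add (continuous_matrix fun a b => ?_)
    simp only [single_apply]
    split_ifs <;> fun_prop
  have := isLinGerm_matrix_path hU (γ := fun t => transvection i j (t * c))
    (γ' := fun t => transvection i j (-(t * c))) hc
    (by
      have := hc.comp continuous_neg
      refine Continuous.continuousOn ?_
      convert this using 2
      simp) (fun t _ => by simp [transvection_mul_transvection_same _ _ hij]) (by simp)
  simpa using this

/-- The half turn in a coordinate plane is a product of transvections. -/
lemma diagonal_halfTurn {i j : Fin m} (hij : i ≠ j) :
    diagonal (fun x => if x = i ∨ x = j then (-1 : ℝ) else 1) =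
      (transvection i j 1 * transvection j i (-1) * transvection i j 1) *
        (transvection i j 1 * transvection j i (-1) * transvection i j 1) := by
  have hw : transvection i j (1 : ℝ) * transvection j i (-1) * transvection i j 1 =
      1 - single i i 1 - single j j 1 + single i j 1 - single j i 1 := by
    simp [transvection, mul_add, add_mul, hij.symm, single_mul_single_of_ne]
    have : ∀ a b : Fin m, single a b (-1 : ℝ) = - single a b 1 := fun a b => by
      rw [← single_neg]
    simp only [this]
    abel
  have hd : diagonal (fun x => if x = i ∨ x = j then (-1 : ℝ) else 1) =
      1 - single i i 1 - single j j 1 - single i i 1 - single j j 1 := by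
    ext a b
    simp only [diagonal_apply, Matrix.sub_apply, Matrix.one_apply, single_apply]
    split_ifs <;> grind
  rw [hw, hd]
  simp [mul_add, add_mul, mul_sub, sub_mul, hij, hij.symm, single_mul_single_of_ne]
  abel

/-- A diagonal matrix of positive determinant is a linear germ. Pairs of negative entries are
removed by the rotation by `π` in their coordinate plane. -/
lemma isLinGerm_diagonal {U : Set (EuclideanSpace ℝ (Fin m))} (hU : U ∈ 𝓝 0) :
    ∀ (k : ℕ) (D : Fin m → ℝ), (Finset.univ.filter fun i => D i < 0).card = k → 0 < ∏ i, D i →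
    IsLinGerm U (toEuclideanCLM (𝕜 := ℝ) (diagonal D)) := by
  intro k
  induction k using Nat.strong_induction_on with
  | _ k ih =>
  intro D hk hD
  have hne : ∀ i, D i ≠ 0 := fun i h => hD.ne' (Finset.prod_eq_zero (Finset.mem_univ i) h)
  by_cases hneg : ∃ i, D i < 0
  · obtain ⟨i, hi⟩ := hneg
    have : ∃ j, j ≠ i ∧ D j < 0 := by
      by_contra! hcon
      rw [← Finset.mul_prod_erase _ _ (Finset.mem_univ i)] at hD
      have : 0 ≤ ∏ x ∈ Finset.univ.erase i, D x :=
        Finset.prod_nonneg fun x hx => hcon x (Finset.ne_of_mem_erase hx)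
      nlinarith
    obtain ⟨j, hji, hj⟩ := this
    set s : Fin m → ℝ := fun x => if x = i ∨ x = j then -1 else 1 with hs
    have hss : ∀ x, s x * s x = 1 := fun x => by simp only [hs]; split_ifs <;> norm_num
    have hid := diagonal_halfTurn hji.symm
    rw [← hs] at hid
    have hrot : IsLinGerm U (toEuclideanCLM (𝕜 := ℝ) (diagonal s)) := by
      rw [hid]
      simp only [map_mul]
      have h1 := isLinGerm_transvection hU hji.symm 1
      have h2 := isLinGerm_transvection hU hji (-1)
      exact ((h1.mul h2).mul h1).mul ((h1.mul h2).mul h1)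
    have hlt : (Finset.univ.filter fun x => (s * D) x < 0).card < k := by
      rw [← hk]
      refine Finset.card_lt_card ⟨?_, fun hsub => ?_⟩
      · intro x hx
        simp only [Finset.mem_filter, Finset.mem_univ, true_and, Pi.mul_apply, hs] at hx ⊢
        split_ifs at hx with h
        · rcases h with rfl | rfl <;> assumption
        · linarith
      · have := hsub (Finset.mem_filter.2 ⟨Finset.mem_univ i, hi⟩)
        simp [hs] at this
        linarith
    have hprod : 0 < ∏ x, (s * D) x := by
      have : ∏ x, s x = 1 := by
        rw [← det_diagonal, hid]
        simp [det_transvection_of_ne, hji, hji.symm]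
      simpa [Finset.prod_mul_distrib, this] using hD
    have := hrot.mul (ih _ hlt (s * D) rfl hprod)
    rw [← map_mul, diagonal_mul_diagonal] at this
    have hsD : (fun x => s x * (s * D) x) = D := by
      ext x
      simp [← mul_assoc, hss]
    rwa [hsD] at this
  · push Not at hneg
    have hpos : ∀ i, 0 < D i := fun i => (hneg i).lt_of_ne' (hne i)
    have hpos' : ∀ i, ∀ t ∈ Icc (0 : ℝ) 1, 0 < 1 + t * (D i - 1) := fun i t ht => by
      nlinarith [hpos i, ht.1, ht.2, mul_nonneg ht.1 (hpos i).le]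
    have := isLinGerm_matrix_path hU (γ := fun t => diagonal fun i => 1 + t * (D i - 1))
      (γ' := fun t => diagonal fun i => (1 + t * (D i - 1))⁻¹)
      (Continuous.matrix_diagonal (by fun_prop))
      (by
        rw [continuousOn_iff_continuous_domRestrict]
        refine Continuous.matrix_diagonal (continuous_pi fun i => ?_)
        refine Continuous.inv₀ (by fun_prop) fun t => (hpos' i t t.2).ne')
      (fun t ht => by
        rw [diagonal_mul_diagonal, ← diagonal_one]
        congr 1
        ext i
        exact mul_inv_cancel₀ (hpos' i t ht).ne') (by simp)
    simpa using this

/-- Every linear map of positive determinant is the germ of a compactly supported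
diffeomorphism. -/
lemma isLinGerm_of_det_pos {U : Set (EuclideanSpace ℝ (Fin m))} (hU : U ∈ 𝓝 0)
    (L : EuclideanSpace ℝ (Fin m) →L[ℝ] EuclideanSpace ℝ (Fin m)) (hL : 0 < L.det) :
    IsLinGerm U L := by
  obtain ⟨M, rfl⟩ := (toEuclideanCLM (n := Fin m) (𝕜 := ℝ)).surjective L
  have hM : 0 < M.det := by
    change 0 < (toEuclideanCLM (n := Fin m) (𝕜 := ℝ) M).det at hL
    have : (toEuclideanCLM (n := Fin m) (𝕜 := ℝ) M).det = M.det := by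
      exact LinearMap.det_toLin _ M
    rwa [this] at hL
  obtain ⟨l, l', D, rfl⟩ := Pivot.exists_list_transvec_mul_diagonal_mul_list_transvec M
  simp only [det_mul, det_diagonal, TransvectionStruct.det_toMatrix_prod, one_mul, mul_one] at hM
  have hl : ∀ l : List (TransvectionStruct (Fin m) ℝ),
      IsLinGerm U (toEuclideanCLM (𝕜 := ℝ) (l.map TransvectionStruct.toMatrix).prod) := by
    intro l
    induction l with
    | nil => simpa using isLinGerm_one U
    | cons a l ih =>
      rw [List.map_cons, List.prod_cons, map_mul]
      exact (isLinGerm_transvection hU a.hij a.c).mul ih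
  rw [map_mul, map_mul]
  exact ((hl l).mul (isLinGerm_diagonal hU _ D rfl hM)).mul (hl l')

/-- A smooth germ fixing `0` and preserving orientation is the germ of a compactly supported
diffeomorphism. -/
lemma exists_diffSupp_germ {U : Set (EuclideanSpace ℝ (Fin m))} (hU : U ∈ 𝓝 0)
    {f : EuclideanSpace ℝ (Fin m) → EuclideanSpace ℝ (Fin m)}
    (hf : ∀ᶠ x in 𝓝 0, ContDiffAt ℝ ∞ f x) (hf0 : f 0 = 0) (hdet : 0 < (fderiv ℝ f 0).det) :
    ∃ ψ ∈ DiffSupp U, ψ =ᶠ[𝓝 0] f := by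
  set L := fderiv ℝ f 0 with hL
  obtain ⟨a, ha, haL⟩ := isLinGerm_of_det_pos hU L hdet
  let e : EuclideanSpace ℝ (Fin m) ≃L[ℝ] EuclideanSpace ℝ (Fin m) :=
    L.toContinuousLinearEquivOfDetNeZero hdet.ne'
  have he : ∀ x, L (e.symm x) = x := fun x => e.apply_symm_apply x
  have he' : ∀ x, e.symm (L x) = x := fun x => e.symm_apply_apply x
  obtain ⟨b, hb, hbf⟩ := exists_diffSupp_germ_one hU (f := fun x => e.symm (f x))
    (hf.mono fun x hx => e.symm.contDiff.contDiffAt.comp x hx) (by simp [hf0])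
    (by
      have := e.symm.hasFDerivAt.comp (0 : EuclideanSpace ℝ (Fin m))
        (hf.self_of_nhds.differentiableAt (by simp)).hasFDerivAt
      have h1 : (1 : EuclideanSpace ℝ (Fin m) →L[ℝ] EuclideanSpace ℝ (Fin m)) =
          (e.symm : EuclideanSpace ℝ (Fin m) →L[ℝ] EuclideanSpace ℝ (Fin m)).comp L := by
        ext1 x
        exact (he' x).symm
      rw [h1]
      exact this)
  refine ⟨a * b, mul_mem ha hb, ?_⟩
  have hb0 : Tendsto b (𝓝 0) (𝓝 0) := by
    have := hb.1.continuous.tendsto 0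
    simpa [hbf.self_of_nhds, hf0] using this
  filter_upwards [hbf, hb0.eventually haL] with x h1 h2
  rw [Equiv.Perm.mul_apply, h2, h1, he]

end Linear

/-! ### Stereographic charts of the sphere -/

section Sphere

open Filter Topology
open scoped ContDiff

variable {n : ℕ}

/-- The stereographic chart of `Sⁿ` centred at `c`, i.e. projecting from `-c`. -/
def stc (c : Sph n) : OpenPartialHomeomorph (Sph n) (EuclideanSpace ℝ (Fin n)) :=
  stereographic' n (-c)

lemma stc_source (c : Sph n) : (stc c).source = {-c}ᶜ := stereographic'_source _

lemma stc_target (c : Sph n) : (stc c).target = univ := stereographic'_target _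

lemma stc_symm_stc {c x : Sph n} (h : x ≠ -c) : (stc c).symm (stc c x) = x :=
  (stc c).left_inv (by rw [stc_source]; exact h)

lemma stc_stc_symm (c : Sph n) (w : EuclideanSpace ℝ (Fin n)) : stc c ((stc c).symm w) = w :=
  (stc c).right_inv (by rw [stc_target]; trivial)

lemma stc_symm_ne (c : Sph n) (w : EuclideanSpace ℝ (Fin n)) : (stc c).symm w ≠ -c := by
  have := (stc c).map_target (x := w) (by rw [stc_target]; trivial)
  rwa [stc_source] at this

lemma stc_mem_maximalAtlas (c : Sph n) :
    stc c ∈ IsManifold.maximalAtlas (𝓡 n) ∞ (Sph n) :=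
  IsManifold.subset_maximalAtlas ⟨-c, rfl⟩

lemma contMDiffAt_stc {c x : Sph n} (h : x ≠ -c) :
    ContMDiffAt (𝓡 n) (𝓡 n) ∞ (stc c) x :=
  (contMDiffOn_of_mem_maximalAtlas (stc_mem_maximalAtlas c)).contMDiffAt
    ((stc c).open_source.mem_nhds (by rw [stc_source]; exact h))

lemma contMDiff_stc_symm (c : Sph n) : ContMDiff (𝓡 n) (𝓡 n) ∞ (stc c).symm := by
  have := contMDiffOn_symm_of_mem_maximalAtlas (stc_mem_maximalAtlas c)
  rwa [stc_target, contMDiffOn_univ] at this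

lemma inner_stc_symm (c : Sph n) (w : EuclideanSpace ℝ (Fin n)) :
    ⟪(c : EuclideanSpace ℝ (Fin (n + 1))), ((stc c).symm w : EuclideanSpace ℝ (Fin (n + 1)))⟫ =
      (4 - ‖w‖ ^ 2) / (4 + ‖w‖ ^ 2) := by
  rw [stc, stereographic'_symm_apply]
  set U := (OrthonormalBasis.fromOrthogonalSpanSingleton (𝕜 := ℝ) n
    (ne_zero_of_mem_unit_sphere (-c))).repr with hU
  have h1 : ‖((U.symm w : _) : EuclideanSpace ℝ (Fin (n + 1)))‖ = ‖w‖ := by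
    rw [← Submodule.coe_norm, LinearIsometryEquiv.norm_map]
  have h2 : ⟪(c : EuclideanSpace ℝ (Fin (n + 1))),
      ((U.symm w : _) : EuclideanSpace ℝ (Fin (n + 1)))⟫ = 0 := by
    have := Submodule.mem_orthogonal_singleton_iff_inner_right.1 (U.symm w).2
    simpa using this
  simp only [inner_add_right, inner_smul_right, h1, h2]
  have h3 : ⟪(c : EuclideanSpace ℝ (Fin (n + 1))),
      ((-c : Sph n) : EuclideanSpace ℝ (Fin (n + 1)))⟫ = -1 := by
    simp
  have h4 : (0 : ℝ) < 4 + ‖w‖ ^ 2 := by positivity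
  rw [h3]
  field_simp
  ring

lemma stc_symm_zero (c : Sph n) : (stc c).symm 0 = c := by
  have h := inner_stc_symm c 0
  have h' : ((4 : ℝ) - 0 ^ 2) / (4 + 0 ^ 2) = 1 := by norm_num
  rw [norm_zero, h'] at h
  have hc : ‖(c : EuclideanSpace ℝ (Fin (n + 1)))‖ = 1 := norm_eq_of_mem_sphere c
  have hd : ‖((stc c).symm 0 : EuclideanSpace ℝ (Fin (n + 1)))‖ = 1 :=
    norm_eq_of_mem_sphere _
  exact Subtype.ext ((inner_eq_one_iff_of_norm_eq_one hc hd).1 h).symm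

lemma stc_self (c : Sph n) : stc c c = 0 := by
  have h := stc_stc_symm c 0
  rwa [stc_symm_zero] at h

lemma stc_symm_surj {c x : Sph n} (h : x ≠ -c) : ∃ w, (stc c).symm w = x :=
  ⟨_, stc_symm_stc h⟩

/-- Transport of a self-map of `ℝⁿ` to the sphere by the chart at `c`, fixing `-c`. -/
def extendMap (c : Sph n) (g : EuclideanSpace ℝ (Fin n) → EuclideanSpace ℝ (Fin n))
    (x : Sph n) : Sph n :=
  open Classical in if x = -c then x else (stc c).symm (g (stc c x))

lemma extendMap_symm (c : Sph n) (g : EuclideanSpace ℝ (Fin n) → EuclideanSpace ℝ (Fin n)) (w) :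
    extendMap c g ((stc c).symm w) = (stc c).symm (g w) := by
  rw [extendMap, if_neg (stc_symm_ne c w), stc_stc_symm]

lemma extendMap_neg (c : Sph n) (g : EuclideanSpace ℝ (Fin n) → EuclideanSpace ℝ (Fin n)) :
    extendMap c g (-c) = -c := if_pos rfl

lemma extendMap_eventually (c : Sph n) {g : EuclideanSpace ℝ (Fin n) → EuclideanSpace ℝ (Fin n)}
    {K : Set (EuclideanSpace ℝ (Fin n))} (hK : IsCompact K) (hg : ∀ x ∉ K, g x = x) :
    ∀ᶠ x in 𝓝 (-c), extendMap c g x = x := by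
  have hc : IsCompact ((stc c).symm '' K) := hK.image (contMDiff_stc_symm c).continuous
  have hmem : ((stc c).symm '' K)ᶜ ∈ 𝓝 (-c) := by
    refine hc.isClosed.isOpen_compl.mem_nhds ?_
    rintro ⟨w, -, hw⟩
    exact stc_symm_ne c w hw
  filter_upwards [hmem] with x hx
  by_cases h : x = -c
  · rw [h, extendMap_neg]
  · obtain ⟨w, rfl⟩ := stc_symm_surj h
    rw [extendMap_symm, hg w fun hw => hx ⟨w, hw, rfl⟩]

lemma contMDiff_extendMap (c : Sph n) {g : EuclideanSpace ℝ (Fin n) → EuclideanSpace ℝ (Fin n)}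
    (hgs : ContDiff ℝ ∞ g)
    {K : Set (EuclideanSpace ℝ (Fin n))} (hK : IsCompact K) (hg : ∀ x ∉ K, g x = x) :
    ContMDiff (𝓡 n) (𝓡 n) ∞ (extendMap c g) := by
  intro x
  by_cases h : x = -c
  · subst h
    exact contMDiffAt_id.congr_of_eventuallyEq (extendMap_eventually c hK hg)
  · refine (((contMDiff_stc_symm c).comp hgs.contMDiff).contMDiffAt.comp x
      (contMDiffAt_stc h)).congr_of_eventuallyEq ?_
    filter_upwards [isOpen_compl_singleton.mem_nhds h] with y hy
    exact if_neg hy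

/-- Compactly supported diffeomorphisms of `ℝⁿ` extend to `Sⁿ` through the chart at `c`. -/
lemma exists_extend (c : Sph n) {U : Set (EuclideanSpace ℝ (Fin n))}
    {g : Equiv.Perm (EuclideanSpace ℝ (Fin n))} (hg : g ∈ DiffSupp U) :
    ∃ ψ : Diffeomorph (𝓡 n) (𝓡 n) (Sph n) (Sph n) (⊤ : ℕ∞),
      (∀ w, ψ ((stc c).symm w) = (stc c).symm (g w)) ∧ SupportedIn ψ ((stc c).symm '' U) ∧
      ∀ᶠ x in 𝓝 (-c), ψ x = x := by
  obtain ⟨h1, h2, K, hK, hKU, h3⟩ := hg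
  have h3' : ∀ x ∉ K, g.symm x = x := fun x hx => (Equiv.symm_apply_eq g).2 (h3 x hx).symm
  have hinv : ∀ a b : Equiv.Perm (EuclideanSpace ℝ (Fin n)), (∀ w, a (b w) = w) →
      ∀ x : Sph n, extendMap c a (extendMap c b x) = x := by
    intro a b hab x
    by_cases h : x = -c
    · rw [h, extendMap_neg, extendMap_neg]
    · obtain ⟨w, rfl⟩ := stc_symm_surj h
      rw [extendMap_symm, extendMap_symm, hab]
  refine ⟨⟨⟨extendMap c g, extendMap c g.symm, hinv _ _ (by simp), hinv _ _ (by simp)⟩,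
    contMDiff_extendMap c h1 hK h3, contMDiff_extendMap c h2 hK h3'⟩, extendMap_symm c g, ?_,
    extendMap_eventually c hK h3⟩
  intro x hx
  change extendMap c g x = x
  by_cases h : x = -c
  · rw [h, extendMap_neg]
  · obtain ⟨w, rfl⟩ := stc_symm_surj h
    rw [extendMap_symm, h3 w fun hw => hx ⟨w, hKU hw, rfl⟩]

/-! ### Orientation-preserving self-maps of the sphere -/

/-- The ambient space `ℝⁿ⁺¹` of `Sⁿ`. -/
abbrev Amb (n : ℕ) : Type := EuclideanSpace ℝ (Fin (n + 1))

/-- Radial projection `ℝⁿ⁺¹ ∖ 0 → Sⁿ`; the origin is sent to an arbitrary point. -/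
def nrm (x : Amb n) : Sph n :=
  open Classical in
  if h : x = 0 then ⟨EuclideanSpace.single 0 1, by simp⟩
  else ⟨‖x‖⁻¹ • x, by simp [norm_smul, h]⟩

lemma nrm_coe_of_ne {x : Amb n} (h : x ≠ 0) : (nrm x : Amb n) = ‖x‖⁻¹ • x := by
  rw [nrm, dif_neg h]

lemma norm_coe_sph (x : Sph n) : ‖(x : Amb n)‖ = 1 := norm_eq_of_mem_sphere x

lemma coe_sph_ne (x : Sph n) : (x : Amb n) ≠ 0 := ne_zero_of_mem_unit_sphere x

lemma nrm_smul {r : ℝ} (hr : 0 < r) (y : Sph n) : nrm (r • (y : Amb n)) = y := by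
  apply Subtype.ext
  rw [nrm_coe_of_ne (smul_ne_zero hr.ne' (coe_sph_ne y)), norm_smul, norm_coe_sph, mul_one,
    Real.norm_of_nonneg hr.le, smul_smul, inv_mul_cancel₀ hr.ne', one_smul]

lemma nrm_coe (y : Sph n) : nrm (y : Amb n) = y := by
  simpa using nrm_smul one_pos y

lemma norm_smul_nrm {x : Amb n} (h : x ≠ 0) : ‖x‖ • (nrm x : Amb n) = x := by
  rw [nrm_coe_of_ne h, smul_smul, mul_inv_cancel₀ (norm_ne_zero_iff.2 h), one_smul]

lemma contMDiffAt_nrm {x : Amb n} (h : x ≠ 0) :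
    ContMDiffAt 𝓘(ℝ, Amb n) (𝓡 n) ∞ nrm x := by
  let O : TopologicalSpace.Opens (Amb n) := ⟨{0}ᶜ, isOpen_compl_singleton⟩
  have hne : ∀ u : O, (u : Amb n) ≠ 0 := fun u => u.2
  have h1 : ContMDiff 𝓘(ℝ, Amb n) 𝓘(ℝ, Amb n) ∞
      (fun u : O => ‖(u : Amb n)‖⁻¹ • (u : Amb n)) := by
    intro u
    refine (contMDiffAt_subtype_iff (f := fun x : Amb n => ‖x‖⁻¹ • x)).2 ?_
    refine ContDiffAt.contMDiffAt ?_
    exact ((contDiffAt_norm ℝ (hne u)).inv (norm_ne_zero_iff.2 (hne u))).smul contDiffAt_id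
  have h2 : ∀ u : O, ‖(u : Amb n)‖⁻¹ • (u : Amb n) ∈ sphere (0 : Amb n) 1 := by
    intro u
    simp [norm_smul, hne u]
  have h3 := h1.codRestrict_sphere (n := n) h2
  have h4 : (fun u : O => nrm (u : Amb n)) = codRestrict _ _ h2 := by
    funext u
    apply Subtype.ext
    rw [nrm_coe_of_ne (hne u)]
    rfl
  have h5 := h3 ⟨x, h⟩
  rw [← h4] at h5
  exact (contMDiffAt_subtype_iff (U := O) (x := ⟨x, h⟩)).1 h5

/-- The positively homogeneous extension `x ↦ ‖x‖ f(x/‖x‖)` of a self-map of the sphere. -/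
def hext (f : Sph n → Sph n) (x : Amb n) : Amb n := ‖x‖ • (f (nrm x) : Amb n)

lemma hext_coe (f : Sph n → Sph n) (y : Sph n) : hext f (y : Amb n) = f y := by
  rw [hext, nrm_coe, norm_coe_sph, one_smul]

lemma hext_smul (f : Sph n → Sph n) (y : Sph n) {r : ℝ} (hr : 0 < r) :
    hext f (r • (y : Amb n)) = r • (f y : Amb n) := by
  rw [hext, nrm_smul hr, norm_smul, norm_coe_sph, mul_one, Real.norm_of_nonneg hr.le]

lemma hext_comp (f g : Sph n → Sph n) {x : Amb n} (h : x ≠ 0) :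
    hext (f ∘ g) x = hext f (hext g x) := by
  rw [hext, show hext g x = ‖x‖ • (g (nrm x) : Amb n) from rfl,
    hext_smul f _ (norm_pos_iff.2 h)]
  rfl

lemma contDiffAt_hext_family {H : ℝ → Sph n → Sph n}
    (hH : ContMDiff ((modelWithCornersSelf ℝ ℝ).prod (𝓡 n)) (𝓡 n) ∞
      (fun p : ℝ × Sph n => H p.1 p.2)) (t : ℝ) {x : Amb n} (h : x ≠ 0) :
    ContDiffAt ℝ ∞ (fun p : ℝ × Amb n => hext (H p.1) p.2) (t, x) := by
  have h1 : ContMDiffAt 𝓘(ℝ, ℝ × Amb n) (𝓡 n) ∞ (fun p : ℝ × Amb n => nrm p.2) (t, x) :=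
    ContMDiffAt.comp (t, x) (contMDiffAt_nrm (x := ((t, x) : ℝ × Amb n).2) h)
      contDiff_snd.contMDiff.contMDiffAt
  have h2 : ContMDiffAt 𝓘(ℝ, ℝ × Amb n) 𝓘(ℝ, ℝ) ∞ (fun p : ℝ × Amb n => p.1) (t, x) :=
    contDiff_fst.contMDiff.contMDiffAt
  have h3 : ContMDiffAt 𝓘(ℝ, ℝ × Amb n) 𝓘(ℝ, Amb n) ∞
      (fun p : ℝ × Amb n => (H p.1 (nrm p.2) : Amb n)) (t, x) :=
    (contMDiff_coe_sphere (m := ∞)).contMDiffAt.comp (t, x)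
      (hH.contMDiffAt.comp (t, x) (h2.prodMk h1))
  have h4 : ContDiffAt ℝ ∞ (fun p : ℝ × Amb n => ‖p.2‖) (t, x) :=
    (contDiffAt_norm ℝ h).comp (t, x) contDiffAt_snd
  exact h4.smul h3.contDiffAt

lemma contDiffAt_hext {f : Sph n → Sph n} (hf : ContMDiff (𝓡 n) (𝓡 n) ∞ f) {x : Amb n}
    (h : x ≠ 0) : ContDiffAt ℝ ∞ (hext f) x :=
  (contDiffAt_hext_family (H := fun _ => f) (hf.comp contMDiff_snd) 0 h).comp x
    (contDiffAt_const.prodMk contDiffAt_id)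

lemma fderiv_hext_comp {f g : Sph n → Sph n} (hf : ContMDiff (𝓡 n) (𝓡 n) ∞ f)
    (hg : ContMDiff (𝓡 n) (𝓡 n) ∞ g) (x : Sph n) :
    (fderiv ℝ (hext (f ∘ g)) x).det =
      (fderiv ℝ (hext f) (g x : Sph n)).det * (fderiv ℝ (hext g) x).det := by
  have h1 : hext (f ∘ g) =ᶠ[𝓝 (x : Amb n)] hext f ∘ hext g := by
    filter_upwards [isOpen_compl_singleton.mem_nhds (coe_sph_ne x)] with y hy
    exact hext_comp f g hy
  have hf' : DifferentiableAt ℝ (hext f) (hext g x) := by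
    rw [hext_coe]
    exact (contDiffAt_hext hf (coe_sph_ne _)).differentiableAt (by simp)
  have hg' := (contDiffAt_hext hg (coe_sph_ne x)).differentiableAt (by simp)
  rw [h1.fderiv_eq, fderiv_comp _ hf' hg', hext_coe]
  simp only [ContinuousLinearMap.det, ContinuousLinearMap.toLinearMap_comp, LinearMap.det_comp]

/-- `f` preserves the orientation of `Sⁿ`: its homogeneous extension to `ℝⁿ⁺¹` has positive
Jacobian along the sphere. -/
def IsPos (f : Sph n → Sph n) : Prop := ∀ x : Sph n, 0 < (fderiv ℝ (hext f) x).det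

lemma IsPos.comp {f g : Sph n → Sph n} (hf : IsPos f) (hg : IsPos g)
    (hf' : ContMDiff (𝓡 n) (𝓡 n) ∞ f) (hg' : ContMDiff (𝓡 n) (𝓡 n) ∞ g) : IsPos (f ∘ g) := by
  intro x
  rw [fderiv_hext_comp hf' hg']
  exact mul_pos (hf _) (hg _)

lemma det_fderiv_hext_of_eventually {f : Sph n → Sph n} {x : Sph n}
    (h : ∀ᶠ y in 𝓝 x, f y = y) : (fderiv ℝ (hext f) x).det = 1 := by
  have h1 : hext f =ᶠ[𝓝 (x : Amb n)] id := by
    have h2 : Tendsto nrm (𝓝 (x : Amb n)) (𝓝 x) := by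
      have := (contMDiffAt_nrm (coe_sph_ne x)).continuousAt.tendsto
      rwa [nrm_coe] at this
    filter_upwards [isOpen_compl_singleton.mem_nhds (coe_sph_ne x), h2.eventually h] with y hy hy'
    rw [hext, hy', norm_smul_nrm hy]
    rfl
  rw [h1.fderiv_eq, fderiv_id]
  simp [ContinuousLinearMap.det]

lemma det_fderiv_hext_ne_zero (ψ : Diffeomorph (𝓡 n) (𝓡 n) (Sph n) (Sph n) (⊤ : ℕ∞)) (x : Sph n) :
    (fderiv ℝ (hext ψ) x).det ≠ 0 := by
  have h := fderiv_hext_comp (f := ψ.symm) (g := ψ) ψ.symm.contMDiff ψ.contMDiff x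
  have h1 : (fderiv ℝ (hext (ψ.symm ∘ ψ)) x).det = 1 :=
    det_fderiv_hext_of_eventually (Eventually.of_forall fun y => ψ.symm_apply_apply y)
  rw [h1] at h
  intro h0
  rw [h0, mul_zero] at h
  exact one_ne_zero h

lemma preconnectedSpace_sph (hn : 1 ≤ n) : PreconnectedSpace (Sph n) := by
  refine Subtype.preconnectedSpace (isPreconnected_sphere ?_ _ _)
  rw [← Module.finrank_eq_rank, finrank_euclideanSpace_fin]
  exact_mod_cast Nat.lt_add_of_pos_left hn

/-- A diffeomorphism of the connected manifold `Sⁿ` that is the identity near some point preserves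
the orientation, as the sign of its Jacobian is constant. -/
lemma isPos_of_eventually (hn : 1 ≤ n)
    (ψ : Diffeomorph (𝓡 n) (𝓡 n) (Sph n) (Sph n) (⊤ : ℕ∞)) {p : Sph n}
    (h : ∀ᶠ x in 𝓝 p, ψ x = x) : IsPos ψ := by
  have hcont : Continuous fun x : Sph n => (fderiv ℝ (hext ψ) x).det := by
    refine continuous_iff_continuousAt.2 fun x => ?_
    have h1 := ((contDiffAt_hext ψ.contMDiff (coe_sph_ne x)).fderiv_right
      (m := 0) (by simp)).continuousAt
    exact ContinuousLinearMap.continuous_det.continuousAt.comp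
      (h1.comp continuous_subtype_val.continuousAt)
  have := preconnectedSpace_sph hn
  intro x
  by_contra! hx
  obtain ⟨y, hy⟩ := mem_range_of_exists_le_of_exists_ge hcont ⟨x, hx⟩
    ⟨p, by rw [det_fderiv_hext_of_eventually h]; exact zero_le_one⟩
  exact det_fderiv_hext_ne_zero ψ y hy

/-- Orientation is preserved along an isotopy: the Jacobian at a given point varies continuously in
time and never vanishes. -/
lemma isPos_of_isotopy {H : ℝ → Sph n → Sph n}
    (hH : ContMDiff ((modelWithCornersSelf ℝ ℝ).prod (𝓡 n)) (𝓡 n) ∞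
      (fun p : ℝ × Sph n => H p.1 p.2))
    (hH0 : ∀ x, H 0 x = x)
    (hHdiff : ∀ t ∈ Icc (0:ℝ) 1,
      ∃ ψ : Diffeomorph (𝓡 n) (𝓡 n) (Sph n) (Sph n) (⊤ : ℕ∞), ∀ x, ψ x = H t x) :
    IsPos (H 1) := by
  intro x
  have hcont : Continuous fun t : ℝ => (fderiv ℝ (hext (H t)) x).det := by
    have h1 : (fun t : ℝ => fderiv ℝ (hext (H t)) x) = fun t : ℝ =>
        (fderiv ℝ (fun p : ℝ × Amb n => hext (H p.1) p.2) (t, (x : Amb n))).comp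
          (ContinuousLinearMap.inr ℝ ℝ (Amb n)) := by
      funext t
      exact (((contDiffAt_hext_family hH t (coe_sph_ne x)).differentiableAt
        (by simp)).hasFDerivAt.comp (x : Amb n) (hasFDerivAt_prodMk_right t (x : Amb n))).fderiv
    refine ContinuousLinearMap.continuous_det.comp ?_
    rw [h1]
    refine continuous_iff_continuousAt.2 fun t => ?_
    have h2 := ((contDiffAt_hext_family hH t (coe_sph_ne x)).fderiv_right
      (m := 0) (by simp)).continuousAt
    exact (h2.comp (f := fun t : ℝ => (t, (x : Amb n))) (by fun_prop)).clm_comp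
      continuousAt_const
  by_contra! hx
  have h0 : (fderiv ℝ (hext (H 0)) x).det = 1 :=
    det_fderiv_hext_of_eventually (Eventually.of_forall hH0)
  obtain ⟨t, ht, h⟩ := intermediate_value_Icc' zero_le_one hcont.continuousOn
    (show (0 : ℝ) ∈ Icc _ _ from ⟨hx, by rw [h0]; exact zero_le_one⟩)
  obtain ⟨ψ, hψ⟩ := hHdiff t ht
  beta_reduce at h
  rw [← funext hψ] at h
  exact det_fderiv_hext_ne_zero ψ x h

/-- At a fixed point, orientation preservation can be tested in the stereographic chart: in the
coordinates `(w, λ) ↦ (1 + λ) • (stc p).symm w` the homogeneous extension is locally the product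
of the chart expression of `f` with the identity. -/
lemma det_chart_pos {f : Sph n → Sph n} (hf : ContMDiff (𝓡 n) (𝓡 n) ∞ f) (hpos : IsPos f)
    {p : Sph n} (hp : f p = p) :
    (∀ᶠ w in 𝓝 0, ContDiffAt ℝ ∞ (fun w => stc p (f ((stc p).symm w))) w) ∧
      0 < (fderiv ℝ (fun w => stc p (f ((stc p).symm w))) 0).det := by
  set σ : EuclideanSpace ℝ (Fin n) → Sph n := fun w => (stc p).symm w with hσ
  have hσ0 : σ 0 = p := stc_symm_zero p
  have hσs : ContMDiff (𝓡 n) (𝓡 n) ∞ σ := contMDiff_stc_symm p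
  have hpp : p ≠ -p := fun h => stc_symm_ne p 0 (by rw [stc_symm_zero]; exact h)
  have hfσ : ∀ᶠ w in 𝓝 0, f (σ w) ≠ -p := by
    refine (hf.comp hσs).continuous.continuousAt.eventually_ne ?_
    simp only [Function.comp, hσ0, hp]
    exact hpp
  set ft : EuclideanSpace ℝ (Fin n) → EuclideanSpace ℝ (Fin n) := fun w => stc p (f (σ w)) with hft
  have hsm : ∀ w, f (σ w) ≠ -p → ContDiffAt ℝ ∞ ft w := fun w hw =>
    ((contMDiffAt_stc hw).comp w (hf.comp hσs).contMDiffAt).contDiffAt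
  refine ⟨hfσ.mono hsm, ?_⟩
  have hft0 : ft 0 = 0 := by simp only [hft, hσ0, hp, stc_self]
  let G : EuclideanSpace ℝ (Fin n) × ℝ → Amb n := fun q => (1 + q.2) • (σ q.1 : Amb n)
  let R : Amb n → EuclideanSpace ℝ (Fin n) × ℝ := fun x => (stc p (nrm x), ‖x‖ - 1)
  have hG0 : G (0, 0) = p := by simp [G, hσ0]
  have hR0 : R p = (0, 0) := by simp [R, nrm_coe, stc_self]
  have hGd : DifferentiableAt ℝ G (0, 0) := by
    have h1 : ContMDiff 𝓘(ℝ, EuclideanSpace ℝ (Fin n)) 𝓘(ℝ, Amb n) ∞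
        (fun w => (σ w : Amb n)) := contMDiff_coe_sphere.comp hσs
    have h2 : DifferentiableAt ℝ (fun w => (σ w : Amb n)) ((0, 0) : _ × ℝ).1 :=
      (h1.contDiff.differentiable (by simp)) _
    exact ((differentiableAt_const (1 : ℝ)).add differentiableAt_snd).smul
      (h2.comp ((0, 0) : _ × ℝ) differentiableAt_fst)
  have hRd : DifferentiableAt ℝ R p := by
    have h1 : ContMDiffAt 𝓘(ℝ, Amb n) 𝓘(ℝ, EuclideanSpace ℝ (Fin n)) ∞
        (fun x => stc p (nrm x)) (p : Amb n) := by
      refine ContMDiffAt.comp (p : Amb n) (contMDiffAt_stc ?_) (contMDiffAt_nrm (coe_sph_ne p))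
      rw [nrm_coe]
      exact hpp
    exact (h1.contDiffAt.differentiableAt (by simp)).prodMk
      (((contDiffAt_norm (n := 1) ℝ (coe_sph_ne p)).differentiableAt (by simp)).sub_const 1)
  have hpos' : ∀ᶠ q in 𝓝 ((0, 0) : EuclideanSpace ℝ (Fin n) × ℝ), 0 < 1 + q.2 := by
    refine (show Continuous fun q : EuclideanSpace ℝ (Fin n) × ℝ => 1 + q.2 by
      fun_prop).continuousAt.eventually (lt_mem_nhds ?_)
    simp
  have hRG : R ∘ G =ᶠ[𝓝 (0, 0)] id := by
    filter_upwards [hpos'] with q hq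
    simp only [R, G, Function.comp, nrm_smul hq, norm_smul, norm_coe_sph,
      Real.norm_of_nonneg hq.le, hσ, stc_stc_symm, id]
    ext <;> simp
  have hGR : G ∘ R =ᶠ[𝓝 (p : Amb n)] id := by
    have h1 : ∀ᶠ x in 𝓝 (p : Amb n), nrm x ≠ -p := by
      refine (contMDiffAt_nrm (coe_sph_ne p)).continuousAt.eventually_ne ?_
      rw [nrm_coe]
      exact hpp
    filter_upwards [h1, isOpen_compl_singleton.mem_nhds (coe_sph_ne p)] with x hx hx0
    simp only [R, G, Function.comp, hσ, stc_symm_stc hx, add_sub_cancel, id]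
    exact norm_smul_nrm hx0
  have hFG : hext f ∘ G =ᶠ[𝓝 (0, 0)] G ∘ Prod.map ft id := by
    filter_upwards [hpos', continuousAt_fst.eventually hfσ] with q hq hq'
    simp only [G, Function.comp, Prod.map, hft, hext_smul f _ hq, hσ, id]
    rw [stc_symm_stc hq']
  have hGd' := hGd.hasFDerivAt
  have hRd' := hRd.hasFDerivAt
  have e1 : (fderiv ℝ R p).comp (fderiv ℝ G (0, 0)) = ContinuousLinearMap.id ℝ _ := by
    rw [← hG0] at hRd'
    have := (hRd'.comp _ hGd').congr_of_eventuallyEq hRG.symm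
    rw [hG0] at this
    exact this.unique (hasFDerivAt_id _)
  have e2 : (fderiv ℝ G (0, 0)).comp (fderiv ℝ R p) = ContinuousLinearMap.id ℝ _ := by
    rw [← hR0] at hGd'
    have := (hGd'.comp _ hRd').congr_of_eventuallyEq hGR.symm
    rw [hR0] at this
    exact this.unique (hasFDerivAt_id _)
  have e3 : (fderiv ℝ (hext f) p).comp (fderiv ℝ G (0, 0)) =
      (fderiv ℝ G (0, 0)).comp ((fderiv ℝ ft 0).prodMap (ContinuousLinearMap.id ℝ ℝ)) := by
    have hF : HasFDerivAt (hext f) (fderiv ℝ (hext f) p) (G (0, 0)) := by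
      rw [hG0]
      exact ((contDiffAt_hext hf (coe_sph_ne p)).differentiableAt (by simp)).hasFDerivAt
    have ht : HasFDerivAt ft (fderiv ℝ ft 0) ((0, 0) : EuclideanSpace ℝ (Fin n) × ℝ).1 :=
      ((hsm 0 (by rw [hσ0, hp]; exact hpp)).differentiableAt (by simp)).hasFDerivAt
    have hP : HasFDerivAt (Prod.map ft (id : ℝ → ℝ))
        ((fderiv ℝ ft 0).prodMap (ContinuousLinearMap.id ℝ ℝ)) (0, 0) :=
      HasFDerivAt.prodMap (0, 0) ht (hasFDerivAt_id _)
    have hG' : HasFDerivAt G (fderiv ℝ G (0, 0)) (Prod.map ft (id : ℝ → ℝ) (0, 0)) := by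
      simpa only [Prod.map, hft0, id] using hGd'
    exact ((hF.comp _ hGd').congr_of_eventuallyEq hFG.symm).unique (hG'.comp _ hP)
  let e : (EuclideanSpace ℝ (Fin n) × ℝ) ≃ₗ[ℝ] Amb n :=
    LinearEquiv.ofLinearMap (fderiv ℝ G (0, 0)).toLinearMap (fderiv ℝ R p).toLinearMap
      (by exact_mod_cast congrArg ContinuousLinearMap.toLinearMap e2)
      (by exact_mod_cast congrArg ContinuousLinearMap.toLinearMap e1)
  have e4 : (fderiv ℝ (hext f) p).toLinearMap = e.toLinearMap ∘ₗ
      ((fderiv ℝ ft 0).toLinearMap.prodMap LinearMap.id) ∘ₗ e.symm.toLinearMap := by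
    ext1 x
    have h1 := DFunLike.congr_fun e3 (fderiv ℝ R p x)
    have h2 : fderiv ℝ G (0, 0) (fderiv ℝ R p x) = x := DFunLike.congr_fun e2 x
    simp only [ContinuousLinearMap.comp_apply, h2] at h1
    exact h1
  have e5 := hpos p
  rw [ContinuousLinearMap.det, e4, LinearMap.det_conj, LinearMap.det_prodMap, LinearMap.det_id,
    mul_one] at e5
  exact e5

/-! ### Geodesic balls -/

/-- A proper geodesic ball is a spherical cap `⟪c, y⟫ > κ`; here `κ = cos r`, and properness forces
`r ≤ π`. -/
lemma IsGeodesicBall.exists_cap {A : Set (Sph n)} (hA : IsGeodesicBall A)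
    (hAc : closure A ≠ univ) :
    ∃ (c : Sph n) (κ : ℝ), -1 ≤ κ ∧ κ < 1 ∧ A = {y : Sph n | κ < ⟪(c : Amb n), (y : Amb n)⟫} := by
  obtain ⟨c, r, hr, rfl⟩ := hA
  have hrπ : r ≤ Real.pi := by
    by_contra! h
    refine hAc ?_
    rw [show {y : Sph n | Real.arccos ⟪(c : Amb n), (y : Amb n)⟫ < r} = univ from
      eq_univ_of_forall fun y => (Real.arccos_le_pi _).trans_lt h, closure_univ]
  refine ⟨c, Real.cos r, Real.neg_one_le_cos r, ?_, ?_⟩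
  · rw [← Real.cos_zero]
    exact Real.cos_lt_cos_of_nonneg_of_le_pi le_rfl hrπ hr
  · ext y
    have h1 : |⟪(c : Amb n), (y : Amb n)⟫| ≤ 1 := by
      simpa [norm_coe_sph] using abs_real_inner_le_norm (c : Amb n) (y : Amb n)
    rw [abs_le] at h1
    simp only [mem_ofPred_eq]
    conv_rhs => rw [← Real.cos_arccos h1.1 h1.2]
    exact (Real.strictAntiOn_cos.lt_iff_gt ⟨hr.le, hrπ⟩
      ⟨Real.arccos_nonneg _, Real.arccos_le_pi _⟩).symm

lemma isOpen_cap (c : Sph n) (κ : ℝ) : IsOpen {y : Sph n | κ < ⟪(c : Amb n), (y : Amb n)⟫} :=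
  isOpen_lt continuous_const (by fun_prop)

/-- The height `(4 - ‖w‖²)/(4 + ‖w‖²)` in the stereographic chart does not decrease when `w` is
scaled towards the origin. -/
lemma height_smul_le (w : EuclideanSpace ℝ (Fin n)) {t : ℝ} (h0 : 0 ≤ t) (h1 : t ≤ 1) :
    (4 - ‖w‖ ^ 2) / (4 + ‖w‖ ^ 2) ≤ (4 - ‖t • w‖ ^ 2) / (4 + ‖t • w‖ ^ 2) := by
  have h : ‖t • w‖ ≤ ‖w‖ := by
    rw [norm_smul, Real.norm_of_nonneg h0]
    exact mul_le_of_le_one_left (norm_nonneg _) h1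
  have h' : ‖t • w‖ ^ 2 ≤ ‖w‖ ^ 2 := by gcongr
  rw [div_le_div_iff₀ (by positivity) (by positivity)]
  linarith

/-- A cap, read in the chart at its centre, is star-shaped, hence connected, so compactly supported
diffeomorphisms act transitively on it. -/
lemma exists_move (hn : 1 ≤ n) {A : Set (Sph n)} (hA : IsGeodesicBall A) (hAc : closure A ≠ univ)
    {x y : Sph n} (hx : x ∈ A) (hy : y ∈ A) :
    ∃ ψ : Diffeomorph (𝓡 n) (𝓡 n) (Sph n) (Sph n) (⊤ : ℕ∞),
      SupportedIn ψ A ∧ IsPos ψ ∧ ψ x = y := by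
  obtain ⟨c, κ, hκ, -, rfl⟩ := hA.exists_cap hAc
  have hne : ∀ z : Sph n, κ < ⟪(c : Amb n), (z : Amb n)⟫ → z ≠ -c := by
    rintro z hz rfl
    have : ⟪(c : Amb n), ((-c : Sph n) : Amb n)⟫ = -1 := by simp
    linarith
  set U : Set (EuclideanSpace ℝ (Fin n)) := {w | κ < (4 - ‖w‖ ^ 2) / (4 + ‖w‖ ^ 2)} with hU
  have hUo : IsOpen U := by
    refine isOpen_lt continuous_const (Continuous.div (by fun_prop) (by fun_prop) fun w => ?_)
    positivity
  obtain ⟨v, rfl⟩ := stc_symm_surj (hne x hx)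
  obtain ⟨w, rfl⟩ := stc_symm_surj (hne y hy)
  simp only [mem_ofPred_eq, inner_stc_symm] at hx hy
  have hUs : StarConvex ℝ 0 U := starConvex_zero_iff.2 fun z hz t h0 h1 =>
    lt_of_lt_of_le hz (height_smul_le z h0 h1)
  obtain ⟨g, hg, hgv⟩ := exists_diffSupp_transitive hUo
    (hUs.isPathConnected (hUs.mem ⟨v, hx⟩)).isConnected.isPreconnected hx hy
  obtain ⟨ψ, h1, h2, h3⟩ := exists_extend c hg
  refine ⟨ψ, fun z hz => h2 z ?_, isPos_of_eventually hn ψ h3, by rw [h1, hgv]⟩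
  rintro ⟨u, hu, rfl⟩
  refine hz ?_
  rw [mem_ofPred_eq, inner_stc_symm]
  exact hu

lemma isCompact_cap {κ : ℝ} (hκ : κ < 1) :
    IsCompact {w : EuclideanSpace ℝ (Fin n) | -κ ≤ (4 - ‖w‖ ^ 2) / (4 + ‖w‖ ^ 2)} := by
  refine Metric.isCompact_of_isClosed_isBounded ?_ ?_
  · refine isClosed_le continuous_const (Continuous.div (by fun_prop) (by fun_prop) fun w => ?_)
    positivity
  · refine isBounded_iff_forall_norm_le.2 ⟨1 + 4 * (1 + κ) / (1 - κ), fun w hw => ?_⟩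
    have h4 : (0 : ℝ) < 4 + ‖w‖ ^ 2 := by positivity
    rw [mem_ofPred_eq, le_div_iff₀ h4] at hw
    have h5 : ‖w‖ ^ 2 ≤ 4 * (1 + κ) / (1 - κ) := by
      rw [le_div_iff₀ (by linarith)]
      linarith
    nlinarith [sq_nonneg (‖w‖ - 1)]

end Sphere

/-! ### Fragmentation -/

/-- Uniform fragmentation for spheres: if `A, B` are open geodesic balls covering `Sⁿ` whose
closures are proper, every diffeomorphism of `Sⁿ` smoothly isotopic to the identity is a
composition of six diffeomorphisms, each supported in `A` or in `B`. -/
theorem stmt11 (n : ℕ) (hn : 1 ≤ n) (A B : Set (Sph n))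
    (hA : IsGeodesicBall A) (hB : IsGeodesicBall B)
    (hcover : A ∪ B = univ)
    (hAc : closure A ≠ univ) (hBc : closure B ≠ univ)
    (φ : Diffeomorph (𝓡 n) (𝓡 n) (Sph n) (Sph n) (⊤ : ℕ∞))
    (H : ℝ → Sph n → Sph n)
    (hH : ContMDiff ((modelWithCornersSelf ℝ ℝ).prod (𝓡 n)) (𝓡 n) (⊤ : ℕ∞)
      (fun p : ℝ × Sph n => H p.1 p.2))
    (hH0 : ∀ x, H 0 x = x) (hH1 : ∀ x, H 1 x = φ x)
    (hHdiff : ∀ t ∈ Icc (0:ℝ) 1,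
      ∃ ψ : Diffeomorph (𝓡 n) (𝓡 n) (Sph n) (Sph n) (⊤ : ℕ∞), ∀ x, ψ x = H t x) :
    ∃ φ₁ φ₂ φ₃ φ₄ φ₅ φ₆ : Diffeomorph (𝓡 n) (𝓡 n) (Sph n) (Sph n) (⊤ : ℕ∞),
      (SupportedIn φ₁ A ∨ SupportedIn φ₁ B) ∧
      (SupportedIn φ₂ A ∨ SupportedIn φ₂ B) ∧
      (SupportedIn φ₃ A ∨ SupportedIn φ₃ B) ∧
      (SupportedIn φ₄ A ∨ SupportedIn φ₄ B) ∧
      (SupportedIn φ₅ A ∨ SupportedIn φ₅ B) ∧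
      (SupportedIn φ₆ A ∨ SupportedIn φ₆ B) ∧
      ∀ x, φ x = φ₆ (φ₅ (φ₄ (φ₃ (φ₂ (φ₁ x))))) := by
  have : PreconnectedSpace (Sph n) := preconnectedSpace_sph hn
  obtain ⟨c, κ, hκ, hκ1, hAeq⟩ := hA.exists_cap hAc
  have hAo : IsOpen A := hAeq ▸ isOpen_cap c κ
  have hBo : IsOpen B := by
    obtain ⟨c', κ', -, -, rfl⟩ := hB.exists_cap hBc
    exact isOpen_cap c' κ'
  have hAB : ∀ x, x ∉ A → x ∈ B := fun x hx =>
    ((mem_union _ _ _).1 (hcover ▸ mem_univ x)).resolve_left hx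
  -- The chart at the antipode `p` of the centre of `A` contains the complement of `A`.
  obtain ⟨p, hp⟩ : ∃ p : Sph n, -p = c := ⟨-c, neg_neg c⟩
  have hcA : c ∈ A := by
    rw [hAeq, mem_ofPred_eq, real_inner_self_eq_norm_sq, norm_coe_sph]
    linarith
  have hpB : p ∈ B := by
    refine hAB p fun h => ?_
    rw [hAeq, mem_ofPred_eq, ← hp] at h
    have : ⟪((-p : Sph n) : Amb n), (p : Amb n)⟫ = -1 := by simp
    linarith
  obtain ⟨z, -, hzA, hzB⟩ := isPreconnected_univ A B hAo hBo hcover.ge ⟨c, mem_univ c, hcA⟩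
    ⟨p, mem_univ p, hpB⟩
  have hφ : IsPos φ := by
    have := isPos_of_isotopy hH hH0 hHdiff
    rwa [funext hH1] at this
  -- `m₁` and `m₂` bring `φ p` back to `p`, through a point of `A ∩ B` if needed.
  obtain ⟨m₁, hm₁A, hm₁, hm₁p⟩ : ∃ m₁ : Diffeomorph (𝓡 n) (𝓡 n) (Sph n) (Sph n) (⊤ : ℕ∞),
      SupportedIn m₁ A ∧ IsPos m₁ ∧ m₁ (φ p) ∈ B := by
    by_cases h : φ p ∈ B
    · exact ⟨Diffeomorph.refl _ _ _, fun _ _ => rfl,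
        isPos_of_eventually hn _ (p := p) (Filter.Eventually.of_forall fun _ => rfl), h⟩
    · obtain ⟨m, h1, h2, h3⟩ := exists_move hn hA hAc
        (not_not.1 fun h' => h (hAB (φ p) h')) hzA
      exact ⟨m, h1, h2, h3 ▸ hzB⟩
  obtain ⟨m₂, hm₂B, hm₂, hm₂p⟩ := exists_move hn hB hBc hm₁p hpB
  let f : Diffeomorph (𝓡 n) (𝓡 n) (Sph n) (Sph n) (⊤ : ℕ∞) := (φ.trans m₁).trans m₂
  have hf : IsPos f := hm₂.comp (hm₁.comp hφ m₁.contMDiff φ.contMDiff) m₂.contMDiff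
    (m₁.contMDiff.comp φ.contMDiff)
  have hfp : f p = p := hm₂p
  obtain ⟨hsm, hdet⟩ := det_chart_pos f.contMDiff hf hfp
  have hV : IsOpen ((stc p).symm ⁻¹' B) := hBo.preimage (contMDiff_stc_symm p).continuous
  have h0V : (0 : EuclideanSpace ℝ (Fin n)) ∈ (stc p).symm ⁻¹' B := by
    rw [mem_preimage, stc_symm_zero]
    exact hpB
  have himg : ∀ {ψ : Diffeomorph (𝓡 n) (𝓡 n) (Sph n) (Sph n) (⊤ : ℕ∞)},
      SupportedIn ψ ((stc p).symm '' ((stc p).symm ⁻¹' B)) → SupportedIn ψ B :=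
    fun h x hx => h x fun hx' => hx (image_preimage_subset _ _ hx')
  -- `l` is supported in `B` and agrees with `f` near the fixed point `p`.
  obtain ⟨g, hg, hgf⟩ := exists_diffSupp_germ (hV.mem_nhds h0V) hsm
    (by rw [stc_symm_zero, hfp, stc_self]) hdet
  obtain ⟨l, hl, hlB, -⟩ := exists_extend p hg
  replace hlB := himg hlB
  have hlf : ∀ᶠ w in nhds 0, l ((stc p).symm w) = f ((stc p).symm w) := by
    have h1 : ∀ᶠ w in nhds 0, f ((stc p).symm w) ≠ -p := by
      refine (f.contMDiff.comp (contMDiff_stc_symm p)).continuous.continuousAt.eventually_ne ?_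
      rw [Function.comp, stc_symm_zero, hfp]
      intro h
      exact stc_symm_ne p 0 (by rw [stc_symm_zero]; exact h)
    filter_upwards [h1, hgf] with w hw hw'
    rw [hl, hw', stc_symm_stc hw]
  -- `s` is supported in `B` and moves the complement of `A` to where `l` and `f` agree.
  obtain ⟨g', hg', hgs⟩ := exists_diffSupp_shrink (isCompact_cap (n := n) hκ1) hV
    (fun w hw => by
      refine hAB _ fun h => ?_
      rw [hAeq, mem_ofPred_eq, ← hp, coe_neg_sphere, inner_neg_left, inner_stc_symm] at h
      rw [mem_ofPred_eq] at hw
      linarith)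
    (starConvex_zero_iff.2 fun w hw t h0 h1 => le_trans hw (height_smul_le w h0 h1)) hlf
  obtain ⟨s, hs, hsB, -⟩ := exists_extend p hg'
  replace hsB := himg hsB
  have hsD : ∀ x, x ∉ A → l (s x) = f (s x) := by
    intro x hx
    obtain ⟨w, rfl⟩ := stc_symm_surj (c := p) (x := x) (fun h => hx (by rw [h, hp]; exact hcA))
    rw [hs]
    refine hgs w ?_
    rw [hAeq, mem_ofPred_eq, ← hp, coe_neg_sphere, inner_neg_left, inner_stc_symm, not_lt] at hx
    rw [mem_ofPred_eq]
    linarith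
  have hsymm : ∀ {ψ : Diffeomorph (𝓡 n) (𝓡 n) (Sph n) (Sph n) (⊤ : ℕ∞)} {U : Set (Sph n)},
      SupportedIn ψ U → SupportedIn ψ.symm U := fun {ψ U} h x hx => by
    conv_lhs => rw [← h x hx]
    exact ψ.symm_apply_apply x
  -- Since `l⁻¹ f` is the identity on the image under `s` of the complement of `A`, its conjugate
  -- `s⁻¹ l⁻¹ f s` is supported in `A`.
  refine ⟨s.symm, ((s.trans f).trans l.symm).trans s.symm, s, l, m₂.symm, m₁.symm,
    Or.inr (hsymm hsB), Or.inl fun x hx => ?_, Or.inr hsB, Or.inr hlB, Or.inr (hsymm hm₂B),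
    Or.inl (hsymm hm₁A), fun x => ?_⟩
  · change s.symm (l.symm (f (s x))) = x
    rw [← hsD x hx, l.symm_apply_apply, s.symm_apply_apply]
  · change φ x = m₁.symm (m₂.symm (l (s (s.symm (l.symm (f (s (s.symm x))))))))
    rw [s.apply_symm_apply, s.apply_symm_apply, l.apply_symm_apply]
    change φ x = m₁.symm (m₂.symm (m₂ (m₁ (φ x))))
    rw [m₂.symm_apply_apply, m₁.symm_apply_apply]

end
end

section
/- Let p ∈ [1,∞) and σ ∈ (0,1) with σp < 1. Then there exists a constant C = C(σ,p) such that for every λ ≥ 1, δ ∈ (0,1) and t ∈ (0,1) the following holds. Set m = (1−δ)(1+λt)/(λ+1), a = λ/(1+λt), b = (1−δ)/((1−t)(1−δ) + δ(1+1/λ)), and define v : ℝ → ℝ by v(y) = a for y ∈ [0,m], v(y) = −b for y ∈ (m,1], and v(y) = 0 otherwise. Then (∫_ℝ ∫_ℝ |v(x) − v(y)|^p / |x−y|^{1+σp} dx dy)^{1/p} ≤ C · (t^{−1+(1−σp)/p} + (1−t)^{−1+(1−σp)/p}). -/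
/-!
Write `s = σ p ∈ (0, 1)` and `v = A·1_[0,m] - B·1_(m,1]`. Up to a factor `2 ^ (p - 1)`, the `p`-th
power of the seminorm of `v` is at most the sum of those of the two steps. The seminorm of the
indicator of an interval of length `ℓ` is bounded by Tonelli: a point `x` at distance `d` from the
complement contributes at most `∫_{|z| ≥ d} |z|^{-(1+s)} dz = 2 d^{-s} / s`, and `d^{-s}` is integrable over
the interval because `s < 1`, which gives `O(ℓ^{1-s})` (`two_sides`). Hence the `p`-th power of the
seminorm is `O(A^p m^{1-s} + B^p (1-m)^{1-s})` (`two_step`).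

The two steps enclose the same area, `A m = B (1 - m) = (1-δ) λ / (λ+1) ≤ 1`, and their heights
satisfy `A ≤ 1/t`, `B ≤ 1/(1-t)`. Therefore
`A^p m^{1-s} = A^{p-(1-s)} (A m)^{1-s} ≤ t^{-(p-(1-s))}`, and likewise for `B` (`height_length`).

All estimates are made for lower Lebesgue integrals. The passage to the iterated Bochner integral
uses `‖∫ f‖ₑ ≤ ∫⁻ ‖f‖ₑ`, which needs no integrability.
-/

open MeasureTheory Set

/-- The singular kernel `|z|^{-(1+s)}` as an extended nonnegative number. For `s ≠ -1` its value at
`z = 0` is `0` (division by zero), matching the real integrand on the diagonal. -/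
noncomputable def ker (s z : ℝ) : ENNReal := ENNReal.ofReal (1 / |z| ^ (1 + s))

lemma measurable_ker (s : ℝ) : Measurable (ker s) := by
  unfold ker; fun_prop

lemma tail {s d : ℝ} (hs : 0 < s) (hd : 0 < d) :
    ∫⁻ z in Ici d, ker s z = ENNReal.ofReal (d ^ (-s) / s) := by
  rw [← setLIntegral_congr (Ioi_ae_eq_Ici (a := d) (μ := volume))]
  have h1 : ∫⁻ z in Ioi d, ker s z = ∫⁻ z in Ioi d, ENNReal.ofReal (z ^ (-(1 + s))) := by
    refine setLIntegral_congr_fun measurableSet_Ioi fun z hz => ?_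
    have hz0 : 0 < z := hd.trans hz
    simp only [ker]
    rw [abs_of_pos hz0, Real.rpow_neg hz0.le, one_div]
  rw [h1, ← ofReal_integral_eq_lintegral_ofReal
    (integrableOn_Ioi_rpow_of_lt (by linarith) hd), integral_Ioi_rpow_of_lt (by linarith) hd]
  · congr 1
    rw [show -(1 + s) + 1 = -s by ring, neg_div_neg_eq]
  · refine (ae_restrict_iff' measurableSet_Ioi).2 (ae_of_all _ fun z hz => ?_)
    exact Real.rpow_nonneg (hd.trans hz).le _

lemma tail_two {s d : ℝ} (hs : 0 < s) (hd : 0 < d) (x : ℝ) :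
    ∫⁻ y in {y | d ≤ |x - y|}, ker s (x - y) ≤ 2 * ENNReal.ofReal (d ^ (-s) / s) := by
  have hm : MeasurableSet {y : ℝ | d ≤ |x - y|} :=
    measurableSet_le measurable_const (by fun_prop)
  have hG : Measurable ((Ici d).indicator (ker s)) := (measurable_ker s).indicator measurableSet_Ici
  calc ∫⁻ y in {y | d ≤ |x - y|}, ker s (x - y)
      = ∫⁻ y, {y : ℝ | d ≤ |x - y|}.indicator (fun y => ker s (x - y)) y :=
        (lintegral_indicator hm _).symm
    _ ≤ ∫⁻ y, ((Ici d).indicator (ker s) (x - y) + (Ici d).indicator (ker s) (y - x)) := by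
        refine lintegral_mono fun y => ?_
        by_cases hy : d ≤ |x - y|
        swap
        · rw [indicator_of_notMem (show y ∉ {y : ℝ | d ≤ |x - y|} from hy)]
          exact zero_le
        rw [indicator_of_mem (show y ∈ {y : ℝ | d ≤ |x - y|} from hy)]
        rcases le_abs.1 hy with h | h
        · rw [indicator_of_mem (show x - y ∈ Ici d from h)]; exact le_self_add
        · rw [indicator_of_mem (show y - x ∈ Ici d by rw [mem_Ici]; linarith)]
          have : ker s (y - x) = ker s (x - y) := by simp only [ker, abs_sub_comm]
          rw [this]; exact le_add_self
    _ = 2 * ENNReal.ofReal (d ^ (-s) / s) := by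
        rw [lintegral_add_left (by fun_prop), lintegral_sub_left_eq_self,
          lintegral_sub_right_eq_self, lintegral_indicator measurableSet_Ici, tail hs hd, two_mul]

/-- The integral near the singularity of the distance to an endpoint; it converges as `s < 1`. -/
lemma near {s l : ℝ} (hs : s < 1) (hl : 0 ≤ l) :
    ∫⁻ z in Ioc 0 l, ENNReal.ofReal (z ^ (-s)) = ENNReal.ofReal (l ^ (1 - s) / (1 - s)) := by
  have hi : IntervalIntegrable (fun z : ℝ => z ^ (-s)) volume 0 l :=
    intervalIntegral.intervalIntegrable_rpow' (by linarith)
  rw [← ofReal_integral_eq_lintegral_ofReal ((intervalIntegrable_iff_integrableOn_Ioc_of_le hl).1 hi),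
    ← intervalIntegral.integral_of_le hl, integral_rpow (Or.inl (by linarith)),
    show -s + 1 = 1 - s by ring, Real.zero_rpow (by linarith), sub_zero]
  refine (ae_restrict_iff' measurableSet_Ioc).2 (ae_of_all _ fun z hz => ?_)
  exact Real.rpow_nonneg hz.1.le _

/-- With `d` the distance from `x` to the endpoints, the inner integral is at most `2 d^{-s} / s`,
and `d^{-s} ≤ (x - α)^{-s} + (β - x)^{-s}`. The endpoints of `I` are negligible, so any interval
between `Ioo α β` and `Icc α β` is allowed. -/
lemma one_side {s α β : ℝ} (hs : 0 < s) (hs1 : s < 1) (hab : α < β) {I : Set ℝ}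
    (h1 : Ioo α β ⊆ I) (h2 : I ⊆ Icc α β) :
    ∫⁻ x in I, ∫⁻ y in Iᶜ, ker s (x - y)
      ≤ ENNReal.ofReal (4 / (s * (1 - s)) * (β - α) ^ (1 - s)) := by
  have hm : Measurable fun z : ℝ => (Ioc 0 (β - α)).indicator
      (fun z : ℝ => ENNReal.ofReal (z ^ (-s))) z :=
    Measurable.indicator (by fun_prop) measurableSet_Ioc
  calc ∫⁻ x in I, ∫⁻ y in Iᶜ, ker s (x - y)
      ≤ ∫⁻ x in Icc α β, ∫⁻ y in Iᶜ, ker s (x - y) := lintegral_mono_set h2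
    _ = ∫⁻ x in Ioo α β, ∫⁻ y in Iᶜ, ker s (x - y) :=
        (setLIntegral_congr Ioo_ae_eq_Icc).symm
    _ ≤ ∫⁻ x in Ioo α β, 2 * ENNReal.ofReal (1 / s) *
          ((Ioc 0 (β - α)).indicator (fun z : ℝ => ENNReal.ofReal (z ^ (-s))) (x - α)
          + (Ioc 0 (β - α)).indicator (fun z : ℝ => ENNReal.ofReal (z ^ (-s))) (β - x)) := by
        refine setLIntegral_mono' measurableSet_Ioo fun x hx => ?_
        have hd : 0 < min (x - α) (β - x) := lt_min (by linarith [hx.1]) (by linarith [hx.2])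
        rw [indicator_of_mem (by constructor <;> linarith [hx.1, hx.2]),
          indicator_of_mem (by constructor <;> linarith [hx.1, hx.2])]
        refine (lintegral_mono_set fun y hy => ?_).trans ((tail_two hs hd x).trans ?_)
        · have hy' : y ∉ Ioo α β := fun h => hy (h1 h)
          rw [mem_ofPred_eq]
          by_cases hya : y ≤ α
          · exact (min_le_left _ _).trans ((by linarith : x - α ≤ x - y).trans (le_abs_self _))
          · have : β ≤ y := by
              by_contra hc
              exact hy' ⟨not_le.1 hya, not_le.1 hc⟩
            exact (min_le_right _ _).trans
              ((by linarith : β - x ≤ -(x - y)).trans (neg_le_abs _))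
        · rw [mul_assoc]
          gcongr
          rw [div_eq_mul_one_div, mul_comm, ENNReal.ofReal_mul (by positivity)]
          gcongr
          rcases min_choice (x - α) (β - x) with h | h <;> rw [h]
          · exact le_self_add
          · exact le_add_self
    _ ≤ ∫⁻ x, 2 * ENNReal.ofReal (1 / s) *
          ((Ioc 0 (β - α)).indicator (fun z : ℝ => ENNReal.ofReal (z ^ (-s))) (x - α)
          + (Ioc 0 (β - α)).indicator (fun z : ℝ => ENNReal.ofReal (z ^ (-s))) (β - x)) :=
        setLIntegral_le_lintegral _ _
    _ = ENNReal.ofReal (4 / (s * (1 - s)) * (β - α) ^ (1 - s)) := by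
        rw [lintegral_const_mul _ (by fun_prop), lintegral_add_left (by fun_prop),
          lintegral_sub_right_eq_self (fun z => (Ioc 0 (β - α)).indicator
            (fun z : ℝ => ENNReal.ofReal (z ^ (-s))) z),
          lintegral_sub_left_eq_self (fun z => (Ioc 0 (β - α)).indicator
            (fun z : ℝ => ENNReal.ofReal (z ^ (-s))) z),
          lintegral_indicator measurableSet_Ioc, near hs1 (by linarith), ← two_mul,
          show (2 : ENNReal) = ENNReal.ofReal 2 by simp, ← ENNReal.ofReal_mul (by norm_num),
          ← ENNReal.ofReal_mul (by norm_num), ← ENNReal.ofReal_mul (by positivity)]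
        congr 1
        have : 1 - s ≠ 0 := by linarith
        field_simp
        ring

/-- The indicator of the event that exactly one of `x`, `y` lies in `I`, i.e. `|1_I x - 1_I y|`. -/
noncomputable def sep (I : Set ℝ) (x y : ℝ) : ENNReal :=
  I.indicator 1 x * Iᶜ.indicator 1 y + Iᶜ.indicator 1 x * I.indicator 1 y

/-- The Gagliardo energy of the indicator of an interval. The two ways in which `I` can separate
`x` from `y` contribute equally, by Tonelli and the symmetry of the kernel. -/
lemma two_sides {s α β : ℝ} (hs : 0 < s) (hs1 : s < 1) (hab : α < β) {I : Set ℝ}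
    (hI : MeasurableSet I) (h1 : Ioo α β ⊆ I) (h2 : I ⊆ Icc α β) :
    ∫⁻ x, ∫⁻ y, sep I x y * ker s (x - y)
      ≤ ENNReal.ofReal (8 / (s * (1 - s)) * (β - α) ^ (1 - s)) := by
  have hk := measurable_ker s
  have hi1 : Measurable (I.indicator (1 : ℝ → ENNReal)) := measurable_one.indicator hI
  have hi2 : Measurable (Iᶜ.indicator (1 : ℝ → ENNReal)) := measurable_one.indicator hI.compl
  have key : ∫⁻ x, ∫⁻ y, I.indicator 1 x * Iᶜ.indicator 1 y * ker s (x - y)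
      = ∫⁻ x in I, ∫⁻ y in Iᶜ, ker s (x - y) := by
    rw [← lintegral_indicator hI]
    refine lintegral_congr fun x => ?_
    by_cases hx : x ∈ I
    · simp only [indicator_of_mem hx, Pi.one_apply, one_mul]
      rw [← lintegral_indicator hI.compl]
      refine lintegral_congr fun y => ?_
      by_cases hy : y ∈ Iᶜ
      · simp only [indicator_of_mem hy, Pi.one_apply, one_mul]
      · simp only [indicator_of_notMem hy, zero_mul]
    · simp only [indicator_of_notMem hx, zero_mul, lintegral_zero]
  have swap : ∫⁻ x, ∫⁻ y, Iᶜ.indicator 1 x * I.indicator 1 y * ker s (x - y)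
      = ∫⁻ x, ∫⁻ y, I.indicator 1 x * Iᶜ.indicator 1 y * ker s (x - y) := by
    rw [lintegral_lintegral_swap (by fun_prop)]
    refine lintegral_congr fun x => lintegral_congr fun y => ?_
    rw [mul_comm (Iᶜ.indicator 1 y)]
    simp only [ker, abs_sub_comm]
  have hsum : ∫⁻ x, ∫⁻ y, sep I x y * ker s (x - y)
      = 2 * ∫⁻ x in I, ∫⁻ y in Iᶜ, ker s (x - y) := by
    have hsplit : ∫⁻ x, ∫⁻ y, sep I x y * ker s (x - y)
        = (∫⁻ x, ∫⁻ y, I.indicator 1 x * Iᶜ.indicator 1 y * ker s (x - y))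
          + ∫⁻ x, ∫⁻ y, Iᶜ.indicator 1 x * I.indicator 1 y * ker s (x - y) := by
      simp only [sep, add_mul]
      rw [← lintegral_add_left]
      · refine lintegral_congr fun x => ?_
        rw [lintegral_add_left (by fun_prop)]
      · exact Measurable.lintegral_prod_right (by fun_prop)
    rw [hsplit, swap, key, two_mul]
  rw [hsum]
  refine (mul_le_mul_right (one_side hs hs1 hab h1 h2) 2).trans (le_of_eq ?_)
  rw [show (2 : ENNReal) = ENNReal.ofReal 2 by simp, ← ENNReal.ofReal_mul (by norm_num)]
  congr 1
  ring

lemma enorm_indicator_sub (I : Set ℝ) {A : ℝ} (hA : 0 ≤ A) (x y : ℝ) :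
    ‖I.indicator (fun _ => A) x - I.indicator (fun _ => A) y‖ₑ = ENNReal.ofReal A * sep I x y := by
  by_cases hx : x ∈ I <;> by_cases hy : y ∈ I <;> simp [sep, hx, hy, Real.enorm_eq_ofReal hA]

lemma sep_rpow (I : Set ℝ) {p : ℝ} (hp : 0 < p) (x y : ℝ) : sep I x y ^ p = sep I x y := by
  by_cases hx : x ∈ I <;> by_cases hy : y ∈ I <;> simp [sep, hx, hy, hp]

lemma measurable_sep {I : Set ℝ} (hI : MeasurableSet I) :
    Measurable (fun q : ℝ × ℝ => sep I q.1 q.2) := by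
  have hi1 : Measurable (I.indicator (1 : ℝ → ENNReal)) := measurable_one.indicator hI
  have hi2 : Measurable (Iᶜ.indicator (1 : ℝ → ENNReal)) := measurable_one.indicator hI.compl
  unfold sep
  fun_prop

lemma enorm_integrand_le {p s A B : ℝ} (hp : 1 ≤ p) (hA : 0 ≤ A) (hB : 0 ≤ B) {I J : Set ℝ}
    {v : ℝ → ℝ} (hv : ∀ x, v x = I.indicator (fun _ => A) x - J.indicator (fun _ => B) x)
    (x y : ℝ) :
    ‖|v x - v y| ^ p / |x - y| ^ (1 + s)‖ₑ ≤
      ENNReal.ofReal (2 ^ (p - 1) * A ^ p) * (sep I x y * ker s (x - y)) +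
      ENNReal.ofReal (2 ^ (p - 1) * B ^ p) * (sep J x y * ker s (x - y)) := by
  have hp0 : 0 < p := by linarith
  have e1 : ‖v x - v y‖ₑ ≤ ENNReal.ofReal A * sep I x y + ENNReal.ofReal B * sep J x y := by
    rw [← enorm_indicator_sub I hA, ← enorm_indicator_sub J hB, hv, hv, sub_sub_sub_comm]
    exact enorm_sub_le
  have e2 : ‖|v x - v y| ^ p / |x - y| ^ (1 + s)‖ₑ = ‖v x - v y‖ₑ ^ p * ker s (x - y) := by
    rw [Real.enorm_eq_ofReal (by positivity), div_eq_mul_one_div,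
      ENNReal.ofReal_mul (by positivity), ← ENNReal.ofReal_rpow_of_nonneg (abs_nonneg _) hp0.le,
      ← Real.enorm_eq_ofReal_abs, ker]
  have e3 : ∀ {D : ℝ}, 0 ≤ D → ENNReal.ofReal (2 ^ (p - 1) * D ^ p)
      = 2 ^ (p - 1) * ENNReal.ofReal D ^ p := fun hD => by
    rw [ENNReal.ofReal_mul (by positivity), ENNReal.ofReal_rpow_of_nonneg hD hp0.le,
      ← ENNReal.ofReal_rpow_of_pos (by norm_num)]
    simp
  rw [e2, e3 hA, e3 hB]
  calc ‖v x - v y‖ₑ ^ p * ker s (x - y)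
      ≤ (2 ^ (p - 1) * ((ENNReal.ofReal A * sep I x y) ^ p + (ENNReal.ofReal B * sep J x y) ^ p))
          * ker s (x - y) := by
        gcongr
        exact (ENNReal.rpow_le_rpow e1 hp0.le).trans (ENNReal.rpow_add_le_mul_rpow_add_rpow _ _ hp)
    _ = _ := by
        rw [ENNReal.mul_rpow_of_nonneg _ _ hp0.le, ENNReal.mul_rpow_of_nonneg _ _ hp0.le,
          sep_rpow I hp0, sep_rpow J hp0]
        ring

lemma two_step {p s A B m : ℝ} (hp : 1 ≤ p) (hs : 0 < s) (hs1 : s < 1) (hA : 0 ≤ A) (hB : 0 ≤ B)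
    (hm0 : 0 < m) (hm1 : m < 1) {v : ℝ → ℝ}
    (hv : ∀ x, v x = (Icc 0 m).indicator (fun _ => A) x - (Ioc m 1).indicator (fun _ => B) x) :
    ∫ x : ℝ, ∫ y : ℝ, |v x - v y| ^ p / |x - y| ^ (1 + s)
      ≤ 2 ^ (p - 1) * (8 / (s * (1 - s))) * (A ^ p * m ^ (1 - s) + B ^ p * (1 - m) ^ (1 - s)) := by
  have h1s : 0 < 1 - s := by linarith
  have h1m : 0 < 1 - m := by linarith
  have hk := measurable_ker s
  have hI := two_sides (I := Icc 0 m) hs hs1 hm0 measurableSet_Icc Ioo_subset_Icc_self Subset.rfl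
  have hJ := two_sides (I := Ioc m 1) hs hs1 hm1 measurableSet_Ioc Ioo_subset_Ioc_self
    Ioc_subset_Icc_self
  rw [sub_zero] at hI
  have mI := measurable_sep (I := Icc 0 m) measurableSet_Icc
  have mJ := measurable_sep (I := Ioc m 1) measurableSet_Ioc
  have fI : Measurable (fun q : ℝ × ℝ => sep (Icc 0 m) q.1 q.2 * ker s (q.1 - q.2)) := by fun_prop
  have fJ : Measurable (fun q : ℝ × ℝ => sep (Ioc m 1) q.1 q.2 * ker s (q.1 - q.2)) := by fun_prop
  have gI : ∀ x, Measurable (fun y => sep (Icc 0 m) x y * ker s (x - y)) :=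
    fun x => fI.comp measurable_prodMk_left
  have gJ : ∀ x, Measurable (fun y => sep (Ioc m 1) x y * ker s (x - y)) :=
    fun x => fJ.comp measurable_prodMk_left
  refine (le_abs_self _).trans ?_
  rw [← Real.norm_eq_abs, ← ENNReal.ofReal_le_ofReal_iff (by positivity), ofReal_norm]
  calc ‖∫ x : ℝ, ∫ y : ℝ, |v x - v y| ^ p / |x - y| ^ (1 + s)‖ₑ
      ≤ ∫⁻ x : ℝ, ∫⁻ y : ℝ, ‖|v x - v y| ^ p / |x - y| ^ (1 + s)‖ₑ :=
        (enorm_integral_le_lintegral_enorm _).trans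
          (lintegral_mono fun x => enorm_integral_le_lintegral_enorm _)
    _ ≤ ∫⁻ x : ℝ, ∫⁻ y : ℝ,
          (ENNReal.ofReal (2 ^ (p - 1) * A ^ p) * (sep (Icc 0 m) x y * ker s (x - y)) +
          ENNReal.ofReal (2 ^ (p - 1) * B ^ p) * (sep (Ioc m 1) x y * ker s (x - y))) :=
        lintegral_mono fun x => lintegral_mono fun y => enorm_integrand_le hp hA hB hv x y
    _ = ENNReal.ofReal (2 ^ (p - 1) * A ^ p) * (∫⁻ x, ∫⁻ y, sep (Icc 0 m) x y * ker s (x - y)) +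
        ENNReal.ofReal (2 ^ (p - 1) * B ^ p) *
          (∫⁻ x, ∫⁻ y, sep (Ioc m 1) x y * ker s (x - y)) := by
        rw [← lintegral_const_mul _ fI.lintegral_prod_right, ← lintegral_const_mul _
          fJ.lintegral_prod_right, ← lintegral_add_left (fI.lintegral_prod_right.const_mul _)]
        refine lintegral_congr fun x => ?_
        rw [lintegral_add_left ((gI x).const_mul _), lintegral_const_mul _ (gI x),
          lintegral_const_mul _ (gJ x)]
    _ ≤ _ := by
        refine (add_le_add (mul_le_mul_right hI _) (mul_le_mul_right hJ _)).trans (le_of_eq ?_)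
        rw [← ENNReal.ofReal_mul (by positivity), ← ENNReal.ofReal_mul (by positivity),
          ← ENNReal.ofReal_add (by positivity) (by positivity)]
        congr 1
        ring

/-- A step whose height is at most `1 / t` and whose area is at most `1` has energy controlled by
the height alone, since `A^p m^{1-s} = A^{p-(1-s)} (A m)^{1-s}` and `p - (1 - s) ≥ 0`. -/
lemma height_length {p s A m t : ℝ} (hp : 1 ≤ p) (hs : 0 < s) (hs1 : s < 1) (ht : 0 < t)
    (hA : 0 ≤ A) (hm : 0 ≤ m) (hAt : A ≤ 1 / t) (hAm : A * m ≤ 1) :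
    A ^ p * m ^ (1 - s) ≤ (t ^ (-1 + (1 - s) / p)) ^ p := by
  have hp0 : 0 < p := by linarith
  have e : (t ^ (-1 + (1 - s) / p)) ^ p = (1 / t) ^ (p - (1 - s)) := by
    rw [← Real.rpow_mul ht.le, one_div, Real.inv_rpow ht.le, ← Real.rpow_neg ht.le]
    congr 1
    field_simp
    ring
  have e2 : A ^ p = A ^ (p - (1 - s)) * A ^ (1 - s) := by
    rw [← Real.rpow_add_of_nonneg hA (by linarith) (by linarith)]
    congr 1
    ring
  rw [e, e2, mul_assoc, ← Real.mul_rpow hA hm]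
  calc A ^ (p - (1 - s)) * (A * m) ^ (1 - s) ≤ A ^ (p - (1 - s)) * 1 := by
        gcongr
        exact Real.rpow_le_one (by positivity) hAm (by linarith)
    _ ≤ (1 / t) ^ (p - (1 - s)) := by
        rw [mul_one]
        exact Real.rpow_le_rpow hA hAt (by linarith)

/-- Gagliardo seminorm bound for the spatial derivative of the vector field generating the
affine homotopy between the identity and the piecewise linear map `ψ_{λ+1,δ}`: with
`m = (1−δ)(1+λt)/(λ+1)`, `a = λ/(1+λt)`, `b = (1−δ)/((1−t)(1−δ)+δ(1+1/λ))`, and `v = a` on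
`[0,m]`, `v = −b` on `(m,1]`, `v = 0` elsewhere, one has
`[v]_{Ẇ^{σ,p}} ≤ C(σ,p)·(t^{−1+(1−σp)/p} + (1−t)^{−1+(1−σp)/p})`. -/
theorem stmt12 (p σ : ℝ) (hp : 1 ≤ p) (hσ : σ ∈ Ioo (0:ℝ) 1) (hσp : σ * p < 1) :
    ∃ C : ℝ, ∀ lam : ℝ, 1 ≤ lam → ∀ δ ∈ Ioo (0:ℝ) 1, ∀ t ∈ Ioo (0:ℝ) 1,
      ∀ v : ℝ → ℝ,
        (∀ y ∈ Icc (0:ℝ) ((1 - δ) * (1 + lam * t) / (lam + 1)),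
          v y = lam / (1 + lam * t)) →
        (∀ y ∈ Ioc ((1 - δ) * (1 + lam * t) / (lam + 1)) (1:ℝ),
          v y = -((1 - δ) / ((1 - t) * (1 - δ) + δ * (1 + 1 / lam)))) →
        (∀ y : ℝ, y ∉ Icc (0:ℝ) 1 → v y = 0) →
        (∫ x : ℝ, ∫ y : ℝ, |v x - v y| ^ p / |x - y| ^ (1 + σ * p)) ^ (1 / p)
          ≤ C * (t ^ (-1 + (1 - σ * p) / p) + (1 - t) ^ (-1 + (1 - σ * p) / p)) := by
  have hp0 : 0 < p := by linarith
  have hs : 0 < σ * p := mul_pos hσ.1 hp0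
  generalize σ * p = s at hs hσp
  have h1s : 0 < 1 - s := by linarith
  refine ⟨(2 ^ (p - 1) * (8 / (s * (1 - s)))) ^ (1 / p), ?_⟩
  rintro lam hl δ ⟨hδ0, hδ1⟩ t ⟨ht0, ht1⟩ v hv1 hv2 hv3
  have hl0 : 0 < lam := by linarith
  have hlt : 0 < lam * t := by positivity
  have hδ' : 0 < 1 - δ := by linarith
  have ht' : 0 < 1 - t := by linarith
  set m := (1 - δ) * (1 + lam * t) / (lam + 1) with hm
  set A := lam / (1 + lam * t) with hA
  set D := (1 - t) * (1 - δ) + δ * (1 + 1 / lam) with hD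
  set B := (1 - δ) / D with hB
  have hD0 : 0 < D := by positivity
  have hm0 : 0 < m := by positivity
  have hA0 : 0 ≤ A := by positivity
  have hB0 : 0 ≤ B := by positivity
  have hcomp : 1 - m = lam * D / (lam + 1) := by
    rw [hm, hD]; field_simp; ring
  have hm1 : m < 1 := by
    have : 0 < 1 - m := by rw [hcomp]; positivity
    linarith
  have hAt : A ≤ 1 / t := by
    rw [hA, div_le_div_iff₀ (by positivity) ht0]; linarith
  have hBt : B ≤ 1 / (1 - t) := by
    rw [hB, div_le_div_iff₀ hD0 ht', hD]
    have : 0 < δ * (1 + 1 / lam) := by positivity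
    linarith
  -- Both products equal `(1 - δ) * lam / (lam + 1)`.
  have hAm : A * m ≤ 1 := by
    have : A * m = (1 - δ) * lam / (lam + 1) := by rw [hA, hm]; field_simp
    rw [this, div_le_one (by positivity)]; nlinarith
  have hBm : B * (1 - m) ≤ 1 := by
    have : B * (1 - m) = (1 - δ) * lam / (lam + 1) := by rw [hcomp, hB]; field_simp
    rw [this, div_le_one (by positivity)]; nlinarith
  have hv : ∀ x, v x = (Icc 0 m).indicator (fun _ => A) x - (Ioc m 1).indicator (fun _ => B) x := by
    intro x
    by_cases h1 : x ∈ Icc 0 m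
    · have h2 : x ∉ Ioc m 1 := fun h => absurd h.1 (not_lt.2 h1.2)
      simp [h1, h2, hv1 x h1]
    · by_cases h2 : x ∈ Ioc m 1
      · simp [h1, h2, hv2 x h2]
      · have h3 : x ∉ Icc (0 : ℝ) 1 := fun h => by
          by_cases hx : x ≤ m
          · exact h1 ⟨h.1, hx⟩
          · exact h2 ⟨not_le.1 hx, h.2⟩
        simp [h1, h2, hv3 x h3]
  have hint := two_step hp hs hσp hA0 hB0 hm0 hm1 hv
  have hT := height_length hp hs hσp ht0 hA0 hm0.le hAt hAm
  have hT' := height_length hp hs hσp ht' hB0 (by linarith) hBt hBm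
  set T := t ^ (-1 + (1 - s) / p) with hTdef
  set T' := (1 - t) ^ (-1 + (1 - s) / p) with hTdef'
  have hT0 : 0 ≤ T := by positivity
  have hT0' : 0 ≤ T' := by positivity
  have hI0 : 0 ≤ ∫ x : ℝ, ∫ y : ℝ, |v x - v y| ^ p / |x - y| ^ (1 + s) :=
    integral_nonneg fun x => integral_nonneg fun y => by positivity
  calc _ ≤ (2 ^ (p - 1) * (8 / (s * (1 - s))) * (T + T') ^ p) ^ (1 / p) := by
        refine Real.rpow_le_rpow hI0 (hint.trans ?_) (by positivity)
        gcongr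
        exact (add_le_add hT hT').trans (Real.add_rpow_le_rpow_add hT0 hT0' hp)
    _ = _ := by
        rw [Real.mul_rpow (by positivity) (by positivity), ← Real.rpow_mul (by positivity),
          mul_one_div_cancel hp0.ne', Real.rpow_one]
end

section
/- Let n ≥ 2 and k ≥ 0 be integers and p ∈ [1,∞). There exists a constant C = C(n,k,p) such that for every smooth function f : ℝ → ℝ whose support is a compact subset of the open interval (0,1), the radial function F : ℝⁿ → ℝ defined by F(x) = f(|x|) is smooth with support in the open unit ball of ℝⁿ, and Σ_{j=0}^{k} ∫_{ℝⁿ} ‖D^j F(x)‖^p dx ≤ C · Σ_{j=0}^{k} ∫₀¹ |f^{(j)}(r)|^p dr. -/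
open MeasureTheory Set
open scoped ContDiff

/-!
Write `F x = f ‖x‖` and `r = ‖x‖`. Since `f` vanishes near `0`, `F` is smooth. Two facts give the
integral estimate.

* Away from the origin, `‖D^j F x‖ ≤ K * ∑_{i ≤ j} r ^ (i - j) * |f^{(i)}(r)|`
  (`exists_pointwise_bound`). By dilation it suffices to consider the unit sphere, where the
  derivatives of the norm are bounded by compactness, and to apply the Faà di Bruno bound to
  `s ↦ f (r * s)` composed with the norm.
* For `i < j`, integrating `f^{(j)}` up from `0` repeatedly gives
  `|f^{(i)}(r)| ≤ r ^ (j - i - 1) * ∫₀^r |f^{(j)}|`, and Jensen's inequality turns this into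
  `(r ^ (i - j) * |f^{(i)}(r)|) ^ p ≤ r⁻¹ * ∫₀¹ |f^{(j)}| ^ p` (`lower_order_bound`).

In polar coordinates the volume element carries the weight `r ^ (n - 1)`. As `n ≥ 2`, it absorbs the
singularity `r⁻¹`; this is why no Hardy inequality is needed and why `p = 1` is not exceptional.
The `j`-th term on the left is thus bounded by the `j`-th term on the right alone
(`exists_integral_bound`).
-/

lemma tsupport_radial_subset {n : ℕ} (f : ℝ → ℝ) :
    tsupport (fun x : EuclideanSpace ℝ (Fin n) => f ‖x‖) ⊆ norm ⁻¹' tsupport f := by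
  refine closure_minimal ?_ ((isClosed_tsupport f).preimage continuous_norm)
  intro x hx
  exact subset_tsupport f hx

lemma contDiff_radial {n : ℕ} {f : ℝ → ℝ} (hf : ContDiff ℝ ∞ f)
    (hs : tsupport f ⊆ Ioo (0:ℝ) 1) :
    ContDiff ℝ ∞ (fun x : EuclideanSpace ℝ (Fin n) => f ‖x‖) := by
  rw [contDiff_iff_contDiffAt]
  intro x
  by_cases hx : x = 0
  · have h0 : x ∉ tsupport (fun x : EuclideanSpace ℝ (Fin n) => f ‖x‖) := by
      intro h
      have := hs (tsupport_radial_subset f h)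
      simp [hx] at this
    exact contDiffAt_const.congr_of_eventuallyEq (notMem_tsupport_iff_eventuallyEq.mp h0)
  · exact hf.contDiffAt.comp x (contDiffAt_norm ℝ hx)

/-- The derivatives of the norm up to order `j` are bounded on the unit sphere. The bound is put in
the form `M ^ i` required by `norm_iteratedFDerivWithin_comp_le`. -/
lemma exists_bound_iteratedFDeriv_norm (n j : ℕ) : ∃ M : ℝ, 1 ≤ M ∧
    ∀ i, 1 ≤ i → i ≤ j → ∀ y : EuclideanSpace ℝ (Fin n), ‖y‖ = 1 →
      ‖iteratedFDerivWithin ℝ i (norm : EuclideanSpace ℝ (Fin n) → ℝ) {0}ᶜ y‖ ≤ M ^ i := by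
  have hN : ContDiffOn ℝ ∞ (norm : EuclideanSpace ℝ (Fin n) → ℝ) {0}ᶜ :=
    fun y hy => (contDiffAt_norm ℝ hy).contDiffWithinAt
  have hU : UniqueDiffOn ℝ ({0}ᶜ : Set (EuclideanSpace ℝ (Fin n))) :=
    isOpen_compl_singleton.uniqueDiffOn
  have hb : ∀ i : ℕ, ∃ M : ℝ, ∀ y ∈ Metric.sphere (0 : EuclideanSpace ℝ (Fin n)) 1,
      ‖iteratedFDerivWithin ℝ i (norm : EuclideanSpace ℝ (Fin n) → ℝ) {0}ᶜ y‖ ≤ M := by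
    intro i
    refine (isCompact_sphere _ _).exists_bound_of_continuousOn ?_
    refine (hN.continuousOn_iteratedFDerivWithin (mod_cast le_top) hU).mono ?_
    rintro y hy rfl
    simp at hy
  choose M hM using hb
  refine ⟨1 + ∑ i ∈ Finset.range (j + 1), |M i|, ?_, fun i hi hij y hy => ?_⟩
  · have : 0 ≤ ∑ i ∈ Finset.range (j + 1), |M i| := Finset.sum_nonneg fun _ _ => abs_nonneg _
    linarith
  · have h0 : 0 ≤ ∑ i ∈ Finset.range (j + 1), |M i| := Finset.sum_nonneg fun _ _ => abs_nonneg _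
    have h1 : |M i| ≤ ∑ i ∈ Finset.range (j + 1), |M i| :=
      Finset.single_le_sum (f := fun i => |M i|) (fun _ _ => abs_nonneg _)
        (Finset.mem_range.2 (by omega))
    have h2 := hM i y (by simpa using hy)
    calc _ ≤ 1 + ∑ i ∈ Finset.range (j + 1), |M i| := by linarith [le_abs_self (M i)]
      _ ≤ _ := le_self_pow₀ (by linarith) (by omega)

/-- Pointwise bound for the derivatives of a radial function away from the origin, with a constant
independent of `f`. -/
lemma exists_pointwise_bound (n j : ℕ) : ∃ K : ℝ, 0 ≤ K ∧ ∀ f : ℝ → ℝ, ContDiff ℝ ∞ f →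
    tsupport f ⊆ Ioo (0:ℝ) 1 → ∀ x : EuclideanSpace ℝ (Fin n), x ≠ 0 →
      ‖iteratedFDeriv ℝ j (fun x : EuclideanSpace ℝ (Fin n) => f ‖x‖) x‖ ≤
        K * ∑ i ∈ Finset.range (j + 1), ‖x‖ ^ i / ‖x‖ ^ j * |iteratedDeriv i f ‖x‖| := by
  obtain ⟨M, hM1, hM⟩ := exists_bound_iteratedFDeriv_norm n j
  refine ⟨j.factorial * M ^ j, by positivity, fun f hf hs x hx => ?_⟩
  set r := ‖x‖ with hr
  have hr0 : 0 < r := norm_pos_iff.2 hx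
  -- Rescale `x` to the point `y` of the unit sphere; then `F (r • z) = f (r * ‖z‖)`.
  set y := r⁻¹ • x with hy
  have hxy : r • y = x := by rw [hy, smul_inv_smul₀ hr0.ne']
  have hy1 : ‖y‖ = 1 := by rw [hy, norm_smul, norm_inv, norm_norm, ← hr, inv_mul_cancel₀ hr0.ne']
  have hy0 : y ≠ 0 := by rintro h; simp [h] at hy1
  have hF := contDiff_radial (n := n) hf hs
  have hG : ContDiff ℝ ∞ (fun s : ℝ => f (r * s)) := hf.comp (contDiff_const.mul contDiff_id)
  have e1 : iteratedFDeriv ℝ j (fun z : EuclideanSpace ℝ (Fin n) => f ‖r • z‖) y =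
      r ^ j • iteratedFDeriv ℝ j (fun x : EuclideanSpace ℝ (Fin n) => f ‖x‖) x := by
    have := congrFun (iteratedFDeriv_comp_const_smul (i := j) r (hF.of_le (mod_cast le_top))) y
    simpa [hxy] using this
  have e2 : (fun z : EuclideanSpace ℝ (Fin n) => f ‖r • z‖) =
      (fun s : ℝ => f (r * s)) ∘ norm := by
    ext z
    simp [norm_smul, abs_of_pos hr0]
  have hU : UniqueDiffOn ℝ ({0}ᶜ : Set (EuclideanSpace ℝ (Fin n))) :=
    isOpen_compl_singleton.uniqueDiffOn
  have key := norm_iteratedFDerivWithin_comp_le (n := j) (N := ∞) (x := y) (s := {0}ᶜ)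
    (f := (norm : EuclideanSpace ℝ (Fin n) → ℝ))
    (C := ∑ i ∈ Finset.range (j + 1), r ^ i * |iteratedDeriv i f r|) (D := M)
    hG.contDiffOn (fun y hy => (contDiffAt_norm ℝ hy).contDiffWithinAt) (mod_cast le_top)
    uniqueDiffOn_univ hU (mapsTo_univ _ _) hy0
    (by
      intro i hi
      rw [iteratedFDerivWithin_univ, norm_iteratedFDeriv_eq_norm_iteratedDeriv,
        iteratedDeriv_comp_const_mul (hf.of_le (mod_cast le_top)), hy1]
      simp only [mul_one]
      rw [norm_mul, norm_pow, Real.norm_of_nonneg hr0.le, Real.norm_eq_abs]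
      exact Finset.single_le_sum (f := fun i => r ^ i * |iteratedDeriv i f r|)
        (fun _ _ => by positivity) (Finset.mem_range.2 (by omega)))
    (fun i h1 h2 => hM i h1 h2 y hy1)
  rw [iteratedFDerivWithin_of_isOpen j isOpen_compl_singleton hy0, ← e2, e1, norm_smul, norm_pow,
    Real.norm_of_nonneg hr0.le] at key
  have e3 : ∑ i ∈ Finset.range (j + 1), r ^ i / r ^ j * |iteratedDeriv i f r| =
      (∑ i ∈ Finset.range (j + 1), r ^ i * |iteratedDeriv i f r|) / r ^ j := by
    rw [Finset.sum_div]
    exact Finset.sum_congr rfl fun i _ => by ring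
  rw [e3, ← mul_div_assoc, le_div_iff₀ (by positivity)]
  linarith

lemma tsupport_iteratedDeriv_subset (f : ℝ → ℝ) (i : ℕ) :
    tsupport (iteratedDeriv i f) ⊆ tsupport f := by
  induction i with
  | zero => simp
  | succ i ih => rw [iteratedDeriv_succ]; exact tsupport_deriv_subset.trans ih

/-- Iterated integration from `0`, where `f` and all its derivatives vanish. -/
lemma abs_le_integral_iteratedDeriv (m : ℕ) : ∀ f : ℝ → ℝ, ContDiff ℝ ∞ f →
    tsupport f ⊆ Ioo (0:ℝ) 1 → ∀ r : ℝ, 0 ≤ r →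
      |f r| ≤ r ^ m * ∫ t in (0:ℝ)..r, |iteratedDeriv (m + 1) f t| := by
  have base : ∀ f : ℝ → ℝ, ContDiff ℝ ∞ f → tsupport f ⊆ Ioo (0:ℝ) 1 → ∀ r : ℝ, 0 ≤ r →
      |f r| ≤ ∫ t in (0:ℝ)..r, |deriv f t| := by
    intro f hf hs r hr
    have hc : Continuous (deriv f) := hf.continuous_deriv (by simp)
    have h0 : f 0 = 0 := image_eq_zero_of_notMem_tsupport fun h => by simpa using hs h
    have h1 : ∫ t in (0:ℝ)..r, deriv f t = f r - f 0 :=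
      intervalIntegral.integral_deriv_eq_sub
        (fun x _ => (hf.differentiable (by simp)).differentiableAt) (hc.intervalIntegrable _ _)
    rw [h0, sub_zero] at h1
    rw [← h1]
    exact intervalIntegral.abs_integral_le_integral_abs hr
  induction m with
  | zero =>
    intro f hf hs r hr
    simpa [iteratedDeriv_one] using base f hf hs r hr
  | succ m ih =>
    intro f hf hs r hr
    have hf' : ContDiff ℝ ∞ (deriv f) := by
      simpa using hf.iterate_deriv 1
    have hc : Continuous (fun t => |iteratedDeriv (m + 1 + 1) f t|) :=
      (hf.continuous_iteratedDeriv _ (mod_cast le_top)).abs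
    have ih' := ih (deriv f) hf' (tsupport_deriv_subset.trans hs)
    simp only [← iteratedDeriv_succ'] at ih'
    set I := ∫ t in (0:ℝ)..r, |iteratedDeriv (m + 1 + 1) f t|
    calc |f r| ≤ ∫ t in (0:ℝ)..r, |deriv f t| := base f hf hs r hr
      _ ≤ ∫ t in (0:ℝ)..r, r ^ m * I := by
        refine intervalIntegral.integral_mono_on hr (hf'.continuous.abs.intervalIntegrable _ _)
          (by simp) fun t ht => (ih' t ht.1).trans ?_
        have : ∫ s in (0:ℝ)..t, |iteratedDeriv (m + 1 + 1) f s| ≤ I :=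
          intervalIntegral.integral_mono_interval le_rfl ht.1 ht.2
            (Filter.Eventually.of_forall fun _ => abs_nonneg _) (hc.intervalIntegrable _ _)
        have h0 : 0 ≤ ∫ s in (0:ℝ)..t, |iteratedDeriv (m + 1 + 1) f s| :=
          intervalIntegral.integral_nonneg ht.1 fun _ _ => abs_nonneg _
        exact mul_le_mul (pow_le_pow_left₀ ht.1 ht.2 m) this h0 (by positivity)
      _ = r ^ (m + 1) * I := by simp; ring

/-- Jensen's inequality for `t ↦ t ^ p` on the interval `(0, r]`. -/
lemma rpow_integral_abs_le {h : ℝ → ℝ} (hc : Continuous h) {p : ℝ} (hp : 1 ≤ p) {r : ℝ}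
    (hr : 0 < r) :
    (∫ t in (0:ℝ)..r, |h t|) ^ p ≤ r ^ (p - 1) * ∫ t in (0:ℝ)..r, |h t| ^ p := by
  have hcp : Continuous fun t => |h t| ^ p := hc.abs.rpow_const fun _ => Or.inr (by linarith)
  have J := (convexOn_rpow hp).map_set_average_le (μ := volume) (t := Ioc 0 r)
    (f := fun t => |h t|) (Real.continuous_rpow_const (by linarith)).continuousOn isClosed_Ici
    (by simp [hr]) (by simp) (Filter.Eventually.of_forall fun t => mem_Ici.2 (abs_nonneg _))
    ((intervalIntegrable_iff_integrableOn_Ioc_of_le hr.le).1 (hc.abs.intervalIntegrable _ _))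
    ((intervalIntegrable_iff_integrableOn_Ioc_of_le hr.le).1 (hcp.intervalIntegrable _ _))
  simp only [setAverage_eq, ← intervalIntegral.integral_of_le hr.le, Real.volume_real_Ioc_of_le hr.le,
    sub_zero, smul_eq_mul] at J
  have hI : 0 ≤ ∫ t in (0:ℝ)..r, |h t| :=
    intervalIntegral.integral_nonneg hr.le fun _ _ => abs_nonneg _
  rw [Real.mul_rpow (by positivity) hI, Real.inv_rpow hr.le, inv_mul_le_iff₀ (by positivity)] at J
  rw [Real.rpow_sub hr, Real.rpow_one]
  calc _ ≤ _ := J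
    _ = _ := by ring

/-- The terms with `i < j` of the pointwise bound cost only a factor `r⁻¹`, whatever `p ≥ 1` is. -/
lemma lower_order_bound {f : ℝ → ℝ} (hf : ContDiff ℝ ∞ f) (hs : tsupport f ⊆ Ioo (0:ℝ) 1)
    {p : ℝ} (hp : 1 ≤ p) {i j : ℕ} (hij : i < j) {r : ℝ} (hr : r ∈ Ioo (0:ℝ) 1) :
    (r ^ i / r ^ j * |iteratedDeriv i f r|) ^ p ≤
      r⁻¹ * ∫ t in (0:ℝ)..1, |iteratedDeriv j f t| ^ p := by
  obtain ⟨m, rfl⟩ : ∃ m, j = m + 1 + i := ⟨j - i - 1, by omega⟩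
  have hr0 := hr.1
  have hc : Continuous (iteratedDeriv (m + 1 + i) f) :=
    hf.continuous_iteratedDeriv _ (mod_cast le_top)
  have hcp : Continuous fun t => |iteratedDeriv (m + 1 + i) f t| ^ p :=
    hc.abs.rpow_const fun _ => Or.inr (by linarith)
  have hf' : ContDiff ℝ ∞ (iteratedDeriv i f) := by
    rw [iteratedDeriv_eq_iterate]; exact hf.iterate_deriv i
  have e : iteratedDeriv (m + 1) (iteratedDeriv i f) = iteratedDeriv (m + 1 + i) f := by
    simp only [iteratedDeriv_eq_iterate, Function.iterate_add_apply]
  have h1 := abs_le_integral_iteratedDeriv m _ hf'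
    ((tsupport_iteratedDeriv_subset f i).trans hs) r hr0.le
  rw [e] at h1
  have hI : 0 ≤ ∫ t in (0:ℝ)..r, |iteratedDeriv (m + 1 + i) f t| :=
    intervalIntegral.integral_nonneg hr0.le fun _ _ => abs_nonneg _
  have h2 : r ^ i / r ^ (m + 1 + i) * |iteratedDeriv i f r| ≤
      r⁻¹ * ∫ t in (0:ℝ)..r, |iteratedDeriv (m + 1 + i) f t| := by
    calc _ ≤ r ^ i / r ^ (m + 1 + i) *
        (r ^ m * ∫ t in (0:ℝ)..r, |iteratedDeriv (m + 1 + i) f t|) := by gcongr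
      _ = _ := by field_simp; ring
  calc _ ≤ (r⁻¹ * ∫ t in (0:ℝ)..r, |iteratedDeriv (m + 1 + i) f t|) ^ p :=
        Real.rpow_le_rpow (by positivity) h2 (by linarith)
    _ = (r ^ p)⁻¹ * (∫ t in (0:ℝ)..r, |iteratedDeriv (m + 1 + i) f t|) ^ p := by
        rw [Real.mul_rpow (by positivity) hI, Real.inv_rpow hr0.le]
    _ ≤ (r ^ p)⁻¹ * (r ^ (p - 1) * ∫ t in (0:ℝ)..r, |iteratedDeriv (m + 1 + i) f t| ^ p) := by
        gcongr; exact rpow_integral_abs_le hc hp hr0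
    _ = r⁻¹ * ∫ t in (0:ℝ)..r, |iteratedDeriv (m + 1 + i) f t| ^ p := by
        rw [Real.rpow_sub hr0, Real.rpow_one]
        field_simp
    _ ≤ _ := by
        gcongr
        exact intervalIntegral.integral_mono_interval le_rfl hr0.le hr.2.le
          (Filter.Eventually.of_forall fun _ => by positivity) (hcp.intervalIntegrable _ _)

/-- The estimate for a single order `j`: the `L^p` norm of `D^j F` is controlled by that of
`f^{(j)}` alone. -/
lemma exists_integral_bound (n j : ℕ) (hn : 2 ≤ n) (p : ℝ) (hp : 1 ≤ p) :
    ∃ C : ℝ, 0 ≤ C ∧ ∀ f : ℝ → ℝ, ContDiff ℝ ∞ f → tsupport f ⊆ Ioo (0:ℝ) 1 →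
      ∫ x : EuclideanSpace ℝ (Fin n),
          ‖iteratedFDeriv ℝ j (fun x : EuclideanSpace ℝ (Fin n) => f ‖x‖) x‖ ^ p
        ≤ C * ∫ r in (0:ℝ)..1, |iteratedDeriv j f r| ^ p := by
  have : Nontrivial (EuclideanSpace ℝ (Fin n)) := by
    have : Nontrivial (Fin n) := Fin.nontrivial_iff_two_le.2 hn
    infer_instance
  obtain ⟨K, hK, hpt⟩ := exists_pointwise_bound n j
  set V := volume.real (Metric.ball (0 : EuclideanSpace ℝ (Fin n)) 1)
  set L : ℝ := K ^ p * ((j + 1 : ℕ) : ℝ) ^ (p - 1)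
  refine ⟨n * V * (L * (1 + j)), by positivity, fun f hf hs => ?_⟩
  set A := ∫ r in (0:ℝ)..1, |iteratedDeriv j f r| ^ p
  have hA : 0 ≤ A := intervalIntegral.integral_nonneg zero_le_one fun _ _ => by positivity
  have hcp : Continuous fun t => |iteratedDeriv j f t| ^ p :=
    (hf.continuous_iteratedDeriv j (mod_cast le_top)).abs.rpow_const
      fun _ => Or.inr (by linarith)
  -- `g` is the radial majorant of `‖D^j F‖ ^ p`, cut off to `(0, 1)`; `ψ` is `φ` times the polar
  -- weight `r ^ (n - 1)`, which is continuous up to `r = 0` because `n ≥ 2`.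
  set φ : ℝ → ℝ := fun r => L * (|iteratedDeriv j f r| ^ p + j * (r⁻¹ * A))
  set g : ℝ → ℝ := (Ioo 0 1).indicator φ
  set ψ : ℝ → ℝ := fun r => L * (r ^ (n - 1) * |iteratedDeriv j f r| ^ p + j * (r ^ (n - 2) * A))
  have hψ : Continuous ψ := by fun_prop
  have hgψ : ∀ r, r ^ (n - 1) • g r = (Ioo 0 1).indicator ψ r := by
    intro r
    by_cases h : r ∈ Ioo (0:ℝ) 1
    · have e : r ^ (n - 1) = r ^ (n - 2) * r := by rw [← pow_succ]; congr 1; omega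
      have := h.1.ne'
      simp only [g, φ, ψ, indicator_of_mem h, smul_eq_mul, e]
      field_simp
    · simp [g, indicator_of_notMem h]
  have hψint : IntegrableOn ψ (Ioo 0 1) :=
    (hψ.integrableOn_Icc).mono_set Ioo_subset_Icc_self
  have hgint : Integrable (fun x : EuclideanSpace ℝ (Fin n) => g ‖x‖) := by
    rw [integrable_fun_norm_addHaar volume]
    simp only [finrank_euclideanSpace_fin, hgψ]
    exact (hψint.integrable_indicator measurableSet_Ioo).integrableOn
  have hle : ∀ x : EuclideanSpace ℝ (Fin n),
      ‖iteratedFDeriv ℝ j (fun x : EuclideanSpace ℝ (Fin n) => f ‖x‖) x‖ ^ p ≤ g ‖x‖ := by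
    intro x
    have hφ0 : ∀ r ∈ Ioo (0:ℝ) 1, 0 ≤ φ r := fun r hr => by
      have := hr.1
      positivity
    by_cases hx : x ∈ tsupport (fun x : EuclideanSpace ℝ (Fin n) => f ‖x‖)
    · have hr : ‖x‖ ∈ Ioo (0:ℝ) 1 := hs (tsupport_radial_subset f hx)
      simp only [g, indicator_of_mem hr]
      have h0 : ∀ i ∈ Finset.range (j + 1),
          0 ≤ ‖x‖ ^ i / ‖x‖ ^ j * |iteratedDeriv i f ‖x‖| := fun i _ => by positivity
      calc _ ≤ (K * ∑ i ∈ Finset.range (j + 1),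
            ‖x‖ ^ i / ‖x‖ ^ j * |iteratedDeriv i f ‖x‖|) ^ p :=
            Real.rpow_le_rpow (norm_nonneg _) (hpt f hf hs x (norm_pos_iff.1 hr.1)) (by linarith)
        _ = K ^ p * (∑ i ∈ Finset.range (j + 1),
            ‖x‖ ^ i / ‖x‖ ^ j * |iteratedDeriv i f ‖x‖|) ^ p :=
            Real.mul_rpow hK (Finset.sum_nonneg h0)
        _ ≤ K ^ p * (((j + 1 : ℕ) : ℝ) ^ (p - 1) * ∑ i ∈ Finset.range (j + 1),
            (‖x‖ ^ i / ‖x‖ ^ j * |iteratedDeriv i f ‖x‖|) ^ p) := by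
            gcongr
            simpa using Real.rpow_sum_le_const_mul_sum_rpow_of_nonneg _ hp h0
        _ = L * ∑ i ∈ Finset.range (j + 1),
            (‖x‖ ^ i / ‖x‖ ^ j * |iteratedDeriv i f ‖x‖|) ^ p := by ring
        _ ≤ φ ‖x‖ := by
            simp only [φ]
            gcongr
            rw [Finset.sum_range_succ, add_comm, div_self (pow_ne_zero _ hr.1.ne'), one_mul]
            gcongr
            refine (Finset.sum_le_card_nsmul _ _ (‖x‖⁻¹ * A) fun i hi => ?_).trans_eq (by simp)
            exact lower_order_bound hf hs hp (Finset.mem_range.1 hi) hr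
    · have : iteratedFDeriv ℝ j (fun x : EuclideanSpace ℝ (Fin n) => f ‖x‖) x = 0 := by
        by_contra h
        exact hx (support_iteratedFDeriv_subset (𝕜 := ℝ) j h)
      rw [this, norm_zero, Real.zero_rpow (by linarith)]
      exact indicator_nonneg hφ0 _
  calc _ ≤ ∫ x : EuclideanSpace ℝ (Fin n), g ‖x‖ :=
        integral_mono_of_nonneg (Filter.Eventually.of_forall fun _ => by positivity) hgint
          (Filter.Eventually.of_forall hle)
    _ = n * V * ∫ r in (0:ℝ)..1, ψ r := by
        rw [integral_fun_norm_addHaar volume]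
        simp only [finrank_euclideanSpace_fin, hgψ]
        rw [setIntegral_indicator measurableSet_Ioo, intervalIntegral.integral_of_le zero_le_one,
          integral_Ioc_eq_integral_Ioo, inter_eq_self_of_subset_right Ioo_subset_Ioi_self]
        simp [V, mul_assoc]
    _ ≤ n * V * (L * (1 + j) * A) := by
        gcongr
        calc ∫ r in (0:ℝ)..1, ψ r
            ≤ ∫ r in (0:ℝ)..1, L * (|iteratedDeriv j f r| ^ p + j * A) := by
              refine intervalIntegral.integral_mono_on zero_le_one (hψ.intervalIntegrable _ _)
                (Continuous.intervalIntegrable (by fun_prop) _ _) fun r hr => ?_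
              simp only [ψ]
              have h1 : r ^ (n - 1) ≤ 1 := pow_le_one₀ hr.1 hr.2
              have h2 : r ^ (n - 2) ≤ 1 := pow_le_one₀ hr.1 hr.2
              gcongr
              · exact mul_le_of_le_one_left (by positivity) h1
              · exact mul_le_of_le_one_left hA h2
          _ = L * (1 + j) * A := by
              rw [intervalIntegral.integral_const_mul, intervalIntegral.integral_add
                (hcp.intervalIntegrable _ _) (by simp)]
              simp only [intervalIntegral.integral_const, smul_eq_mul, A]
              ring
    _ = _ := by ring

/-- Boundedness of the radial extension operator `T f(x) = f(|x|)` from `W₀^{k,p}((0,1))` to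
`W₀^{k,p}(B₁(ℝⁿ))`: `Σ_{j≤k} ∫_{ℝⁿ} ‖D^j(f(|·|))‖^p ≤ C(n,k,p) Σ_{j≤k} ∫₀¹ |f^{(j)}|^p`. -/
theorem stmt14 (n k : ℕ) (hn : 2 ≤ n) (p : ℝ) (hp : 1 ≤ p) :
    ∃ C : ℝ, ∀ f : ℝ → ℝ, ContDiff ℝ ∞ f → HasCompactSupport f →
      tsupport f ⊆ Ioo (0:ℝ) 1 →
      ContDiff ℝ ∞ (fun x : EuclideanSpace ℝ (Fin n) => f ‖x‖) ∧
      tsupport (fun x : EuclideanSpace ℝ (Fin n) => f ‖x‖)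
        ⊆ Metric.ball (0 : EuclideanSpace ℝ (Fin n)) 1 ∧
      ∑ j ∈ Finset.range (k + 1),
          ∫ x : EuclideanSpace ℝ (Fin n),
            ‖iteratedFDeriv ℝ j (fun x : EuclideanSpace ℝ (Fin n) => f ‖x‖) x‖ ^ p
        ≤ C * ∑ j ∈ Finset.range (k + 1), ∫ r in (0:ℝ)..1, |iteratedDeriv j f r| ^ p := by
  choose C hC0 hC using fun j => exists_integral_bound n j hn p hp
  refine ⟨∑ j ∈ Finset.range (k + 1), C j, fun f hf _ hs => ⟨contDiff_radial hf hs, ?_, ?_⟩⟩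
  · intro x hx
    simpa using (hs (tsupport_radial_subset f hx)).2
  · rw [Finset.mul_sum]
    refine Finset.sum_le_sum fun j hj => (hC j f hf hs).trans ?_
    refine mul_le_mul_of_nonneg_right (Finset.single_le_sum (fun i _ => hC0 i) hj) ?_
    exact intervalIntegral.integral_nonneg zero_le_one fun _ _ => by positivity
end

section
/- Let n ≥ 2 and k ≥ 0 be integers and p ∈ [1,∞). There exists a constant C = C(n,k,p) such that for every smooth function f : ℝ → ℝ whose support is a compact subset of the open interval (0,1), the radial vector field V : ℝⁿ → ℝⁿ defined by V(x) = f(|x|)·x/|x| for x ≠ 0 and V(0) = 0 is smooth with support in the open unit ball of ℝⁿ, and Σ_{j=0}^{k} ∫_{ℝⁿ} ‖D^j V(x)‖^p dx ≤ C · Σ_{j=0}^{k} ∫₀¹ |f^{(j)}(r)|^p dr. -/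
/-!
Write `r = |x|` and `A(r) = r⁻¹ ∫₀ʳ |f^{(j)}|`. By homogeneity it suffices to differentiate the radial
field on the unit sphere, where `|y|` and `y/|y|` have bounded derivatives by compactness; rescaling
gives `‖D^j V(x)‖ ≤ K max_{i ≤ j} r^{i-j} |f^{(i)}(r)|` (`pointwise_bound`). Since `f` vanishes near
`0`, integrating repeatedly from `0` yields `r^{i-j} |f^{(i)}(r)| ≤ A(r)` for `i < j` (`taylor_bound`).

Thus `‖D^j V(x)‖ ≤ K (|f^{(j)}(r)| + A(r))` on the unit ball. No Hardy inequality is needed: Jensen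
gives `A(r)^p ≤ r⁻¹ ∫₀¹ |f^{(j)}|^p`, and in polar coordinates the Jacobian `r^{n-1} ≤ r` absorbs the
factor `r⁻¹` because `n ≥ 2` (`radial_integral`). This also covers `p = 1`.
-/

open MeasureTheory Set
open scoped ContDiff

/-! ### Pointwise bounds for the derivatives of a radial field -/

/-- A map smooth away from the origin has its derivatives up to order `j` uniformly bounded on the unit
sphere, by compactness; the bound is taken `≥ 1` so that it is dominated by its own powers. -/
theorem sphere_bound {E F : Type*} [NormedAddCommGroup E] [NormedSpace ℝ E] [FiniteDimensional ℝ E]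
    [NormedAddCommGroup F] [NormedSpace ℝ F] (u : E → F) (hu : ContDiffOn ℝ ∞ u {0}ᶜ) (j : ℕ) :
    ∃ D : ℝ, 1 ≤ D ∧ ∀ i ≤ j, ∀ z : E, ‖z‖ = 1 →
      ‖iteratedFDerivWithin ℝ i u {0}ᶜ z‖ ≤ D := by
  have ho : IsOpen ({0}ᶜ : Set E) := isOpen_compl_singleton
  have hb : ∀ i : ℕ, ∃ D : ℝ, ∀ z ∈ Metric.sphere (0 : E) 1,
      ‖iteratedFDerivWithin ℝ i u {0}ᶜ z‖ ≤ D := by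
    intro i
    refine (isCompact_sphere (0 : E) 1).exists_bound_of_continuousOn ?_
    refine (hu.continuousOn_iteratedFDerivWithin (m := i) (mod_cast le_top)
      ho.uniqueDiffOn).mono ?_
    intro z hz h0
    simp_all
  choose D hD using hb
  have hs : ∀ i ≤ j, |D i| ≤ ∑ i ∈ Finset.range (j + 1), |D i| := fun i hi =>
    Finset.single_le_sum (f := fun i => |D i|) (fun _ _ => abs_nonneg _) (by simp; omega)
  refine ⟨1 + ∑ i ∈ Finset.range (j + 1), |D i|, ?_, fun i hi z hz => ?_⟩
  · have := Finset.sum_nonneg (s := Finset.range (j + 1)) (fun i _ => abs_nonneg (D i))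
    linarith
  · have := hD i z (by simpa using hz)
    have := hs i hi
    have := le_abs_self (D i)
    linarith

/-- On the unit sphere, the `j`-th derivative of `y ↦ g(|y|) y/|y|` is controlled by the derivatives of
`g` at `1` of order at most `j`, with a constant independent of `g`: combine the Leibniz rule and the
Faà di Bruno estimate with `sphere_bound` for `|y|` and `y/|y|`. -/
theorem sphere_radial_bound {E : Type*} [NormedAddCommGroup E] [InnerProductSpace ℝ E]
    [FiniteDimensional ℝ E] (j : ℕ) :
    ∃ K : ℝ, 0 ≤ K ∧ ∀ (g : ℝ → ℝ) (M : ℝ), ContDiff ℝ ∞ g →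
      (∀ i ≤ j, |iteratedDeriv i g 1| ≤ M) → ∀ z : E, ‖z‖ = 1 →
      ‖iteratedFDerivWithin ℝ j (fun y : E => g ‖y‖ • (‖y‖⁻¹ • y)) {0}ᶜ z‖ ≤ K * M := by
  have ho : IsOpen ({0}ᶜ : Set E) := isOpen_compl_singleton
  have hn : ContDiffOn ℝ ∞ (fun y : E => ‖y‖) {0}ᶜ :=
    contDiffOn_id.norm ℝ (fun x hx => by simpa using hx)
  have hu : ContDiffOn ℝ ∞ (fun y : E => ‖y‖⁻¹ • y) {0}ᶜ :=
    (hn.inv (fun x hx => by simpa using hx)).smul contDiffOn_id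
  obtain ⟨D, hD1, hD⟩ := sphere_bound (fun y : E => ‖y‖) hn j
  obtain ⟨D', hD1', hD'⟩ := sphere_bound (fun y : E => ‖y‖⁻¹ • y) hu j
  refine ⟨∑ i ∈ Finset.range (j + 1), (j.choose i : ℝ) * (i.factorial * D ^ i) * D',
    Finset.sum_nonneg fun i _ => by positivity, fun g M hg hM z hz => ?_⟩
  have hz0 : z ∈ ({0}ᶜ : Set E) := by
    intro h
    simp_all
  refine (norm_iteratedFDerivWithin_smul_le (N := ∞) (f := fun y : E => g ‖y‖)
    (hg.comp_contDiffOn hn) hu ho.uniqueDiffOn hz0 (mod_cast le_top)).trans ?_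
  rw [Finset.sum_mul]
  refine Finset.sum_le_sum fun i hi => ?_
  have hij : i ≤ j := by simp at hi; omega
  have h1 : ‖iteratedFDerivWithin ℝ i (fun y : E => g ‖y‖) {0}ᶜ z‖ ≤ i.factorial * M * D ^ i := by
    refine norm_iteratedFDerivWithin_comp_le (g := g) (f := fun y : E => ‖y‖) (N := ∞)
      (t := univ) hg.contDiffOn hn (mod_cast le_top) uniqueDiffOn_univ ho.uniqueDiffOn
      (mapsTo_univ _ _) hz0 ?_ ?_
    · intro l hl
      rw [iteratedFDerivWithin_univ, norm_iteratedFDeriv_eq_norm_iteratedDeriv, hz]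
      exact hM l (hl.trans hij)
    · intro l hl hl'
      exact (hD l (hl'.trans hij) z hz).trans (le_self_pow₀ hD1 (by omega))
  have hM0 : 0 ≤ M := (abs_nonneg _).trans (hM 0 (Nat.zero_le _))
  calc _ ≤ (j.choose i : ℝ) * (i.factorial * M * D ^ i) * D' := by
        gcongr
        exact hD' _ (Nat.sub_le _ _) z hz
    _ = _ := by ring

/-- Transfer of `sphere_radial_bound` from the unit sphere to an arbitrary `x ≠ 0`, with `ρ = |x|`:
the rescaled field `z ↦ V(ρ z)` is the radial field with profile `t ↦ f(ρ t)`, whose `i`-th derivative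
at `1` is `ρ^i f^{(i)}(ρ)`, while its `j`-th derivative at `x/ρ` is `ρ^j D^j V(x)`. -/
theorem pointwise_bound {E : Type*} [NormedAddCommGroup E] [InnerProductSpace ℝ E]
    [FiniteDimensional ℝ E] (j : ℕ) :
    ∃ K : ℝ, 0 ≤ K ∧ ∀ (f : ℝ → ℝ) (V : E → E) (x : E) (M : ℝ), ContDiff ℝ ∞ f → ContDiff ℝ ∞ V →
      (∀ x, x ≠ 0 → V x = (f ‖x‖ / ‖x‖) • x) → x ≠ 0 →
      (∀ i ≤ j, ‖x‖ ^ i * |iteratedDeriv i f ‖x‖| ≤ ‖x‖ ^ j * M) →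
      ‖iteratedFDeriv ℝ j V x‖ ≤ K * M := by
  obtain ⟨K, hK, h⟩ := sphere_radial_bound (E := E) j
  refine ⟨K, hK, fun f V x M hf hV hVf hx hM => ?_⟩
  have ho : IsOpen ({0}ᶜ : Set E) := isOpen_compl_singleton
  set ρ := ‖x‖ with hρ
  have hρ0 : 0 < ρ := norm_pos_iff.2 hx
  have hz : ‖ρ⁻¹ • x‖ = 1 := by
    rw [norm_smul, norm_inv, norm_norm, ← hρ, inv_mul_cancel₀ hρ0.ne']
  have hz0 : ρ⁻¹ • x ∈ ({0}ᶜ : Set E) := by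
    intro h0
    simp_all
  -- The profile `t ↦ f (ρ * t)` of the rescaled field, evaluated on the unit sphere.
  have key := h (fun t => f (ρ * t)) (ρ ^ j * M) (hf.comp (contDiff_const.mul contDiff_id)) ?_ _ hz
  · have hcongr : iteratedFDerivWithin ℝ j
        (fun y : E => f (ρ * ‖y‖) • (‖y‖⁻¹ • y)) {0}ᶜ (ρ⁻¹ • x)
        = iteratedFDerivWithin ℝ j (fun y => V (ρ • y)) {0}ᶜ (ρ⁻¹ • x) := by
      refine iteratedFDerivWithin_congr (fun y hy => ?_) hz0 j
      have hy' : y ≠ 0 := hy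
      rw [hVf _ (smul_ne_zero hρ0.ne' hy'), norm_smul, norm_norm, ← hρ, smul_smul, smul_smul]
      congr 1
      field_simp
    rw [hcongr, iteratedFDerivWithin_of_isOpen j ho hz0,
      iteratedFDeriv_comp_const_smul ρ (hV.of_le (mod_cast le_top))] at key
    beta_reduce at key
    rw [smul_smul, mul_inv_cancel₀ hρ0.ne', one_smul, norm_smul, norm_pow,
      Real.norm_of_nonneg hρ0.le] at key
    have hpos : 0 < ρ ^ j := by positivity
    refine le_of_mul_le_mul_left ?_ hpos
    linarith
  · intro i hi
    rw [iteratedDeriv_comp_const_mul (hf.of_le (mod_cast le_top))]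
    simp only [mul_one, abs_mul, abs_pow, abs_of_pos hρ0]
    exact hM i hi

/-! ### One-dimensional inequalities -/

theorem iteratedDeriv_eq_zero_of_notMem (f : ℝ → ℝ) (i : ℕ) {r : ℝ} (hr : r ∉ tsupport f) :
    iteratedDeriv i f r = 0 := by
  have h : iteratedFDeriv ℝ i f r = 0 :=
    image_eq_zero_of_notMem_tsupport fun h => hr (tsupport_iteratedFDeriv_subset i h)
  rw [iteratedDeriv_eq_iteratedFDeriv, h]
  simp

/-- Repeated integration from `0`, where all derivatives of `f` vanish: the first step, starting from
the derivative of order `i + d + 1`, gives its `L¹` norm on `(0, r)`, and each of the `d` further steps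
gains a factor `r`. -/
theorem taylor_bound (f : ℝ → ℝ) (hf : ContDiff ℝ ∞ f) (h0 : (0 : ℝ) ∉ tsupport f) (d : ℕ) :
    ∀ (i : ℕ) (r : ℝ), 0 ≤ r →
      |iteratedDeriv i f r| ≤ r ^ d * ∫ s in (0 : ℝ)..r, |iteratedDeriv (i + d + 1) f s| := by
  have hc : ∀ i : ℕ, Continuous (iteratedDeriv i f) := fun i =>
    hf.continuous_iteratedDeriv i (mod_cast le_top)
  have hftc : ∀ (i : ℕ) (r : ℝ), ∫ s in (0 : ℝ)..r, iteratedDeriv (i + 1) f s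
      = iteratedDeriv i f r := by
    intro i r
    rw [intervalIntegral.integral_eq_sub_of_hasDerivAt (f := iteratedDeriv i f),
      iteratedDeriv_eq_zero_of_notMem f i h0, sub_zero]
    · intro x _
      rw [iteratedDeriv_succ]
      exact ((hf.differentiable_iteratedDeriv i (mod_cast WithTop.coe_lt_top _)) x).hasDerivAt
    · exact (hc _).intervalIntegrable _ _
  induction d with
  | zero =>
    intro i r hr
    rw [pow_zero, one_mul, ← hftc i r]
    exact intervalIntegral.abs_integral_le_integral_abs hr
  | succ d ih =>
    intro i r hr
    rw [← hftc i r]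
    have := intervalIntegral.norm_integral_le_of_norm_le_const (a := 0) (b := r)
      (f := iteratedDeriv (i + 1) f)
      (C := r ^ d * ∫ s in (0 : ℝ)..r, |iteratedDeriv (i + (d + 1) + 1) f s|) ?_
    · rw [sub_zero, abs_of_nonneg hr] at this
      refine this.trans (le_of_eq ?_)
      ring
    · intro s hs
      rw [uIoc_of_le hr] at hs
      refine (ih (i + 1) s hs.1.le).trans ?_
      rw [show i + 1 + d + 1 = i + (d + 1) + 1 by ring]
      have hs0 := hs.1.le
      gcongr
      · exact intervalIntegral.integral_nonneg hs0 fun _ _ => abs_nonneg _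
      · exact hs.2
      · refine intervalIntegral.integral_mono_interval le_rfl hs0 hs.2 ?_ ?_
        · exact Filter.Eventually.of_forall fun _ => abs_nonneg _
        · exact (hc _).abs.intervalIntegrable _ _

/-- Jensen's inequality for the average of `|h|` over `(0, r)`. -/
theorem jensen_bound (h : ℝ → ℝ) (hc : Continuous h) (p : ℝ) (hp : 1 ≤ p) (r : ℝ) (hr : 0 < r) :
    (r⁻¹ * ∫ s in (0 : ℝ)..r, |h s|) ^ p ≤ r⁻¹ * ∫ s in (0 : ℝ)..r, |h s| ^ p := by
  have hc2 : Continuous fun s => |h s| ^ p :=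
    hc.abs.rpow_const fun _ => Or.inr (by linarith)
  have := (convexOn_rpow hp).map_set_average_le (μ := volume) (t := Ioc 0 r) (f := fun s => |h s|)
    (continuousOn_id.rpow_const fun _ _ => Or.inr (by linarith)) isClosed_Ici
    (by simp [hr]) (by simp) (by simp)
    (hc.abs.integrableOn_Ioc) (hc2.integrableOn_Ioc)
  rw [setAverage_eq, setAverage_eq] at this
  simpa [intervalIntegral.integral_of_le hr.le, measureReal_def, hr.le] using this

theorem add_rpow_le_two (p a b : ℝ) (hp : 0 ≤ p) (ha : 0 ≤ a) (hb : 0 ≤ b) :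
    (a + b) ^ p ≤ 2 ^ p * (a ^ p + b ^ p) := by
  have ha' := Real.rpow_nonneg ha p
  have hb' := Real.rpow_nonneg hb p
  have h2 := Real.rpow_nonneg (zero_le_two (α := ℝ)) p
  rcases le_total a b with h | h
  · calc (a + b) ^ p ≤ (2 * b) ^ p := Real.rpow_le_rpow (by positivity) (by linarith) hp
      _ = 2 ^ p * b ^ p := Real.mul_rpow zero_le_two hb
      _ ≤ _ := by gcongr; linarith
  · calc (a + b) ^ p ≤ (2 * a) ^ p := Real.rpow_le_rpow (by positivity) (by linarith) hp
      _ = 2 ^ p * a ^ p := Real.mul_rpow zero_le_two ha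
      _ ≤ _ := by gcongr; linarith

/-! ### Integration of the radial majorant -/

/-- Integration in polar coordinates of a radial majorant on the unit ball. The singular factor `r⁻¹`
is absorbed by the Jacobian `r^(n-1)`, which is where `n ≥ 2` is used. -/
theorem radial_integral (n : ℕ) (hn : 2 ≤ n) (φ : ℝ → ℝ) (hφ : Continuous φ) (hφ0 : ∀ r, 0 ≤ φ r)
    (S : ℝ) (hS : S = ∫ r in (0 : ℝ)..1, φ r) :
    Integrable (fun x : EuclideanSpace ℝ (Fin n) =>
      (Ioo (0 : ℝ) 1).indicator (fun r => φ r + r⁻¹ * S) ‖x‖) ∧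
    ∫ x : EuclideanSpace ℝ (Fin n), (Ioo (0 : ℝ) 1).indicator (fun r => φ r + r⁻¹ * S) ‖x‖ ≤
      (n * volume.real (Metric.ball (0 : EuclideanSpace ℝ (Fin n)) 1) * 2) * S := by
  obtain ⟨m, rfl⟩ := Nat.exists_eq_add_of_le' hn
  have hS0 : 0 ≤ S := by
    rw [hS]
    exact intervalIntegral.integral_nonneg zero_le_one fun _ _ => hφ0 _
  set G := (Ioo (0 : ℝ) 1).indicator (fun r => φ r + r⁻¹ * S) with hG
  have hfun : (fun y : ℝ => y ^ (m + 2 - 1) • G y)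
      = (Ioo (0 : ℝ) 1).indicator (fun y => y ^ (m + 1) * φ y + y ^ m * S) := by
    funext y
    by_cases hy : y ∈ Ioo (0 : ℝ) 1
    · have := hy.1.ne'
      simp only [hG, indicator_of_mem hy, smul_eq_mul,
        show m + 2 - 1 = m + 1 by omega]
      field_simp
      ring
    · simp [hG, indicator_of_notMem hy]
  have hcont : Continuous (fun y : ℝ => y ^ (m + 1) * φ y + y ^ m * S) := by fun_prop
  have hint : ∀ ψ : ℝ → ℝ, Continuous ψ → IntegrableOn ψ (Ioo 0 1) := fun ψ hψ =>
    hψ.integrableOn_Icc.mono_set Ioo_subset_Icc_self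
  constructor
  · rw [integrable_fun_norm_addHaar volume (f := G), finrank_euclideanSpace_fin, hfun]
    exact ((integrable_indicator_iff measurableSet_Ioo).2 (hint _ hcont)).integrableOn
  · rw [integral_fun_norm_addHaar volume G, finrank_euclideanSpace_fin, hfun,
      setIntegral_indicator measurableSet_Ioo, inter_eq_right.2 Ioo_subset_Ioi_self]
    have hle : ∫ y in Ioo (0 : ℝ) 1, (y ^ (m + 1) * φ y + y ^ m * S)
        ≤ ∫ y in Ioo (0 : ℝ) 1, (φ y + S) := by
      refine setIntegral_mono_on (hint _ hcont) (hint _ (by fun_prop)) measurableSet_Ioo ?_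
      intro y hy
      have h1 := pow_le_one₀ (n := m + 1) hy.1.le hy.2.le
      have h2 := pow_le_one₀ (n := m) hy.1.le hy.2.le
      have := mul_le_of_le_one_left (hφ0 y) h1
      have := mul_le_of_le_one_left hS0 h2
      linarith
    have heq : ∫ y in Ioo (0 : ℝ) 1, (φ y + S) = 2 * S := by
      rw [← integral_Ioc_eq_integral_Ioo, ← intervalIntegral.integral_of_le zero_le_one,
        intervalIntegral.integral_add (hφ.intervalIntegrable _ _) (by simp), ← hS]
      simp
      ring
    rw [heq] at hle
    rw [nsmul_eq_mul, smul_eq_mul]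
    calc _ ≤ ((m + 2 : ℕ) : ℝ) * (volume.real (Metric.ball (0 : EuclideanSpace ℝ (Fin (m + 2))) 1)
          * (2 * S)) := by gcongr
      _ = _ := by ring

/-! ### Support and smoothness of radial fields -/

/-- The support of a radial field lies over the support of its profile. -/
theorem tsupport_radial {E : Type*} [NormedAddCommGroup E] [InnerProductSpace ℝ E]
    (f : ℝ → ℝ) (V : E → E) (hV0 : V 0 = 0) (hV : ∀ x, x ≠ 0 → V x = (f ‖x‖ / ‖x‖) • x) :
    tsupport V ⊆ {x | ‖x‖ ∈ tsupport f} := by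
  refine closure_minimal (fun x hx => ?_) ((isClosed_tsupport f).preimage continuous_norm)
  have hx0 : x ≠ 0 := by
    rintro rfl
    exact hx hV0
  refine subset_tsupport f fun h => hx ?_
  rw [hV x hx0, h]
  simp

/-- Near the origin the field vanishes; away from it, it is a product of smooth functions. -/
theorem contDiff_radial_s15 {E : Type*} [NormedAddCommGroup E] [InnerProductSpace ℝ E]
    (f : ℝ → ℝ) (hf : ContDiff ℝ ∞ f) (h0 : (0 : ℝ) ∉ tsupport f)
    (V : E → E) (hV0 : V 0 = 0) (hV : ∀ x, x ≠ 0 → V x = (f ‖x‖ / ‖x‖) • x) :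
    ContDiff ℝ ∞ V := by
  rw [contDiff_iff_contDiffAt]
  intro x
  by_cases hx : x = 0
  · subst hx
    have h : (0 : E) ∉ tsupport V := fun h => h0 (by simpa using tsupport_radial f V hV0 hV h)
    exact contDiffAt_const.congr_of_eventuallyEq (notMem_tsupport_iff_eventuallyEq.1 h)
  · have hn : ContDiffAt ℝ ∞ (fun y : E => ‖y‖) x := contDiffAt_norm ℝ hx
    have : ContDiffAt ℝ ∞ (fun y : E => (f ‖y‖ / ‖y‖) • y) x :=
      ((hf.contDiffAt.comp x hn).div hn (norm_ne_zero_iff.2 hx)).smul contDiffAt_id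
    refine this.congr_of_eventuallyEq ?_
    filter_upwards [isOpen_ne.mem_nhds hx] with y hy
    exact hV y hy

/-! ### The Sobolev estimate -/

/-- The estimate at a fixed order `j` of differentiation, where only `f^{(j)}` is needed on the right. -/
theorem order_bound (n j : ℕ) (hn : 2 ≤ n) (p : ℝ) (hp : 1 ≤ p) :
    ∃ C : ℝ, 0 ≤ C ∧ ∀ f : ℝ → ℝ, ContDiff ℝ ∞ f → tsupport f ⊆ Ioo (0:ℝ) 1 →
      ∀ V : EuclideanSpace ℝ (Fin n) → EuclideanSpace ℝ (Fin n),
        V 0 = 0 → (∀ x, x ≠ 0 → V x = (f ‖x‖ / ‖x‖) • x) →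
        ∫ x, ‖iteratedFDeriv ℝ j V x‖ ^ p
          ≤ C * ∫ r in (0:ℝ)..1, |iteratedDeriv j f r| ^ p := by
  obtain ⟨K, hK, hb⟩ := pointwise_bound (E := EuclideanSpace ℝ (Fin n)) j
  have hp0 : 0 ≤ p := by linarith
  refine ⟨(K ^ p * 2 ^ p) * (n * volume.real (Metric.ball (0 : EuclideanSpace ℝ (Fin n)) 1) * 2),
    by positivity, fun f hf hsupp V hV0 hV => ?_⟩
  have h0 : (0 : ℝ) ∉ tsupport f := fun h => lt_irrefl _ (hsupp h).1
  have hVs := contDiff_radial_s15 f hf h0 V hV0 hV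
  have hc : Continuous (iteratedDeriv j f) := hf.continuous_iteratedDeriv j (mod_cast le_top)
  have hφ : Continuous fun r => |iteratedDeriv j f r| ^ p :=
    hc.abs.rpow_const fun _ => Or.inr hp0
  set S := ∫ r in (0:ℝ)..1, |iteratedDeriv j f r| ^ p with hS
  obtain ⟨hGi, hGle⟩ := radial_integral n hn (fun r => |iteratedDeriv j f r| ^ p) hφ
    (fun _ => by positivity) S hS
  rw [mul_assoc]
  refine le_trans ?_ (mul_le_mul_of_nonneg_left hGle (by positivity))
  rw [← integral_const_mul]
  -- It remains to dominate `‖D^j V(x)‖ ^ p` pointwise by the radial majorant.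
  refine integral_mono_of_nonneg (Filter.Eventually.of_forall fun x => by positivity)
    (hGi.const_mul _) (Filter.Eventually.of_forall fun x => ?_)
  beta_reduce
  by_cases hx : x ∈ tsupport V
  · have hr : ‖x‖ ∈ Ioo (0 : ℝ) 1 := hsupp (tsupport_radial f V hV0 hV hx)
    have hx0 : x ≠ 0 := norm_pos_iff.1 hr.1
    rw [indicator_of_mem hr]
    set r := ‖x‖ with hrdef
    have hr0 : 0 < r := hr.1
    have hI : 0 ≤ ∫ s in (0 : ℝ)..r, |iteratedDeriv j f s| :=
      intervalIntegral.integral_nonneg hr0.le fun _ _ => abs_nonneg _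
    have hA : 0 ≤ r⁻¹ * ∫ s in (0 : ℝ)..r, |iteratedDeriv j f s| := by positivity
    have h1 := hb f V x (|iteratedDeriv j f r| + r⁻¹ * ∫ s in (0 : ℝ)..r, |iteratedDeriv j f s|)
      hf hVs hV hx0 ?_
    · have h2 : (r⁻¹ * ∫ s in (0 : ℝ)..r, |iteratedDeriv j f s|) ^ p ≤ r⁻¹ * S := by
        refine (jensen_bound _ hc p hp r hr0).trans ?_
        gcongr
        refine intervalIntegral.integral_mono_interval le_rfl hr0.le hr.2.le ?_
          (hφ.intervalIntegrable _ _)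
        exact Filter.Eventually.of_forall fun _ => by positivity
      calc _ ≤ (K * (|iteratedDeriv j f r|
              + r⁻¹ * ∫ s in (0 : ℝ)..r, |iteratedDeriv j f s|)) ^ p :=
            Real.rpow_le_rpow (norm_nonneg _) h1 hp0
        _ = K ^ p * (|iteratedDeriv j f r|
              + r⁻¹ * ∫ s in (0 : ℝ)..r, |iteratedDeriv j f s|) ^ p :=
            Real.mul_rpow hK (by positivity)
        _ ≤ K ^ p * (2 ^ p * (|iteratedDeriv j f r| ^ p
              + (r⁻¹ * ∫ s in (0 : ℝ)..r, |iteratedDeriv j f s|) ^ p)) := by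
            gcongr
            exact add_rpow_le_two p _ _ hp0 (abs_nonneg _) hA
        _ ≤ K ^ p * (2 ^ p * (|iteratedDeriv j f r| ^ p + r⁻¹ * S)) := by gcongr
        _ = _ := by ring
    -- Orders `i < j` are absorbed by the averaged term, the order `i = j` by `|f^{(j)}(r)|`.
    · intro i hi
      rw [← hrdef]
      rcases hi.eq_or_lt with rfl | hlt
      · gcongr
        linarith
      · obtain ⟨d, rfl⟩ := Nat.exists_eq_add_of_lt hlt
        have ht := taylor_bound f hf h0 d i r hr0.le
        calc r ^ i * |iteratedDeriv i f r|
            ≤ r ^ i * (r ^ d * ∫ s in (0 : ℝ)..r, |iteratedDeriv (i + d + 1) f s|) := by gcongr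
          _ = r ^ (i + d + 1) * (r⁻¹ * ∫ s in (0 : ℝ)..r, |iteratedDeriv (i + d + 1) f s|) := by
              rw [pow_succ, pow_add]
              field_simp
          _ ≤ _ := by
              gcongr
              linarith [abs_nonneg (iteratedDeriv (i + d + 1) f r)]
  -- Off the support of `V` the majorant is nonnegative and the integrand is `0 ^ p = 0`.
  · have h : iteratedFDeriv ℝ j V x = 0 :=
      image_eq_zero_of_notMem_tsupport fun h => hx (tsupport_iteratedFDeriv_subset j h)
    rw [h, norm_zero, Real.zero_rpow (by linarith)]
    refine mul_nonneg (by positivity) (indicator_nonneg (fun r hr => ?_) _)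
    have hS0 : 0 ≤ S := intervalIntegral.integral_nonneg zero_le_one fun _ _ => by positivity
    have := hr.1
    positivity

/-- Boundedness of the radial vector field operator `T̃ f(x) = f(|x|)·x/|x|` (with value `0`
at the origin) from `W₀^{k,p}((0,1))` to `W₀^{k,p}(B₁(ℝⁿ); ℝⁿ)`:
`Σ_{j≤k} ∫_{ℝⁿ} ‖D^j V‖^p ≤ C(n,k,p) Σ_{j≤k} ∫₀¹ |f^{(j)}|^p`. -/
theorem stmt15 (n k : ℕ) (hn : 2 ≤ n) (p : ℝ) (hp : 1 ≤ p) :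
    ∃ C : ℝ, ∀ f : ℝ → ℝ, ContDiff ℝ ∞ f → HasCompactSupport f →
      tsupport f ⊆ Ioo (0:ℝ) 1 →
      ∀ V : EuclideanSpace ℝ (Fin n) → EuclideanSpace ℝ (Fin n),
        V 0 = 0 → (∀ x, x ≠ 0 → V x = (f ‖x‖ / ‖x‖) • x) →
        ContDiff ℝ ∞ V ∧
        tsupport V ⊆ Metric.ball (0 : EuclideanSpace ℝ (Fin n)) 1 ∧
        ∑ j ∈ Finset.range (k + 1), ∫ x, ‖iteratedFDeriv ℝ j V x‖ ^ p
          ≤ C * ∑ j ∈ Finset.range (k + 1), ∫ r in (0:ℝ)..1, |iteratedDeriv j f r| ^ p := by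
  choose C hC0 hC using fun j => order_bound n j hn p hp
  refine ⟨∑ j ∈ Finset.range (k + 1), C j, fun f hf _ hsupp V hV0 hV => ⟨?_, ?_, ?_⟩⟩
  · exact contDiff_radial_s15 f hf (fun h => lt_irrefl _ (hsupp h).1) V hV0 hV
  · intro x hx
    simpa using (hsupp (tsupport_radial f V hV0 hV hx)).2
  · rw [Finset.mul_sum]
    refine Finset.sum_le_sum fun j hj => (hC j f hf hsupp V hV0 hV).trans ?_
    refine mul_le_mul_of_nonneg_right (Finset.single_le_sum (fun i _ => hC0 i) hj) ?_
    exact intervalIntegral.integral_nonneg zero_le_one fun _ _ => by positivity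
end

section
/- Let n ≥ 2 be an integer, p ∈ [1,∞), and let 0 ≤ j ≤ k be integers. There exists a constant C = C(n,p,j,k) such that for every smooth function f : ℝ → ℝ whose support is a compact subset of the open interval (0,1), ∫₀¹ r^{n−1−(k−j)p} |f^{(j)}(r)|^p dr ≤ C · ∫₀¹ |f^{(k)}(r)|^p dr. -/
/-!
For `j = k` the weight is `r ^ (n - 1) ≤ 1`. For `m = k - j ≥ 1` the inequality already holds
pointwise, with constant `1`, because the surplus `r ^ (n - 1)` of the weight (with `n ≥ 2`)
absorbs the loss in a crude Taylor estimate. All derivatives of `f` vanish at `0`, so integrating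
`f^{(k)}` back `m` times from `0` gives `|f^{(j)}(r)| ≤ r ^ (m - 1) ∫₀ʳ |f^{(k)}|`
(`abs_iteratedDeriv_le`), and Jensen's inequality gives
`(∫₀ʳ |f^{(k)}|) ^ p ≤ r ^ (p - 1) ∫₀ʳ |f^{(k)}| ^ p` (`rpow_integral_le`). Together,
`r ^ (n - 1 - m p) |f^{(j)}(r)| ^ p ≤ r ^ (n - 2) ∫₀¹ |f^{(k)}| ^ p ≤ ∫₀¹ |f^{(k)}| ^ p`,
which is then integrated over `(0, 1)`.
-/

open MeasureTheory Set
open scoped ContDiff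

theorem iteratedDeriv_eq_zero_of_notMem_tsupport {f : ℝ → ℝ} {x : ℝ} (hx : x ∉ tsupport f)
    (i : ℕ) : iteratedDeriv i f x = 0 := by
  rw [(notMem_tsupport_iff_eventuallyEq.1 hx).iteratedDeriv_eq i]
  simp [Pi.zero_def]

theorem iteratedDeriv_eq_integral {f : ℝ → ℝ} (hf : ContDiff ℝ ∞ f)
    (h0 : ∀ i, iteratedDeriv i f 0 = 0) (j : ℕ) (r : ℝ) :
    iteratedDeriv j f r = ∫ s in (0:ℝ)..r, iteratedDeriv (j + 1) f s := by
  have hd : Differentiable ℝ (iteratedDeriv j f) :=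
    hf.differentiable_iteratedDeriv j (by exact_mod_cast ENat.natCast_lt_top j)
  have hc : Continuous (iteratedDeriv (j + 1) f) :=
    hf.continuous_iteratedDeriv (j + 1) (by exact_mod_cast le_top)
  rw [intervalIntegral.integral_eq_sub_of_hasDerivAt (f := iteratedDeriv j f)
    (fun x _ => by rw [iteratedDeriv_succ]; exact (hd x).hasDerivAt)
    (hc.intervalIntegrable _ _), h0, sub_zero]

/-- A Taylor estimate at a point where all derivatives vanish. The bound is uniform in
`r ∈ [0, R]`, which makes the induction on the number `d + 1` of integrations go through. -/
theorem abs_iteratedDeriv_le {f : ℝ → ℝ} (hf : ContDiff ℝ ∞ f)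
    (h0 : ∀ i, iteratedDeriv i f 0 = 0) {R : ℝ} (d : ℕ) :
    ∀ (j : ℕ) (r : ℝ), 0 ≤ r → r ≤ R →
      |iteratedDeriv j f r| ≤ R ^ d * ∫ s in (0:ℝ)..R, |iteratedDeriv (j + d + 1) f s| := by
  induction d with
  | zero =>
    intro j r hr hrR
    have hc : Continuous (iteratedDeriv (j + 1) f) :=
      hf.continuous_iteratedDeriv (j + 1) (by exact_mod_cast le_top)
    rw [iteratedDeriv_eq_integral hf h0, pow_zero, one_mul]
    refine (intervalIntegral.abs_integral_le_integral_abs hr).trans ?_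
    exact intervalIntegral.integral_mono_interval le_rfl hr hrR
      (Filter.Eventually.of_forall fun _ => abs_nonneg _) (hc.abs.intervalIntegrable _ _)
  | succ d ih =>
    intro j r hr hrR
    have hR : 0 ≤ R := hr.trans hrR
    have hB : 0 ≤ ∫ s in (0:ℝ)..R, |iteratedDeriv (j + (d + 1) + 1) f s| :=
      intervalIntegral.integral_nonneg hR fun _ _ => abs_nonneg _
    rw [iteratedDeriv_eq_integral hf h0, ← Real.norm_eq_abs]
    refine (intervalIntegral.norm_integral_le_of_norm_le_const
      (C := R ^ d * ∫ s in (0:ℝ)..R, |iteratedDeriv (j + (d + 1) + 1) f s|) ?_).trans ?_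
    · intro x hx
      rw [uIoc_of_le hr] at hx
      have h := ih (j + 1) x hx.1.le (hx.2.trans hrR)
      rwa [show j + 1 + d + 1 = j + (d + 1) + 1 by ring] at h
    · rw [sub_zero, abs_of_nonneg hr, pow_succ]
      calc _ ≤ (R ^ d * ∫ s in (0:ℝ)..R, |iteratedDeriv (j + (d + 1) + 1) f s|) * R := by
            gcongr
        _ = _ := by ring

/-- Jensen's inequality for `x ↦ x ^ p` on `[0, r]`, cleared of averages. -/
theorem rpow_integral_le {p : ℝ} (hp : 1 ≤ p) {g : ℝ → ℝ} (hg : Continuous g)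
    (hg0 : ∀ x, 0 ≤ g x) {r : ℝ} (hr : 0 < r) :
    (∫ s in (0:ℝ)..r, g s) ^ p ≤ r ^ (p - 1) * ∫ s in (0:ℝ)..r, g s ^ p := by
  have hp0 : 0 ≤ p := zero_le_one.trans hp
  have hgp : Continuous fun s => g s ^ p := hg.rpow_const fun _ => Or.inr hp0
  have hI : 0 ≤ ∫ s in (0:ℝ)..r, g s :=
    intervalIntegral.integral_nonneg hr.le fun _ _ => hg0 _
  have h := (convexOn_rpow hp).map_set_average_le (μ := volume) (t := Set.uIoc 0 r) (f := g)
    (Real.continuous_rpow_const hp0).continuousOn isClosed_Ici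
    (by simp [uIoc_of_le hr.le, hr]) (by simp [uIoc_of_le hr.le])
    (Filter.Eventually.of_forall hg0)
    (hg.intervalIntegrable 0 r).def' (hgp.intervalIntegrable 0 r).def'
  rw [interval_average_eq_div, interval_average_eq_div, sub_zero,
    Real.div_rpow hI hr.le, div_le_iff₀ (Real.rpow_pos_of_pos hr p)] at h
  rw [Real.rpow_sub_one hr.ne']
  exact h.trans_eq (by ring)

/-- Weighted Hardy-type inequality: for `0 ≤ j ≤ k` and smooth `f` compactly supported in
`(0,1)`, `∫₀¹ r^{n−1−(k−j)p} |f^{(j)}(r)|^p dr ≤ C(n,p,j,k) ∫₀¹ |f^{(k)}(r)|^p dr`. -/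
theorem stmt16 (n : ℕ) (hn : 2 ≤ n) (p : ℝ) (hp : 1 ≤ p) (j k : ℕ) (hjk : j ≤ k) :
    ∃ C : ℝ, ∀ f : ℝ → ℝ, ContDiff ℝ ∞ f → HasCompactSupport f →
      tsupport f ⊆ Ioo (0:ℝ) 1 →
      ∫ r in (0:ℝ)..1, r ^ ((n : ℝ) - 1 - ((k : ℝ) - (j : ℝ)) * p) * |iteratedDeriv j f r| ^ p
        ≤ C * ∫ r in (0:ℝ)..1, |iteratedDeriv k f r| ^ p := by
  refine ⟨1, fun f hf _ hsupp => ?_⟩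
  have hp0 : 0 ≤ p := zero_le_one.trans hp
  have hn' : (2:ℝ) ≤ n := by exact_mod_cast hn
  have h0 : ∀ i, iteratedDeriv i f 0 = 0 :=
    iteratedDeriv_eq_zero_of_notMem_tsupport fun h => lt_irrefl _ (hsupp h).1
  have hc : Continuous (iteratedDeriv k f) :=
    hf.continuous_iteratedDeriv k (by exact_mod_cast le_top)
  have hcp : Continuous fun s => |iteratedDeriv k f s| ^ p :=
    hc.abs.rpow_const fun _ => Or.inr hp0
  rw [one_mul]
  obtain rfl | hlt := hjk.eq_or_lt
  · have hw : Continuous fun r : ℝ => r ^ ((n:ℝ) - 1 - ((j:ℝ) - j) * p) :=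
      Real.continuous_rpow_const (by simp; linarith)
    refine intervalIntegral.integral_mono_on zero_le_one
      ((hw.mul hcp).intervalIntegrable _ _) (hcp.intervalIntegrable _ _) fun r hr => ?_
    exact mul_le_of_le_one_left (by positivity)
      (Real.rpow_le_one hr.1 hr.2 (by simp; linarith))
  obtain ⟨d, rfl⟩ := Nat.exists_eq_add_of_lt hlt
  set I := ∫ r in (0:ℝ)..1, |iteratedDeriv (j + d + 1) f r| ^ p with hI
  have hI0 : 0 ≤ I := intervalIntegral.integral_nonneg zero_le_one fun _ _ => by positivity
  -- A bound on the norm of the integrand needs no integrability of the singular weight.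
  refine (Real.le_norm_self _).trans ((intervalIntegral.norm_integral_le_of_norm_le_const
    (C := I) fun r hr => ?_).trans_eq (show I * |(1:ℝ) - 0| = I by simp))
  rw [uIoc_of_le zero_le_one] at hr
  obtain ⟨hr0, hr1⟩ := hr
  rw [Real.norm_of_nonneg (by positivity)]
  have hB : 0 ≤ ∫ s in (0:ℝ)..r, |iteratedDeriv (j + d + 1) f s| :=
    intervalIntegral.integral_nonneg hr0.le fun _ _ => abs_nonneg _
  have hIr : ∫ s in (0:ℝ)..r, |iteratedDeriv (j + d + 1) f s| ^ p ≤ I :=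
    intervalIntegral.integral_mono_interval le_rfl hr0.le hr1
      (Filter.Eventually.of_forall fun _ => by positivity) (hcp.intervalIntegrable _ _)
  have hpt : |iteratedDeriv j f r| ^ p ≤ r ^ ((d:ℝ) * p) * (r ^ (p - 1) * I) := calc
    _ ≤ (r ^ d * ∫ s in (0:ℝ)..r, |iteratedDeriv (j + d + 1) f s|) ^ p := by
      gcongr
      exact abs_iteratedDeriv_le hf h0 d j r hr0.le le_rfl
    _ = r ^ ((d:ℝ) * p) * (∫ s in (0:ℝ)..r, |iteratedDeriv (j + d + 1) f s|) ^ p := by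
      rw [Real.mul_rpow (by positivity) hB, Real.rpow_mul hr0.le, Real.rpow_natCast]
    _ ≤ r ^ ((d:ℝ) * p) * (r ^ (p - 1) * ∫ s in (0:ℝ)..r,
          |iteratedDeriv (j + d + 1) f s| ^ p) := by
      gcongr
      exact rpow_integral_le hp hc.abs (fun _ => abs_nonneg _) hr0
    _ ≤ _ := by gcongr
  calc _ ≤ r ^ ((n:ℝ) - 1 - (((j + d + 1 : ℕ):ℝ) - j) * p) *
        (r ^ ((d:ℝ) * p) * (r ^ (p - 1) * I)) := by gcongr
    _ = r ^ ((n:ℝ) - 2) * I := by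
      rw [← mul_assoc, ← mul_assoc, ← Real.rpow_add hr0, ← Real.rpow_add hr0]
      congr 2
      push_cast
      ring
    _ ≤ I := mul_le_of_le_one_left hI0 (Real.rpow_le_one hr0.le hr1 (by linarith))
end

section
/- For continuously differentiable increasing bijections φ, ψ : [0,1] → [0,1] (with φ(0)=ψ(0)=0, φ(1)=ψ(1)=1 and φ', ψ' > 0), define D(φ,ψ) = arccos(∫₀¹ √(φ'(θ))·√(ψ'(θ)) dθ). Then for every ε > 0 there exist smooth increasing bijections φ, ψ : [0,1] → [0,1] such that D(φ∘ψ, ψ∘φ) > π/2 − ε while D(id, φ) < ε. -/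
/-!
The overlap `∫ √((φ∘ψ)') √((ψ∘φ)')` only involves `ψ'` through `ψ'(θ)` and `ψ'(φ θ)`. If `ψ'` is
almost entirely concentrated near the point `1/2`, and `φ` moves `1/2`, then for every `θ` one of
these two factors is tiny, so the overlap is nearly `0` (`overlap_le`), however close `φ` is to the
identity. Here `φ θ = θ + δ θ (1 - θ)` with `δ` small, for which `φ' ≥ 1 - δ` makes `D(id, φ)` small,
and `ψ` is the arctangent profile of slope parameter `n` centred at `1/2`, rescaled to fix `0` and
`1`; `δ` is fixed first and `n` is taken large depending on `δ`.
-/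

open MeasureTheory Set Real
open scoped ContDiff

/-- Lenells' formula for the geodesic distance of the right-invariant homogeneous `Ḣ¹`-metric
on diffeomorphisms of the interval: `D(φ,ψ) = arccos(∫₀¹ √(φ') √(ψ'))`. -/
noncomputable def H1dist (φ ψ : ℝ → ℝ) : ℝ :=
  Real.arccos (∫ θ in (0:ℝ)..1, Real.sqrt (deriv φ θ) * Real.sqrt (deriv ψ θ))

/-- If at each point of `[0,1]` either `ψ'` or `ψ' ∘ φ` is at most `η`, then the overlap integral of
`φ ∘ ψ` and `ψ ∘ φ` is `O(√η)`. Writing `a = ψ'` and `b = ψ' ∘ φ`, this is because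
`√(a b) ≤ √η (1 + a + 2 b φ')`, and both `a` and `b φ'` have integral `1`. -/
lemma overlap_le {φ ψ φ' ψ' : ℝ → ℝ} {η : ℝ} (hη : 0 ≤ η)
    (hφ : ∀ x, HasDerivAt φ (φ' x) x) (hψ : ∀ x, HasDerivAt ψ (ψ' x) x)
    (cφ : Continuous φ') (cψ : Continuous ψ')
    (φ0 : φ 0 = 0) (φ1 : φ 1 = 1) (ψ0 : ψ 0 = 0) (ψ1 : ψ 1 = 1)
    (hlo : ∀ x ∈ Icc (0:ℝ) 1, 1 / 2 ≤ φ' x) (hhi : ∀ x ∈ Icc (0:ℝ) 1, φ' x ≤ 2)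
    (hψI : ∀ x ∈ Icc (0:ℝ) 1, ψ x ∈ Icc (0:ℝ) 1) (hpos : ∀ x, 0 ≤ ψ' x)
    (hsep : ∀ x ∈ Icc (0:ℝ) 1, ψ' x ≤ η ∨ ψ' (φ x) ≤ η) :
    ∫ θ in (0:ℝ)..1, √(deriv (φ ∘ ψ) θ) * √(deriv (ψ ∘ φ) θ) ≤ 8 * √η := by
  have d1 : deriv (φ ∘ ψ) = fun x => φ' (ψ x) * ψ' x :=
    funext fun x => ((hφ (ψ x)).comp x (hψ x)).deriv
  have h2 : ∀ x, HasDerivAt (ψ ∘ φ) (ψ' (φ x) * φ' x) x := fun x => (hψ (φ x)).comp x (hφ x)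
  have d2 : deriv (ψ ∘ φ) = fun x => ψ' (φ x) * φ' x := funext fun x => (h2 x).deriv
  have cφ0 : Continuous φ := continuous_iff_continuousAt.2 fun x => (hφ x).continuousAt
  have cψ0 : Continuous ψ := continuous_iff_continuousAt.2 fun x => (hψ x).continuousAt
  have cb : Continuous fun x => ψ' (φ x) * φ' x := by fun_prop
  rw [d1, d2]
  have Ia : ∫ x in (0:ℝ)..1, ψ' x = 1 := by
    rw [intervalIntegral.integral_eq_sub_of_hasDerivAt (fun x _ => hψ x)
      (cψ.intervalIntegrable _ _), ψ0, ψ1]; norm_num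
  have Ib : ∫ x in (0:ℝ)..1, ψ' (φ x) * φ' x = 1 := by
    rw [intervalIntegral.integral_eq_sub_of_hasDerivAt (fun x _ => h2 x)
      (cb.intervalIntegrable _ _)]; simp [φ0, φ1, ψ0, ψ1]
  have Ic : ∫ x in (0:ℝ)..1, 2 * √η * (1 + ψ' x + 2 * (ψ' (φ x) * φ' x)) = 8 * √η := by
    rw [intervalIntegral.integral_const_mul, intervalIntegral.integral_add
      (Continuous.intervalIntegrable (by fun_prop) _ _)
      (Continuous.intervalIntegrable (by fun_prop) _ _),
      intervalIntegral.integral_add (Continuous.intervalIntegrable (by fun_prop) _ _)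
      (Continuous.intervalIntegrable (by fun_prop) _ _),
      intervalIntegral.integral_const_mul, Ia, Ib]
    norm_num; ring
  rw [← Ic]
  refine intervalIntegral.integral_mono_on (by norm_num)
    (Continuous.intervalIntegrable (by fun_prop) _ _)
    (Continuous.intervalIntegrable (by fun_prop) _ _) fun x hx => ?_
  change √(φ' (ψ x) * ψ' x) * √(ψ' (φ x) * φ' x) ≤ 2 * √η * (1 + ψ' x + 2 * (ψ' (φ x) * φ' x))
  have ha := hpos x
  have hb := hpos (φ x)
  have p1 := hlo _ hx
  have p2 := hhi _ hx
  have q1 := hlo _ (hψI x hx)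
  have q2 := hhi _ (hψI x hx)
  generalize φ' (ψ x) = q at *
  generalize φ' x = p at *
  have hs := hsep x hx
  generalize ψ' (φ x) = b at *
  generalize ψ' x = a at *
  have hp0 : 0 ≤ p := by linarith
  have hq0 : 0 ≤ q := by linarith
  have hab : a * b ≤ η * (a + b) := by
    rcases hs with h | h
    · nlinarith [mul_nonneg hη ha, mul_le_mul_of_nonneg_right h hb]
    · nlinarith [mul_nonneg hη hb, mul_le_mul_of_nonneg_left h ha]
  have hbp : b ≤ 2 * (b * p) := by nlinarith
  rw [← Real.sqrt_mul (by positivity)]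
  apply Real.sqrt_le_iff.2
  refine ⟨by positivity, ?_⟩
  have e : (2 * √η * (1 + a + 2 * (b * p))) ^ 2 = 4 * η * (1 + a + 2 * (b * p)) ^ 2 := by
    rw [mul_pow, mul_pow, Real.sq_sqrt hη]; norm_num
  rw [e]
  have hqp : q * p ≤ 4 := by nlinarith
  have hsq : a + b ≤ (1 + a + 2 * (b * p)) ^ 2 := by nlinarith
  calc q * a * (b * p) = (q * p) * (a * b) := by ring
    _ ≤ 4 * (a * b) := by gcongr
    _ ≤ 4 * (η * (a + b)) := by gcongr
    _ ≤ 4 * (η * (1 + a + 2 * (b * p)) ^ 2) := by gcongr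
    _ = _ := by ring

/-- The arctangent profile centred at `1/2`: for `n > 0`, an increasing map fixing `0` and `1` whose derivative
concentrates at `1/2` as `n → ∞`. -/
noncomputable def profile (n x : ℝ) : ℝ :=
  1 / 2 + arctan (n * (x - 1 / 2)) / (2 * arctan (n / 2))

lemma one_le_two_arctan {n : ℝ} (hn : 2 ≤ n) : 1 ≤ 2 * arctan (n / 2) := by
  have h : arctan 1 ≤ arctan (n / 2) := arctan_strictMono.monotone (by linarith)
  rw [arctan_one] at h
  linarith [pi_gt_three]

lemma profile_zero {n : ℝ} (hn : 2 ≤ n) : profile n 0 = 0 := by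
  have h := one_le_two_arctan hn
  have h' : arctan (n / 2) ≠ 0 := by intro h0; rw [h0] at h; norm_num at h
  rw [profile, show n * (0 - 1 / 2) = -(n / 2) by ring, arctan_neg]
  field_simp
  ring

lemma profile_one {n : ℝ} (hn : 2 ≤ n) : profile n 1 = 1 := by
  have h := one_le_two_arctan hn
  have h' : arctan (n / 2) ≠ 0 := by intro h0; rw [h0] at h; norm_num at h
  rw [profile, show n * (1 - 1 / 2) = n / 2 by ring]
  field_simp
  ring

lemma profile_monotone {n : ℝ} (hn : 2 ≤ n) : Monotone (profile n) := by
  intro x y hxy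
  have h := one_le_two_arctan hn
  have : arctan (n * (x - 1 / 2)) ≤ arctan (n * (y - 1 / 2)) :=
    arctan_strictMono.monotone (by gcongr)
  unfold profile
  gcongr

lemma hasDerivAt_profile (n x : ℝ) : HasDerivAt (profile n)
    (1 / (1 + (n * (x - 1 / 2)) ^ 2) * n / (2 * arctan (n / 2))) x := by
  have h : HasDerivAt (fun y : ℝ => n * (y - 1 / 2)) n x := by
    exact (((hasDerivAt_id x).sub_const (1 / 2)).const_mul n).congr_deriv (mul_one n)
  exact (h.arctan.div_const _).const_add _

/-- Away from `1/2` the derivative of the profile decays like `1 / n`. -/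
lemma profile_deriv_le {n r x : ℝ} (hn : 2 ≤ n) (hr : 0 < r) (hx : r ≤ |x - 1 / 2|) :
    1 / (1 + (n * (x - 1 / 2)) ^ 2) * n / (2 * arctan (n / 2)) ≤ 1 / (n * r ^ 2) := by
  have h := one_le_two_arctan hn
  have hn0 : 0 < n := by linarith
  have hsq : r ^ 2 ≤ (x - 1 / 2) ^ 2 := by
    rw [← sq_abs (x - 1 / 2)]; gcongr
  calc _ ≤ 1 / (1 + (n * (x - 1 / 2)) ^ 2) * n := div_le_self (by positivity) h
    _ = n / (1 + n ^ 2 * (x - 1 / 2) ^ 2) := by rw [mul_pow]; ring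
    _ ≤ n / (n ^ 2 * r ^ 2) := by
        gcongr
        nlinarith [mul_le_mul_of_nonneg_left hsq (sq_nonneg n)]
    _ = _ := by field_simp

/-- The `Ḣ¹` geodesic distance to a commutator is not controlled by the distance to one of its
factors: there are increasing bijections `φ, ψ` of `[0,1]` with `D(φ∘ψ, ψ∘φ)` arbitrarily close
to `π/2` while `D(id, φ)` is arbitrarily small. -/
theorem stmt18 (ε : ℝ) (hε : 0 < ε) :
    ∃ φ ψ : ℝ → ℝ, ContDiff ℝ ∞ φ ∧ ContDiff ℝ ∞ ψ ∧
      φ 0 = 0 ∧ φ 1 = 1 ∧ ψ 0 = 0 ∧ ψ 1 = 1 ∧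
      (∀ x ∈ Icc (0:ℝ) 1, 0 < deriv φ x) ∧ (∀ x ∈ Icc (0:ℝ) 1, 0 < deriv ψ x) ∧
      π / 2 - ε < H1dist (φ ∘ ψ) (ψ ∘ φ) ∧ H1dist id φ < ε := by
  -- Angles may be taken at most `1`, where `cos` and `sin` are inverted by `arccos` and `arcsin`.
  obtain ⟨e, he0, he1, heε⟩ : ∃ e : ℝ, 0 < e ∧ e ≤ 1 ∧ e ≤ ε :=
    ⟨min ε 1, by positivity, min_le_right _ _, min_le_left _ _⟩
  have hpi := pi_gt_three
  have hcos : cos e < 1 := by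
    rw [← cos_zero]
    exact cos_lt_cos_of_nonneg_of_le_pi le_rfl (by linarith) he0
  obtain ⟨δ, hδ0, hδ2, hδc⟩ : ∃ δ : ℝ, 0 < δ ∧ δ ≤ 1 / 2 ∧ cos e < 1 - δ := by
    have h1 : 0 < (1 - cos e) / 2 := by linarith
    refine ⟨min (1 / 2) ((1 - cos e) / 2), by positivity, min_le_left _ _, ?_⟩
    have := min_le_right (1 / 2) ((1 - cos e) / 2)
    linarith
  have hs : 0 < sin (e / 2) := sin_pos_of_pos_of_lt_pi (by linarith) (by linarith)
  set s := sin (e / 2) with hsdef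
  obtain ⟨n, hn2, hn⟩ : ∃ n : ℝ, 2 ≤ n ∧ 64 / ((δ / 16) ^ 2 * s ^ 2) ≤ n :=
    ⟨max 2 _, le_max_left _ _, le_max_right _ _⟩
  have hn0 : 0 < n := by linarith
  have hK := one_le_two_arctan hn2
  have hK0 : 0 < arctan (n / 2) := by linarith
  set φ : ℝ → ℝ := fun x => x + δ * (x * (1 - x)) with hφdef
  have hφ : ∀ x, HasDerivAt φ (1 + δ * (1 - 2 * x)) x := by
    intro x
    have h := (hasDerivAt_id x).add
      (((hasDerivAt_id x).mul ((hasDerivAt_id x).const_sub 1)).const_mul δ)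
    exact h.congr_deriv (by simp only [id]; ring)
  have hψ := hasDerivAt_profile n
  have hlo : ∀ x ∈ Icc (0:ℝ) 1, 1 - δ ≤ 1 + δ * (1 - 2 * x) := fun x hx => by
    nlinarith [hx.1, hx.2]
  have hhi : ∀ x ∈ Icc (0:ℝ) 1, 1 + δ * (1 - 2 * x) ≤ 2 := fun x hx => by
    nlinarith [hx.1, hx.2]
  have φ0 : φ 0 = 0 := by simp [hφdef]
  have φ1 : φ 1 = 1 := by simp [hφdef]
  refine ⟨φ, profile n, by fun_prop, ?_, φ0, φ1, profile_zero hn2, profile_one hn2, ?_, ?_, ?_, ?_⟩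
  · unfold profile
    exact contDiff_const.add
      ((contDiff_arctan.comp (contDiff_const.mul (contDiff_id.sub contDiff_const))).div_const _)
  · intro x hx
    rw [(hφ x).deriv]
    linarith [hlo x hx]
  · intro x _
    rw [(hψ x).deriv]
    positivity
  · have hJ := overlap_le (η := 1 / (n * (δ / 16) ^ 2)) (by positivity) hφ hψ
      (by fun_prop)
      (by
        have : ∀ x : ℝ, 1 + (n * (x - 1 / 2)) ^ 2 ≠ 0 := fun x => by positivity
        fun_prop (disch := assumption))
      φ0 φ1 (profile_zero hn2) (profile_one hn2)
      (fun x hx => by linarith [hlo x hx]) hhi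
      (fun x hx => ⟨by rw [← profile_zero hn2]; exact profile_monotone hn2 hx.1,
        by rw [← profile_one hn2]; exact profile_monotone hn2 hx.2⟩)
      (fun x => by positivity)
      (fun x _ => by
        -- Near `1/2` the displacement `φ x - x` is about `δ / 4`, so `x` and `φ x` cannot both
        -- lie within `δ / 16` of `1/2`.
        rcases le_or_gt (δ / 16) |x - 1 / 2| with h | h
        · exact Or.inl (profile_deriv_le hn2 (by positivity) h)
        · refine Or.inr (profile_deriv_le hn2 (by positivity) (le_trans ?_ (le_abs_self _)))
          obtain ⟨h1, h2⟩ := abs_lt.1 h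
          have hx : 1 / 8 ≤ x * (1 - x) := by nlinarith
          have := mul_le_mul_of_nonneg_left hx hδ0.le
          simp only [hφdef]
          linarith)
    have hη : 8 * √(1 / (n * (δ / 16) ^ 2)) ≤ s := by
      have h1 : √(1 / (n * (δ / 16) ^ 2)) ≤ s / 8 := by
        apply Real.sqrt_le_iff.2 ⟨by positivity, ?_⟩
        rw [div_le_iff₀ (by positivity)] at hn
        rw [div_le_iff₀ (by positivity)]
        linarith
      linarith
    have h := antitone_arccos (hJ.trans hη)
    have h' : arccos s = π / 2 - e / 2 := by
      rw [arccos, hsdef, arcsin_sin (by linarith) (by linarith)]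
    rw [h'] at h
    unfold H1dist
    linarith
  · have hI : 1 - δ ≤ ∫ θ in (0:ℝ)..1, √(deriv id θ) * √(deriv φ θ) := by
      have hd : deriv φ = fun x => 1 + δ * (1 - 2 * x) := funext fun x => (hφ x).deriv
      have hc : ∫ _ in (0:ℝ)..1, (1 - δ) = 1 - δ := by simp
      rw [hd]
      simp only [deriv_id, Real.sqrt_one, one_mul]
      rw [← hc]
      refine intervalIntegral.integral_mono_on (by norm_num)
        (Continuous.intervalIntegrable (by fun_prop) _ _)
        (Continuous.intervalIntegrable (by fun_prop) _ _) fun x hx => ?_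
      apply Real.le_sqrt_of_sq_le
      nlinarith [hlo x hx]
    have h := antitone_arccos hI
    have h' : arccos (1 - δ) < arccos (cos e) :=
      arccos_lt_arccos (neg_one_le_cos e) hδc (by linarith)
    rw [arccos_cos he0.le (by linarith)] at h'
    unfold H1dist
    linarith
end
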